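/- arXiv:2406.15164 — 10 statements merged into one kernel-verified Lean document; each statement's English description precedes it below -/
import Mathlib

section
/- Let ℓ ≥ 2 be an integer. If G is a K_ℓ-critical graph with chromatic number χ(G) ≤ 2ℓ + 1, then G is a complete graph (i.e., G ≅ K_{χ(G)}). -/
/-!
Write `r = k - ℓ`, so that deleting any `ℓ`-clique leaves an `r`-colourable graph, and let `D(L)` be
the set of common neighbours of an `ℓ`-clique `L`.

* In every `r`-colouring of `G - L` each colour occurs on `D(L)` (`exists_common_neighbour`): if
  colour `i` did not, every vertex of colour `i` could be given the colour of a non-neighbour in `L`,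
  and `G` would be `(k-1)`-colourable.
* Suppose `G` has no `k`-clique and let `T` be a clique. For each `ℓ`-clique `L` some vertex of `D(L)`
  is outside `T`, so the vertices of `L ∩ T` can be exchanged one by one, which yields an `ℓ`-clique
  disjoint from `T` (`exists_clique_avoiding`). Hence `|T| ≤ r`. As `ℓ`-cliques extend to
  `(ℓ+1)`-cliques, this forces `r = ℓ + 1`, there is no `(ℓ+2)`-clique, and the sets `D(L)` are
  independent.
* Fix an `(ℓ+1)`-clique `T`. Sets built from `T` by successively adding vertices that see at least
  `r - 1` colours are uniquely `r`-colourable (`Built.rigid`). Let `U` be a maximal such set whose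
  complement contains an `ℓ`-clique; by maximality `|D(e) \ U| ≤ 1` for each `ℓ`-clique `e ⊆ U`. Let
  `U' ⊆ U` be a maximal such set for which `U \ U'` contains an `ℓ`-clique `e`. An `r`-colouring of
  `G - e` has at least three colours on `D(e)`, of which at most one occurs on `D(e) ∩ U'`, by unique
  colourability of `U'`, and at most one on `D(e) \ U`. So some `d ∈ D(e)` lies in `U \ U'`, and
  `U \ U'` contains the `(ℓ+1)`-clique `e + d`. A vertex of `U` that can be added to `U'` therefore
  leaves an `ℓ`-clique in the rest, contradicting the maximality of `U'`.
* A `k`-clique in a vertex-critical `k`-chromatic graph is the whole graph.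
-/

open SimpleGraph

/-- A graph `G` is `K_ℓ`-critical if it contains `K_ℓ` as a subgraph, deleting any vertex
drops the chromatic number by one, and deleting the vertex set of any copy of `K_ℓ`
drops the chromatic number by `ℓ`. -/
def IsKCritical {V : Type*} (G : SimpleGraph V) (ℓ : ℕ) : Prop :=
  (∃ s : Finset V, G.IsNClique ℓ s) ∧
  (∀ v : V, (G.induce ({v}ᶜ : Set V)).chromaticNumber + 1 = G.chromaticNumber) ∧
  (∀ s : Finset V, G.IsNClique ℓ s →
    (G.induce ((↑s : Set V)ᶜ)).chromaticNumber + (ℓ : ℕ∞) = G.chromaticNumber)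

namespace KCritical

variable {V : Type*}

/-- `c` restricts to a proper colouring of `G[U]` with colours `0, …, r - 1`; its values off `U` are
irrelevant. -/
def ProperOn (G : SimpleGraph V) (r : ℕ) (U : Set V) (c : V → ℕ) : Prop :=
  (∀ v ∈ U, c v < r) ∧ ∀ u ∈ U, ∀ v ∈ U, G.Adj u v → c u ≠ c v

/-- `d` is a common neighbour of the vertices of `L`. -/
def Common (G : SimpleGraph V) (L : Finset V) (d : V) : Prop := ∀ x ∈ L, G.Adj x d

/-- In every proper `r`-colouring of `U`, the neighbours of `z` in `U` miss at most one colour. -/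
def Addable (G : SimpleGraph V) (r : ℕ) (U : Set V) (z : V) : Prop :=
  ∀ c, ProperOn G r U c → ∀ i < r, ∀ j < r, i ≠ j → ∃ w ∈ U, G.Adj z w ∧ (c w = i ∨ c w = j)

/-- The sets obtained from `T` by successively adding addable vertices. -/
inductive Built (G : SimpleGraph V) (r : ℕ) (T : Set V) : Set V → Prop
  | base : Built G r T T
  | step (U : Set V) (z : V) : Built G r T U → Addable G r U z → Built G r T (insert z U)

/-- Any two proper `r`-colourings of `U` induce the same colour classes. -/
def Rigid (G : SimpleGraph V) (r : ℕ) (U : Set V) : Prop :=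
  ∀ c c', ProperOn G r U c → ProperOn G r U c' → ∀ u ∈ U, ∀ v ∈ U, (c u = c v ↔ c' u = c' v)

variable {G : SimpleGraph V} {r ℓ k : ℕ}

lemma ProperOn.mono {U W : Set V} {c : V → ℕ} (h : ProperOn G r W c) (hUW : U ⊆ W) :
    ProperOn G r U c :=
  ⟨fun v hv => h.1 v (hUW hv), fun u hu v hv => h.2 u (hUW hu) v (hUW hv)⟩

lemma Addable.mono {U W : Set V} {z : V} (h : Addable G r U z) (hUW : U ⊆ W) :
    Addable G r W z := by
  intro c hc i hi j hj hij
  obtain ⟨w, hw, h'⟩ := h c (hc.mono hUW) i hi j hj hij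
  exact ⟨w, hUW hw, h'⟩

lemma Built.subset {T U : Set V} (h : Built G r T U) : T ⊆ U := by
  induction h with
  | base => exact subset_rfl
  | step U z _ _ ih => exact ih.trans (Set.subset_insert _ _)

/-- If a built set `U` is not contained in `U' ⊇ T`, then some vertex of `U` outside `U'` is addable
to `U'`: the first one in the construction of `U` will do. -/
lemma Built.exists_addable {T U U' : Set V} (h : Built G r T U) (hT : T ⊆ U')
    (hU : ¬ U ⊆ U') : ∃ z ∈ U, z ∉ U' ∧ Addable G r U' z := by
  induction h with
  | base => exact absurd hT hU
  | step W z _ hz ih =>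
    by_cases hW : W ⊆ U'
    · refine ⟨z, Set.mem_insert _ _, fun hzU => hU (Set.insert_subset hzU hW), hz.mono hW⟩
    · obtain ⟨y, hy, h'⟩ := ih hW
      exact ⟨y, Set.mem_insert_of_mem _ hy, h'⟩

lemma Rigid.insert {U : Set V} {z : V} (h : Rigid G r U) (hz : Addable G r U z) :
    Rigid G r (insert z U) := by
  -- The colour of `z` is that of `u` exactly when no neighbour of `z` in `U` has the colour of `u`.
  have key : ∀ c, ProperOn G r (Insert.insert z U) c → ∀ u ∈ U,
      (c z = c u ↔ ∀ w ∈ U, G.Adj z w → c w ≠ c u) := by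
    intro c hc u hu
    constructor
    · intro e w hw hzw
      rw [← e]
      exact (hc.2 z (Set.mem_insert _ _) w (Set.mem_insert_of_mem _ hw) hzw).symm
    · intro hall
      by_contra hne
      obtain ⟨w, hw, hzw, hor⟩ := hz c (hc.mono (Set.subset_insert _ _)) _
        (hc.1 z (Set.mem_insert _ _)) _ (hc.1 u (Set.mem_insert_of_mem _ hu)) hne
      rcases hor with h1 | h1
      · exact hc.2 z (Set.mem_insert _ _) w (Set.mem_insert_of_mem _ hw) hzw h1.symm
      · exact hall w hw hzw h1
  intro c c' hc hc'
  have hU := h c c' (hc.mono (Set.subset_insert _ _)) (hc'.mono (Set.subset_insert _ _))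
  have hzu : ∀ u ∈ U, (c z = c u ↔ c' z = c' u) := by
    intro u hu
    rw [key c hc u hu, key c' hc' u hu]
    exact forall₃_congr fun w hw _ => not_congr (hU w hw u hu)
  intro u hu v hv
  rcases hu with rfl | hu <;> rcases hv with rfl | hv
  · simp
  · exact hzu v hv
  · rw [eq_comm, hzu u hu, eq_comm]
  · exact hU u hu v hv

lemma Built.rigid {T U : Set V} (hT : G.IsClique T) (h : Built G r T U) : Rigid G r U := by
  induction h with
  | base =>
    intro c c' hc hc' u hu v hv
    by_cases huv : u = v
    · simp [huv]
    · have := hT hu hv huv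
      simp [hc.2 u hu v hv this, hc'.2 u hu v hv this]
  | step U z _ hz ih => exact ih.insert hz

lemma Common.notMem {L : Finset V} {d : V} (h : Common G L d) : d ∉ L :=
  fun hd => G.loopless.irrefl d (h d hd)

lemma card_image_clique [DecidableEq V] {e : Finset V} {U : Set V} {c : V → ℕ}
    (he : G.IsNClique ℓ e) (heU : (e : Set V) ⊆ U) (hc : ProperOn G r U c) :
    (e.image c).card = ℓ := by
  rw [Finset.card_image_of_injOn, he.card_eq]
  intro u hu v hv huv
  by_contra hne
  exact hc.2 u (heU hu) v (heU hv) (he.isClique hu hv hne) huv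

/-- In a proper `(ℓ+1)`-colouring an `ℓ`-clique misses at most one colour. -/
lemma hits_clique {e : Finset V} {U : Set V} {c : V → ℕ} (he : G.IsNClique ℓ e)
    (heU : (e : Set V) ⊆ U) (hc : ProperOn G (ℓ + 1) U c) {i j : ℕ} (hi : i < ℓ + 1)
    (hj : j < ℓ + 1) (hij : i ≠ j) : ∃ w ∈ e, c w = i ∨ c w = j := by
  classical
  by_contra! hcon
  have hsub : e.image c ⊆ ((Finset.range (ℓ + 1)).erase i).erase j := by
    intro a ha
    obtain ⟨w, hw, rfl⟩ := Finset.mem_image.1 ha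
    simp only [Finset.mem_erase, Finset.mem_range]
    exact ⟨(hcon w hw).2, (hcon w hw).1, hc.1 w (heU hw)⟩
  have h1 := Finset.card_le_card hsub
  rw [card_image_clique he heU hc, Finset.card_erase_of_mem, Finset.card_erase_of_mem,
    Finset.card_range] at h1
  · have : 0 < ℓ := by omega
    omega
  · simpa using hi
  · simp only [Finset.mem_erase, Finset.mem_range]
    exact ⟨hij.symm, hj⟩

lemma insert_clique [DecidableEq V] {L : Finset V} {d : V} (hL : G.IsNClique ℓ L)
    (hd : Common G L d) : G.IsNClique (ℓ + 1) (insert d L) :=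
  hL.insert fun x hx => (hd x hx).symm

/-- If three vertices with property `p` have distinct colours, but all vertices with property `p`
outside `U` have the same colour, and so do those inside `W`, then one of the three is in `U \ W`. -/
lemma exists_inside_outside {U W : Set V} {p : V → Prop} (c : V → ℕ) {d₀ d₁ d₂ : V}
    (h₀ : p d₀) (h₁ : p d₁) (h₂ : p d₂) (h01 : c d₀ ≠ c d₁) (h02 : c d₀ ≠ c d₂)
    (h12 : c d₁ ≠ c d₂) (hU : ∀ d d', p d → p d' → d ∉ U → d' ∉ U → c d = c d')
    (hW : ∀ d d', p d → p d' → d ∈ W → d' ∈ W → c d = c d') : ∃ d, p d ∧ d ∈ U ∧ d ∉ W := by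
  by_contra! hcon
  have a01 := fun a b => h01 (hU d₀ d₁ h₀ h₁ a b)
  have a02 := fun a b => h02 (hU d₀ d₂ h₀ h₂ a b)
  have a12 := fun a b => h12 (hU d₁ d₂ h₁ h₂ a b)
  have b01 := fun a b => h01 (hW d₀ d₁ h₀ h₁ a b)
  have b02 := fun a b => h02 (hW d₀ d₂ h₀ h₂ a b)
  have b12 := fun a b => h12 (hW d₁ d₂ h₁ h₂ a b)
  have c0 := hcon d₀ h₀
  have c1 := hcon d₁ h₁
  have c2 := hcon d₂ h₂
  tauto

/-- Exchanging the vertices of an `ℓ`-clique that lie in `T` one at a time for common neighbours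
outside `T` gives an `ℓ`-clique disjoint from `T`. -/
lemma exists_clique_avoiding {U T : Set V}
    (hD : ∀ L : Finset V, G.IsNClique ℓ L → (L : Set V) ⊆ U → ∃ d ∈ U, d ∉ T ∧ Common G L d)
    (hL : ∃ L : Finset V, G.IsNClique ℓ L ∧ (L : Set V) ⊆ U) :
    ∃ L : Finset V, G.IsNClique ℓ L ∧ (L : Set V) ⊆ U \ T := by
  classical
  suffices H : ∀ n, ∀ L : Finset V, G.IsNClique ℓ L → (L : Set V) ⊆ U →
      (L.filter (· ∈ T)).card = n →
      ∃ L : Finset V, G.IsNClique ℓ L ∧ (L : Set V) ⊆ U \ T by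
    obtain ⟨L, h1, h2⟩ := hL
    exact H _ L h1 h2 rfl
  intro n
  induction n with
  | zero =>
    intro L h1 h2 h3
    refine ⟨L, h1, fun x hx => ⟨h2 hx, fun hxT => ?_⟩⟩
    rw [Finset.card_eq_zero, Finset.filter_eq_empty_iff] at h3
    exact h3 hx hxT
  | succ n ih =>
    intro L h1 h2 h3
    obtain ⟨x, hx⟩ : (L.filter (· ∈ T)).Nonempty := by
      rw [← Finset.card_pos]; omega
    obtain ⟨hxL, hxT⟩ := Finset.mem_filter.1 hx
    obtain ⟨d, hdU, hdT, hd⟩ := hD L h1 h2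
    refine ih ((insert d L).erase x) ?_ ?_ ?_
    · simpa using (insert_clique h1 hd).erase_of_mem (Finset.mem_insert_of_mem hxL)
    · intro y hy
      simp only [Finset.coe_erase, Finset.coe_insert, Set.mem_sdiff, Set.mem_insert_iff] at hy
      rcases hy.1 with rfl | h
      · exact hdU
      · exact h2 h
    · rw [Finset.filter_erase, Finset.filter_insert, if_neg hdT, Finset.card_erase_of_mem hx, h3]
      rfl

/-- The combinatorial core: if the complement of every `ℓ`-clique is `r`-colourable, and in each such
colouring every colour occurs on the common neighbourhood of the clique, then `r ≤ ℓ + 1` forces an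
`(ℓ + r)`-clique. -/
lemma exists_large_clique [Finite V] (hℓ : 2 ≤ ℓ) (hr : r ≤ ℓ + 1)
    (hex : ∃ L : Finset V, G.IsNClique ℓ L)
    (hcol : ∀ L : Finset V, G.IsNClique ℓ L → ∃ c, ProperOn G r (L : Set V)ᶜ c)
    (hhit : ∀ L : Finset V, G.IsNClique ℓ L → ∀ c, ProperOn G r (L : Set V)ᶜ c →
      ∀ i < r, ∃ d, Common G L d ∧ c d = i) :
    ∃ S : Finset V, G.IsNClique (ℓ + r) S := by
  classical
  by_contra hno
  -- Common neighbourhoods do not fit inside a clique, as they contain `r` differently coloured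
  -- vertices.
  have havoid : ∀ T : Finset V, G.IsClique T → ∃ L : Finset V, G.IsNClique ℓ L ∧
      (L : Set V) ⊆ Set.univ \ (T : Set V) := by
    intro T hT
    refine exists_clique_avoiding (fun L hL _ => ?_) (hex.imp fun L h => ⟨h, Set.subset_univ _⟩)
    by_contra! hcon
    obtain ⟨x₀, _⟩ : L.Nonempty := by rw [← Finset.card_pos, hL.card_eq]; omega
    have : Nonempty V := ⟨x₀⟩
    obtain ⟨c, hc⟩ := hcol L hL
    choose! f hf hcf using hhit L hL c hc
    have hfT : ∀ i < r, f i ∈ T := fun i hi => by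
      by_contra h
      exact hcon (f i) (Set.mem_univ _) h (hf i hi)
    refine hno ⟨L ∪ (Finset.range r).image f, ?_, ?_⟩
    · intro x hx y hy hxy
      simp only [Finset.coe_union, Finset.coe_image, Finset.coe_range, Set.mem_union,
        Set.mem_image, Set.mem_Iio, Finset.mem_coe] at hx hy
      rcases hx with hx | ⟨i, hi, rfl⟩ <;> rcases hy with hy | ⟨j, hj, rfl⟩
      · exact hL.isClique hx hy hxy
      · exact hf j hj x hx
      · exact (hf i hi y hy).symm
      · exact hT (hfT i hi) (hfT j hj) hxy
    · rw [Finset.card_union_of_disjoint, hL.card_eq, Finset.card_image_of_injOn, Finset.card_range]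
      · intro i hi j hj hij
        rw [← hcf i (by simpa using hi), ← hcf j (by simpa using hj), hij]
      · rw [Finset.disjoint_left]
        intro x hx hx'
        obtain ⟨i, hi, rfl⟩ := Finset.mem_image.1 hx'
        exact (hf i (by simpa using hi)).notMem hx
  have hsmall : ∀ (t : ℕ) (T : Finset V), G.IsNClique t T → t ≤ r := by
    intro t T hT
    obtain ⟨L, hL, hLT⟩ := havoid T hT.isClique
    obtain ⟨c, hc⟩ := hcol L hL
    have hTL : (T : Set V) ⊆ (L : Set V)ᶜ := fun x hx hxL => (hLT hxL).2 hx
    rw [← card_image_clique hT hTL hc, ← Finset.card_range r]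
    refine Finset.card_le_card fun a ha => ?_
    obtain ⟨w, hw, rfl⟩ := Finset.mem_image.1 ha
    exact Finset.mem_range.2 (hc.1 w (hTL hw))
  obtain ⟨L₀, hL₀⟩ := hex
  have hr0 : 0 < r := by
    rcases Nat.eq_zero_or_pos r with h | h
    · subst h; exact absurd ⟨L₀, hL₀⟩ hno
    · exact h
  obtain ⟨T, hT⟩ : ∃ T : Finset V, G.IsNClique (ℓ + 1) T := by
    obtain ⟨c, hc⟩ := hcol L₀ hL₀
    obtain ⟨d, hd, _⟩ := hhit L₀ hL₀ c hc 0 hr0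
    exact ⟨_, insert_clique hL₀ hd⟩
  obtain rfl : r = ℓ + 1 := le_antisymm hr (hsmall _ T hT)
  have hind : ∀ L : Finset V, G.IsNClique ℓ L → ∀ d d', Common G L d → Common G L d' →
      ¬ G.Adj d d' := by
    intro L hL d d' hd hd' hadj
    have h2 : Common G (insert d L) d' := by
      intro x hx
      rcases Finset.mem_insert.1 hx with rfl | hx
      · exact hadj
      · exact hd' x hx
    have := hsmall _ _ (insert_clique (insert_clique hL hd) h2)
    omega
  have hthree : ∀ L : Finset V, G.IsNClique ℓ L → ∀ c, ProperOn G (ℓ + 1) (L : Set V)ᶜ c →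
      ∃ d₀ d₁ d₂, Common G L d₀ ∧ Common G L d₁ ∧ Common G L d₂ ∧
        c d₀ ≠ c d₁ ∧ c d₀ ≠ c d₂ ∧ c d₁ ≠ c d₂ := by
    intro L hL c hc
    obtain ⟨d₀, h₀, e₀⟩ := hhit L hL c hc 0 (by omega)
    obtain ⟨d₁, h₁, e₁⟩ := hhit L hL c hc 1 (by omega)
    obtain ⟨d₂, h₂, e₂⟩ := hhit L hL c hc 2 (by omega)
    exact ⟨d₀, d₁, d₂, h₀, h₁, h₂, by omega, by omega, by omega⟩
  obtain ⟨U, ⟨hUB, L₁, hL₁, hL₁U⟩, hUmax⟩ :=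
    (Set.toFinite {U : Set V | Built G (ℓ + 1) (T : Set V) U ∧
      ∃ L : Finset V, G.IsNClique ℓ L ∧ (L : Set V) ⊆ Uᶜ}).exists_maximal
      ⟨(T : Set V), Built.base, by simpa [Set.compl_eq_univ_sdiff] using havoid T hT.isClique⟩
  -- A vertex of `D(e)` outside `U` is addable, so it meets every `ℓ`-clique outside `U`.
  have hout : ∀ e : Finset V, G.IsNClique ℓ e → (e : Set V) ⊆ U → ∀ d d', Common G e d →
      Common G e d' → d ∉ U → d' ∉ U → d = d' := by
    have hmem : ∀ e : Finset V, G.IsNClique ℓ e → (e : Set V) ⊆ U → ∀ d, Common G e d →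
        d ∉ U → d ∈ L₁ := by
      intro e he heU d hd hdU
      by_contra hdL
      have hadd : Addable G (ℓ + 1) U d := by
        intro c hc i hi j hj hij
        obtain ⟨w, hw, h⟩ := hits_clique he heU hc hi hj hij
        exact ⟨w, heU hw, (hd w hw).symm, h⟩
      refine hdU (hUmax (y := insert d U) ⟨hUB.step _ _ hadd, L₁, hL₁, ?_⟩
        (Set.subset_insert _ _) (Set.mem_insert _ _))
      rintro x hx (rfl | hxU)
      · exact hdL hx
      · exact hL₁U hx hxU
    intro e he heU d d' hd hd' hdU hdU'
    by_contra hne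
    exact hind e he d d' hd hd'
      (hL₁.isClique (hmem e he heU d hd hdU) (hmem e he heU d' hd' hdU') hne)
  have hTU : (T : Set V) ⊆ U := hUB.subset
  have hinside : ∃ L : Finset V, G.IsNClique ℓ L ∧ (L : Set V) ⊆ U \ (T : Set V) := by
    refine exists_clique_avoiding (fun L hL hLU => ?_) ?_
    · obtain ⟨c, hc⟩ := hcol L hL
      obtain ⟨d₀, d₁, d₂, h₀, h₁, h₂, h01, h02, h12⟩ := hthree L hL c hc
      have hTin : ∀ d d', Common G L d → Common G L d' → d ∈ (T : Set V) → d' ∈ (T : Set V) →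
          d = d' := by
        intro d d' hd hd' hdT hdT'
        by_contra hne
        exact hind L hL d d' hd hd' (hT.isClique hdT hdT' hne)
      have o := hout L hL hLU
      obtain ⟨d, hd, h⟩ := exists_inside_outside (W := (T : Set V)) c h₀ h₁ h₂ h01 h02 h12
        (fun d d' hd hd' hU hU' => congrArg c (o d d' hd hd' hU hU'))
        (fun d d' hd hd' hU hU' => congrArg c (hTin d d' hd hd' hU hU'))
      exact ⟨d, h.1, h.2, hd⟩
    · obtain ⟨x, hx⟩ : T.Nonempty := by rw [← Finset.card_pos, hT.card_eq]; omega
      exact ⟨T.erase x, by simpa using hT.erase_of_mem hx,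
        fun y hy => hTU (Finset.mem_of_mem_erase hy)⟩
  obtain ⟨U', ⟨hB', hU'U, e, he, heU'⟩, hmax'⟩ :=
    (Set.toFinite {W : Set V | Built G (ℓ + 1) (T : Set V) W ∧ W ⊆ U ∧
      ∃ L : Finset V, G.IsNClique ℓ L ∧ (L : Set V) ⊆ U \ W}).exists_maximal
      ⟨(T : Set V), Built.base, hTU, hinside⟩
  have heU : (e : Set V) ⊆ U := fun x hx => (heU' hx).1
  obtain ⟨κ, hκ⟩ := hcol L₁ hL₁
  obtain ⟨ψ, hψ⟩ := hcol e he
  have hκU : ProperOn G (ℓ + 1) U κ := hκ.mono fun x hx hxL => hL₁U hxL hx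
  -- On `U` the colouring `κ` leaves a single colour for `D(e)`; rigidity of `U'` transfers this to
  -- `ψ`.
  have hin : ∀ d d', Common G e d → Common G e d' → d ∈ U' → d' ∈ U' → ψ d = ψ d' := by
    intro d d' hd hd' hdU hdU'
    refine (hB'.rigid hT.isClique κ ψ (hκU.mono hU'U)
      (hψ.mono fun x hx hxe => (heU' hxe).2 hx) d hdU d' hdU').1 ?_
    by_contra hne
    obtain ⟨w, hw, h | h⟩ := hits_clique he heU hκU (hκU.1 d (hU'U hdU))
      (hκU.1 d' (hU'U hdU')) hne
    · exact hκU.2 w (heU hw) d (hU'U hdU) (hd w hw) h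
    · exact hκU.2 w (heU hw) d' (hU'U hdU') (hd' w hw) h
  obtain ⟨d, hd, hdU, hdU'⟩ : ∃ d, Common G e d ∧ d ∈ U ∧ d ∉ U' := by
    obtain ⟨d₀, d₁, d₂, h₀, h₁, h₂, h01, h02, h12⟩ := hthree e he ψ hψ
    have o := hout e he heU
    exact exists_inside_outside ψ h₀ h₁ h₂ h01 h02 h12
      (fun d d' hd hd' hU hU' => congrArg ψ (o d d' hd hd' hU hU')) hin
  obtain ⟨z, hzU, hzU', hz⟩ := hUB.exists_addable hB'.subset fun h => hdU' (h hdU)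
  have hsub : ((insert d e : Finset V) : Set V) ⊆ U \ U' := by
    rw [Finset.coe_insert]
    exact Set.insert_subset ⟨hdU, hdU'⟩ heU'
  have hrest : ∃ L : Finset V, G.IsNClique ℓ L ∧ (L : Set V) ⊆ U \ insert z U' := by
    by_cases hze : z ∈ e
    · refine ⟨(insert d e).erase z, ?_, ?_⟩
      · simpa using (insert_clique he hd).erase_of_mem (Finset.mem_insert_of_mem hze)
      · intro x hx
        obtain ⟨hxz, hx⟩ := Finset.mem_erase.1 hx
        exact ⟨(hsub hx).1, fun h => h.elim hxz (hsub hx).2⟩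
    · exact ⟨e, he, fun x hx => ⟨heU hx, fun h => h.elim (fun h => hze (h ▸ hx)) (heU' hx).2⟩⟩
  exact hzU' (hmax' (y := insert z U') ⟨hB'.step _ _ hz, Set.insert_subset hzU hU'U, hrest⟩
    (Set.subset_insert _ _) (Set.mem_insert _ _))

/-- If colour `i` avoided `D(L)`, each vertex of colour `i` could share the colour of a
non-neighbour in `L`, giving a colouring of `G` with `ℓ + r - 1` colours. -/
lemma exists_common_neighbour {L : Finset V} (hL : G.IsNClique ℓ L)
    (hG : ¬ G.Colorable (ℓ + r - 1)) {c : V → ℕ} (hc : ProperOn G r (L : Set V)ᶜ c)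
    {i : ℕ} (hi : i < r) : ∃ d, Common G L d ∧ c d = i := by
  classical
  by_contra! hcon
  have hf : ∀ d, ∃ x, c d = i → x ∈ L ∧ ¬ G.Adj x d := by
    intro d
    by_cases hd : c d = i
    · have : ¬ Common G L d := fun h => hcon d h hd
      unfold Common at this
      push Not at this
      obtain ⟨x, hx⟩ := this
      exact ⟨x, fun _ => hx⟩
    · exact ⟨d, fun h => absurd h hd⟩
  choose f hf using hf
  -- The palette: the vertices of `L` themselves and the colours other than `i`.
  let P := {x // x ∈ L} ⊕ {j // j ∈ (Finset.range r).erase i}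
  let col : V → P := fun v =>
    if hv : v ∈ L then Sum.inl ⟨v, hv⟩
    else if hi' : c v = i then Sum.inl ⟨f v, (hf v hi').1⟩
    else Sum.inr ⟨c v, Finset.mem_erase.2 ⟨hi', Finset.mem_range.2 (hc.1 v hv)⟩⟩
  have e₁ : ∀ v (hv : v ∈ L), col v = Sum.inl ⟨v, hv⟩ := fun v hv => dif_pos hv
  have e₂ : ∀ v, v ∉ L → ∀ hv' : c v = i, col v = Sum.inl ⟨f v, (hf v hv').1⟩ :=
    fun v hv hv' => (dif_neg hv).trans (dif_pos hv')
  have e₃ : ∀ v (hv : v ∉ L) (hv' : c v ≠ i), col v =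
      Sum.inr ⟨c v, Finset.mem_erase.2 ⟨hv', Finset.mem_range.2 (hc.1 v hv)⟩⟩ :=
    fun v hv hv' => (dif_neg hv).trans (dif_neg hv')
  have C : G.Coloring P := Coloring.mk col (by
    intro u v huv heq
    by_cases hu : u ∈ L
    · rw [e₁ u hu] at heq
      by_cases hv : v ∈ L
      · rw [e₁ v hv] at heq
        exact huv.ne (congrArg Subtype.val (Sum.inl.inj heq))
      · by_cases hv' : c v = i
        · rw [e₂ v hv hv'] at heq
          have h : u = f v := congrArg Subtype.val (Sum.inl.inj heq)
          exact (hf v hv').2 (h ▸ huv)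
        · rw [e₃ v hv hv'] at heq
          exact Sum.inl_ne_inr heq
    · by_cases hu' : c u = i
      · rw [e₂ u hu hu'] at heq
        by_cases hv : v ∈ L
        · rw [e₁ v hv] at heq
          have h : f u = v := congrArg Subtype.val (Sum.inl.inj heq)
          exact (hf u hu').2 (h.symm ▸ huv.symm)
        · by_cases hv' : c v = i
          · exact hc.2 u hu v hv huv (hu'.trans hv'.symm)
          · rw [e₃ v hv hv'] at heq
            exact Sum.inl_ne_inr heq
      · rw [e₃ u hu hu'] at heq
        by_cases hv : v ∈ L
        · rw [e₁ v hv] at heq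
          exact Sum.inr_ne_inl heq
        · by_cases hv' : c v = i
          · rw [e₂ v hv hv'] at heq
            exact Sum.inr_ne_inl heq
          · rw [e₃ v hv hv'] at heq
            exact hc.2 u hu v hv huv (congrArg Subtype.val (Sum.inr.inj heq)))
  have hcard := C.colorable
  apply hG
  convert hcard using 1
  simp only [P, Fintype.card_sum, Fintype.card_coe, hL.card_eq]
  rw [Finset.card_erase_of_mem (Finset.mem_range.2 hi), Finset.card_range]
  omega

end KCritical

open KCritical in
theorem stmt0 {V : Type*} [Fintype V] (ℓ k : ℕ) (hℓ : 2 ≤ ℓ)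
    (G : SimpleGraph V) (hG : IsKCritical G ℓ)
    (hk : G.chromaticNumber = (k : ℕ∞)) (hχ : k ≤ 2 * ℓ + 1) :
    Nonempty (G ≃g completeGraph (Fin k)) := by
  classical
  obtain ⟨hex, hvert, hcl⟩ := hG
  have hrk : ∀ L : Finset V, G.IsNClique ℓ L → ℓ ≤ k ∧
      (G.induce ((L : Set V)ᶜ)).chromaticNumber = ((k - ℓ : ℕ) : ℕ∞) := by
    intro L hL
    have h := hcl L hL
    rw [hk] at h
    generalize (G.induce ((L : Set V)ᶜ)).chromaticNumber = a at h
    cases a with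
    | top => simp at h
    | coe a =>
      norm_cast at h ⊢
      omega
  have hℓk : ℓ ≤ k := by
    obtain ⟨L, hL⟩ := hex
    exact (hrk L hL).1
  obtain ⟨S, hS⟩ : ∃ S : Finset V, G.IsNClique (ℓ + (k - ℓ)) S := by
    refine exists_large_clique hℓ (by omega) hex ?_ ?_
    · intro L hL
      have hcol : (G.induce ((L : Set V)ᶜ)).Colorable (k - ℓ) :=
        chromaticNumber_le_iff_colorable.1 (hrk L hL).2.le
      obtain ⟨C⟩ := hcol
      refine ⟨fun v => if hv : v ∈ (L : Set V)ᶜ then (C ⟨v, hv⟩ : ℕ) else 0, ?_, ?_⟩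
      · intro v hv
        beta_reduce
        rw [dif_pos hv]
        exact (C ⟨v, hv⟩).2
      · intro u hu v hv huv
        beta_reduce
        rw [dif_pos hu, dif_pos hv]
        intro h
        exact C.valid (v := ⟨u, hu⟩) (w := ⟨v, hv⟩) huv (Fin.ext h)
    · intro L hL c hc i hi
      refine exists_common_neighbour hL (fun h => ?_) hc hi
      have := chromaticNumber_le_iff_colorable.2 h
      rw [hk] at this
      norm_cast at this
      omega
  rw [Nat.add_sub_cancel' hℓk] at hS
  -- A vertex outside the `k`-clique could be deleted without lowering the chromatic number.
  have hall : ∀ v, v ∈ S := by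
    intro v
    by_contra hv
    have h := hvert v
    rw [hk] at h
    have hlt : (k : ℕ∞) ≤ (G.induce ({v}ᶜ : Set V)).chromaticNumber := by
      refine le_chromaticNumber_iff_colorable.2 fun m hm => ?_
      obtain ⟨C⟩ := hm
      let g : S → Fin m := fun x => C ⟨x.1, fun h => hv (by
        have : x.1 = v := h
        exact this ▸ x.2)⟩
      have hg : Function.Injective g := by
        intro x y hxy
        by_contra hne
        refine C.valid ?_ hxy
        exact (hS.isClique x.2 y.2 fun h => hne (Subtype.ext h))
      simpa [hS.card_eq] using Fintype.card_le_of_injective g hg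
    generalize (G.induce ({v}ᶜ : Set V)).chromaticNumber = a at h hlt
    cases a with
    | top => simp at h
    | coe a =>
      norm_cast at h hlt
      omega
  have hcard : Fintype.card V = k := by
    rw [← hS.card_eq, ← Finset.card_univ]
    congr 1
    exact (Finset.eq_univ_iff_forall.2 hall).symm
  refine ⟨⟨Fintype.equivFinOfCardEq hcard, ?_⟩⟩
  intro a b
  simp only [completeGraph, top_adj, ne_eq, EmbeddingLike.apply_eq_iff_eq]
  exact ⟨fun h => hS.isClique (hall a) (hall b) h, fun h => h.ne⟩
end

section
/- Let ℓ ≥ 2 be an integer. If G is a K_ℓ-critical claw-free graph with chromatic number χ(G) ≤ 5ℓ − 4, then G is a complete graph (i.e., G ≅ K_{χ(G)}). -/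
/-!
Write `k` for the chromatic number and suppose that `G` is not complete. In a vertex-critical graph
a clique on `k` vertices is the whole graph, so every clique of `G` has fewer than `k` vertices.

The basic tool is `coloring_of_critical`. Let `L` be a copy of `K_ℓ` and colour `G - L` with
`k - ℓ` colours. Every colour class contains a vertex complete to `L`; otherwise each vertex of the
class could take over the colour of one of its non-neighbours in `L`, and `G` would be
`(k - 1)`-colourable. Hence `L` has at least `k - ℓ` common neighbours (`le_card_commonNbr`), they
do not form a clique (`exists_nonadj`), and each `z ∉ L` has a non-neighbour, namely one in its own
colour class, among them (`exists_partner`). With claw-freeness and connectedness, an exchange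
argument shows that every clique on at most `ℓ` vertices lies in a copy of `K_ℓ` (`extend`). It
follows that the non-neighbours of `z` inside `N(x)`, for an edge `xz`, number `0` or at least `ℓ`
(`le_card_nonNbrIn`).

Degrees are bounded from both sides. For `x ∈ L` the set `N(x)` contains `L - x`, the common
neighbours of `L`, and the set `partNbr G x L` of neighbours of `x` missing some vertex of `L`.
If `L` is chosen through `x` with `partNbr G x L` as large as possible, every `i ∈ L - x` is the
only vertex of `L` missed by at least two vertices (`two_le_card_priv`); this gives
`d(x) ≥ k + 3ℓ - 5` (`le_degree`). Conversely a vertex of a claw-free graph has at most two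
neighbours in a colour class, so `d(x) ≤ ℓ - 1 + 2(k - ℓ)`, and `d(v) ≤ 2(k - ℓ - 1)` if `v` is
anticomplete to a copy of `K_ℓ`. As `k ≤ 5ℓ - 4`, the lower bound excludes the last case: no
non-neighbourhood contains a `K_ℓ` (`card_lt_of_anticomplete`).

There is no independent triple `u, v, w` (`no_triple`): a clique `K` through `u` would be covered by
`K \ N(v)` and `K \ N(w)`, so have at most `2ℓ - 3` vertices, and this leaves room to choose a copy
of `K_ℓ` through `u` for which `partNbr` is so large that the upper bound on `d(u)` fails. Hence
the non-neighbours of any vertex form a clique. For a vertex having a non-neighbour this clique has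
at least `ℓ` vertices (`le_card_nonNbr`), contrary to `card_lt_of_anticomplete`.
-/

open SimpleGraph

/-- A graph is claw-free if it has no induced subgraph isomorphic to `K_{1,3}`. -/
def ClawFree {V : Type*} (G : SimpleGraph V) : Prop :=
  ¬ ∃ a b c d : V, b ≠ c ∧ b ≠ d ∧ c ≠ d ∧
    G.Adj a b ∧ G.Adj a c ∧ G.Adj a d ∧ ¬ G.Adj b c ∧ ¬ G.Adj b d ∧ ¬ G.Adj c d

namespace KCritical

variable {V : Type*} [Fintype V]

/-! ### Neighbourhoods -/

open Classical in
/-- The neighbourhood of `x`. -/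
noncomputable def nbr (G : SimpleGraph V) (x : V) : Finset V :=
  Finset.univ.filter fun y => G.Adj x y

open Classical in
/-- The vertices complete to `L`. -/
noncomputable def commonNbr (G : SimpleGraph V) (L : Finset V) : Finset V :=
  Finset.univ.filter fun w => ∀ v ∈ L, G.Adj v w

open Classical in
/-- The neighbours of `x` that miss some vertex of `L`. For a clique `L` these lie outside `L`. -/
noncomputable def partNbr (G : SimpleGraph V) (x : V) (L : Finset V) : Finset V :=
  Finset.univ.filter fun z => G.Adj x z ∧ ∃ i ∈ L, i ≠ z ∧ ¬ G.Adj i z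

open Classical in
/-- The non-neighbours of `z`, other than `z`, inside the neighbourhood of `x`. -/
noncomputable def nonNbrIn (G : SimpleGraph V) (x z : V) : Finset V :=
  Finset.univ.filter fun y => G.Adj x y ∧ z ≠ y ∧ ¬ G.Adj z y

open Classical in
/-- The private vertices of `i` with respect to `L`: those distinct from `i` and not adjacent to
it, but adjacent to all other vertices of `L`. -/
noncomputable def priv (G : SimpleGraph V) (L : Finset V) (i : V) : Finset V :=
  Finset.univ.filter fun z => i ≠ z ∧ ¬ G.Adj i z ∧ ∀ j ∈ L, j ≠ i → G.Adj j z

open Classical in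
/-- The vertices distinct from `z` and not adjacent to it. -/
noncomputable def nonNbr (G : SimpleGraph V) (z : V) : Finset V :=
  Finset.univ.filter fun y => z ≠ y ∧ ¬ G.Adj z y

section mem
variable {G : SimpleGraph V} {L : Finset V} {x y z i : V}

@[simp] lemma mem_nbr : y ∈ nbr G x ↔ G.Adj x y := by simp [nbr]
@[simp] lemma mem_commonNbr : y ∈ commonNbr G L ↔ ∀ v ∈ L, G.Adj v y := by simp [commonNbr]
@[simp] lemma mem_partNbr :
    z ∈ partNbr G x L ↔ G.Adj x z ∧ ∃ i ∈ L, i ≠ z ∧ ¬ G.Adj i z := by simp [partNbr]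
@[simp] lemma mem_nonNbrIn :
    y ∈ nonNbrIn G x z ↔ G.Adj x y ∧ z ≠ y ∧ ¬ G.Adj z y := by simp [nonNbrIn]
@[simp] lemma mem_priv :
    z ∈ priv G L i ↔ i ≠ z ∧ ¬ G.Adj i z ∧ ∀ j ∈ L, j ≠ i → G.Adj j z := by simp [priv]
@[simp] lemma mem_nonNbr : y ∈ nonNbr G z ↔ z ≠ y ∧ ¬ G.Adj z y := by simp [nonNbr]

end mem

/-- The facts about a non-complete, claw-free, `K_ℓ`-critical graph with chromatic number `k` from
which the contradiction is derived. The field `coloring` gives, for each copy `L` of `K_ℓ`, a proper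
`(k - ℓ)`-colouring of `G - L` (values on `L` are irrelevant) in which every class meets the common
neighbourhood of `L`. -/
structure Setting (G : SimpleGraph V) (ℓ k : ℕ) : Prop where
  two_le : 2 ≤ ℓ
  claw : ClawFree G
  exists_clique : ∃ L : Finset V, G.IsNClique ℓ L
  preconn : G.Preconnected
  coloring : ∀ L : Finset V, G.IsNClique ℓ L → ∃ c : V → ℕ,
    (∀ v ∉ L, c v < k - ℓ) ∧ (∀ a ∉ L, ∀ b ∉ L, G.Adj a b → c a ≠ c b) ∧
    ∀ i < k - ℓ, ∃ w ∈ commonNbr G L, c w = i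
  clique_lt : ∀ K : Finset V, G.IsClique (K : Set V) → K.card < k

/-! ### Consequences of criticality -/

section setup

/-- In a neighbourhood, two vertices that both miss a third one are adjacent. -/
lemma claw_adj {V : Type*} {G : SimpleGraph V} (h : ClawFree G) {a b c d : V} (hab : G.Adj a b)
    (hac : G.Adj a c) (had : G.Adj a d) (hbc : b ≠ c) (hbc' : ¬ G.Adj b c)
    (hbd : b ≠ d) (hbd' : ¬ G.Adj b d) (hcd : c ≠ d) : G.Adj c d := by
  by_contra hn
  exact h ⟨a, b, c, d, hbc, hbd, hcd, hab, hac, had, hbc', hbd', hn⟩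

/-- A `(k - ℓ)`-colouring of `G - L` has in each class a vertex complete to `L`: the vertices of a
class without one could be recoloured with colours of non-neighbours in `L`, saving a colour of `G`. -/
lemma coloring_of_critical {G : SimpleGraph V} {ℓ k : ℕ} (hG : IsKCritical G ℓ)
    (hk : G.chromaticNumber = (k : ℕ∞)) (L : Finset V) (hL : G.IsNClique ℓ L) :
    ∃ c : V → ℕ,
      (∀ v ∉ L, c v < k - ℓ) ∧ (∀ a ∉ L, ∀ b ∉ L, G.Adj a b → c a ≠ c b) ∧
      ∀ i < k - ℓ, ∃ w ∈ commonNbr G L, c w = i := by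
  classical
  have h1 := hG.2.2 L hL
  have hcol : (G.induce ((↑L : Set V)ᶜ)).Colorable (k - ℓ) := by
    rw [← chromaticNumber_le_iff_colorable]
    rw [hk] at h1
    generalize (G.induce ((↑L : Set V)ᶜ)).chromaticNumber = t at h1 ⊢
    cases t with
    | top => simp at h1
    | coe t =>
      norm_cast at h1 ⊢
      omega
  obtain ⟨C⟩ := hcol
  refine ⟨fun v => if hv : v ∈ (↑L : Set V)ᶜ then (C ⟨v, hv⟩ : ℕ) else 0, ?_, ?_, ?_⟩
  · intro v hv
    have hv' : v ∈ (↑L : Set V)ᶜ := by simpa using hv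
    simp only [hv', dif_pos]
    exact (C ⟨v, hv'⟩).2
  · intro a ha b hb hab
    have ha' : a ∈ (↑L : Set V)ᶜ := by simpa using ha
    have hb' : b ∈ (↑L : Set V)ᶜ := by simpa using hb
    simp only [ha', hb', dif_pos]
    intro h
    exact C.valid (v := ⟨a, ha'⟩) (w := ⟨b, hb'⟩) (by simpa using hab) (Fin.ext h)
  · intro i hi
    by_contra hno
    have key : ∀ v : V, ∀ hv : v ∈ (↑L : Set V)ᶜ, (C ⟨v, hv⟩ : ℕ) = i →
        ∃ u ∈ L, ¬ G.Adj u v := by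
      intro v hv hc
      by_contra hcon
      push Not at hcon
      exact hno ⟨v, by simpa using hcon, by simp only [hv, dif_pos]; exact hc⟩
    choose f hfL hfA using key
    -- colours: the vertices of `L`, and the classes different from `i`
    let D : V → L ⊕ {j : Fin (k - ℓ) // (j : ℕ) ≠ i} := fun v =>
      if hv : v ∈ (↑L : Set V)ᶜ then
        if hc : (C ⟨v, hv⟩ : ℕ) = i then Sum.inl ⟨f v hv hc, hfL v hv hc⟩
        else Sum.inr ⟨C ⟨v, hv⟩, hc⟩
      else Sum.inl ⟨v, by simpa using hv⟩
    have hD : ∀ {a b : V}, G.Adj a b → D a ≠ D b := by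
      intro a b hab h
      by_cases ha : a ∈ (↑L : Set V)ᶜ <;> by_cases hb : b ∈ (↑L : Set V)ᶜ
      · have hne : C ⟨a, ha⟩ ≠ C ⟨b, hb⟩ :=
          C.valid (v := ⟨a, ha⟩) (w := ⟨b, hb⟩) (by simpa using hab)
        by_cases hca : (C ⟨a, ha⟩ : ℕ) = i <;> by_cases hcb : (C ⟨b, hb⟩ : ℕ) = i
        · exact hne (Fin.ext (hca.trans hcb.symm))
        · simp only [D, ha, hb, hca, hcb, dif_pos, dif_neg, not_false_eq_true] at h
          cases h
        · simp only [D, ha, hb, hca, hcb, dif_pos, dif_neg, not_false_eq_true] at h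
          cases h
        · simp only [D, ha, hb, hca, hcb, dif_pos, dif_neg, not_false_eq_true] at h
          exact hne (by simpa using h)
      · by_cases hca : (C ⟨a, ha⟩ : ℕ) = i
        · simp only [D, ha, hb, hca, dif_pos, dif_neg, not_false_eq_true] at h
          have : f a ha hca = b := by simpa using h
          exact hfA a ha hca (this ▸ hab.symm)
        · simp only [D, ha, hb, hca, dif_pos, dif_neg, not_false_eq_true] at h
          cases h
      · by_cases hcb : (C ⟨b, hb⟩ : ℕ) = i
        · simp only [D, ha, hb, hcb, dif_pos, dif_neg, not_false_eq_true] at h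
          have : a = f b hb hcb := by simpa using h
          exact hfA b hb hcb (this ▸ hab)
        · simp only [D, ha, hb, hcb, dif_pos, dif_neg, not_false_eq_true] at h
          cases h
      · simp only [D, ha, hb, dif_neg, not_false_eq_true] at h
        have : a = b := by simpa using h
        exact G.loopless.irrefl _ (this ▸ hab)
    have hcolG := (Coloring.mk D hD).colorable
    have hcard : Fintype.card (L ⊕ {j : Fin (k - ℓ) // (j : ℕ) ≠ i}) = ℓ + (k - ℓ - 1) := by
      rw [Fintype.card_sum, Fintype.card_coe, hL.card_eq]
      congr 1
      have : Fintype.card {j : Fin (k - ℓ) // j ≠ (⟨i, hi⟩ : Fin (k - ℓ))} = k - ℓ - 1 := by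
        rw [Fintype.card_subtype_compl]; simp
      rw [← this]
      apply Fintype.card_congr
      exact Equiv.subtypeEquivRight (fun j => by simp [Fin.ext_iff])
    rw [hcard] at hcolG
    have := chromaticNumber_le_iff_colorable.2 hcolG
    rw [hk] at this
    norm_cast at this
    omega

lemma colorable_compl {V : Type*} {G : SimpleGraph V} {ℓ k : ℕ} (hG : IsKCritical G ℓ)
    (hk : G.chromaticNumber = (k : ℕ∞)) (v : V) :
    1 ≤ k ∧ (G.induce ({v}ᶜ : Set V)).Colorable (k - 1) := by
  have h1 := hG.2.1 v
  rw [← chromaticNumber_le_iff_colorable]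
  rw [hk] at h1
  generalize (G.induce ({v}ᶜ : Set V)).chromaticNumber = t at h1 ⊢
  cases t with
  | top => simp at h1
  | coe t =>
    norm_cast at h1 ⊢
    omega

lemma preconnected_of_critical {G : SimpleGraph V} {ℓ k : ℕ} (hG : IsKCritical G ℓ)
    (hk : G.chromaticNumber = (k : ℕ∞)) : G.Preconnected := by
  classical
  intro x y
  by_contra hxy
  obtain ⟨hk1, ⟨Cx⟩⟩ := colorable_compl hG hk x
  obtain ⟨-, ⟨Cy⟩⟩ := colorable_compl hG hk y
  -- colour the component of `x` as in `G - y`, everything else as in `G - x`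
  have hy : ∀ v, G.Reachable x v → v ∈ ({y}ᶜ : Set V) := by
    rintro v hv rfl
    exact hxy hv
  have hx : ∀ v, ¬ G.Reachable x v → v ∈ ({x}ᶜ : Set V) := by
    rintro v hv rfl
    exact hv (Reachable.refl _)
  let D : V → Fin (k - 1) := fun v =>
    if hv : G.Reachable x v then Cy ⟨v, hy v hv⟩ else Cx ⟨v, hx v hv⟩
  have hD : ∀ {a b : V}, G.Adj a b → D a ≠ D b := by
    intro a b hab
    by_cases ha : G.Reachable x a
    · have hb : G.Reachable x b := ha.trans hab.reachable
      simp only [D, ha, hb, dif_pos]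
      exact Cy.valid (by simpa using hab)
    · have hb : ¬ G.Reachable x b := fun hb => ha (hb.trans hab.symm.reachable)
      simp only [D, ha, hb, dif_neg, not_false_eq_true]
      exact Cx.valid (by simpa using hab)
  have hcolG : G.Colorable (k - 1) := ⟨Coloring.mk D hD⟩
  have := chromaticNumber_le_iff_colorable.2 hcolG
  rw [hk] at this
  norm_cast at this
  omega

/-- A clique on at least `k` vertices is everything, as `G - v` is `(k - 1)`-colourable for all `v`. -/
lemma iso_of_clique {G : SimpleGraph V} {ℓ k : ℕ} (hG : IsKCritical G ℓ)
    (hk : G.chromaticNumber = (k : ℕ∞)) (K : Finset V) (hK : G.IsClique (K : Set V))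
    (hcard : k ≤ K.card) : Nonempty (G ≃g completeGraph (Fin k)) := by
  classical
  have huniv : ∀ v, v ∈ K := by
    intro v
    by_contra hv
    obtain ⟨hk1, C⟩ := colorable_compl hG hk v
    have hcl : (G.induce ({v}ᶜ : Set V)).IsClique
        ((K.subtype (· ∈ ({v}ᶜ : Set V)) : Finset _) : Set _) := by
      intro a ha b hb hab
      simp only [Finset.mem_coe, Finset.mem_subtype] at ha hb
      exact hK ha hb (fun h => hab (Subtype.ext h))
    have h2 := hcl.card_le_of_colorable C
    rw [Finset.card_subtype, Finset.filter_true_of_mem] at h2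
    · omega
    · rintro u hu rfl
      exact hv hu
  have hadj : ∀ a b : V, G.Adj a b ↔ a ≠ b :=
    fun a b => ⟨fun h => h.ne, fun h => hK (huniv a) (huniv b) h⟩
  have hKu : K = Finset.univ := by ext v; simp [huniv v]
  have hle : Fintype.card V ≤ k := by
    have h3 : G.Colorable k := by
      rw [← chromaticNumber_le_iff_colorable, hk]
    have := hK.card_le_of_colorable h3
    rwa [hKu, Finset.card_univ] at this
  have hVk : Fintype.card V = k := by
    rw [hKu, Finset.card_univ] at hcard
    omega
  refine ⟨⟨Fintype.equivFinOfCardEq hVk, ?_⟩⟩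
  intro a b
  simp [hadj]

lemma setting_of_critical {G : SimpleGraph V} {ℓ k : ℕ} (hℓ : 2 ≤ ℓ) (hG : IsKCritical G ℓ)
    (hcf : ClawFree G) (hk : G.chromaticNumber = (k : ℕ∞))
    (hno : ¬ Nonempty (G ≃g completeGraph (Fin k))) : Setting G ℓ k where
  two_le := hℓ
  claw := hcf
  exists_clique := hG.1
  preconn := preconnected_of_critical hG hk
  coloring := coloring_of_critical hG hk
  clique_lt K hK := by
    by_contra h
    exact hno (iso_of_clique hG hk K hK (by omega))

end setup

namespace Setting

variable {G : SimpleGraph V} {ℓ k : ℕ}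

/-! ### Common neighbours of a copy of the complete graph -/

lemma lt (S : Setting G ℓ k) : ℓ < k := by
  obtain ⟨L, hL⟩ := S.exists_clique
  have := S.clique_lt L hL.isClique
  rwa [hL.card_eq] at this

lemma notMem_of_commonNbr {L : Finset V} {w : V} (hw : w ∈ commonNbr G L) : w ∉ L :=
  fun h => G.loopless.irrefl w (mem_commonNbr.1 hw w h)

lemma le_card_commonNbr (S : Setting G ℓ k) {L : Finset V} (hL : G.IsNClique ℓ L) :
    k - ℓ ≤ (commonNbr G L).card := by
  classical
  obtain ⟨c, -, -, h⟩ := S.coloring L hL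
  have hsub : Finset.range (k - ℓ) ⊆ (commonNbr G L).image c := by
    intro i hi
    obtain ⟨w, hw, hc⟩ := h i (Finset.mem_range.1 hi)
    exact Finset.mem_image.2 ⟨w, hw, hc⟩
  have := (Finset.card_le_card hsub).trans Finset.card_image_le
  simpa using this

/-- The partner `w` is a vertex complete to `L` in the colour class of `z`; it may equal `z`. -/
lemma exists_partner (S : Setting G ℓ k) {L : Finset V} (hL : G.IsNClique ℓ L) {z : V}
    (hz : z ∉ L) : ∃ w ∈ commonNbr G L, ¬ G.Adj w z := by
  obtain ⟨c, hlt, hval, h⟩ := S.coloring L hL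
  obtain ⟨w, hw, hc⟩ := h (c z) (hlt z hz)
  exact ⟨w, hw, fun hadj => hval w (notMem_of_commonNbr hw) z hz hadj hc⟩

lemma isClique_union_commonNbr {L : Finset V} (hL : G.IsClique (L : Set V))
    (hW : G.IsClique (commonNbr G L : Set V)) [DecidableEq V] :
    G.IsClique ((L ∪ commonNbr G L : Finset V) : Set V) := by
  intro a ha b hb hab
  simp only [Finset.coe_union, Set.mem_union, Finset.mem_coe] at ha hb
  rcases ha with ha | ha <;> rcases hb with hb | hb
  · exact hL ha hb hab
  · exact mem_commonNbr.1 hb a ha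
  · exact (mem_commonNbr.1 ha b hb).symm
  · exact hW ha hb hab

lemma not_isClique_commonNbr (S : Setting G ℓ k) {L : Finset V} (hL : G.IsNClique ℓ L) :
    ¬ G.IsClique (commonNbr G L : Set V) := by
  classical
  intro hW
  have h1 := S.clique_lt _ (isClique_union_commonNbr hL.isClique hW)
  rw [Finset.card_union_of_disjoint, hL.card_eq] at h1
  · have := S.le_card_commonNbr hL
    omega
  · exact Finset.disjoint_left.2 fun a ha hb => notMem_of_commonNbr hb ha

lemma exists_nonadj (S : Setting G ℓ k) {L : Finset V} (hL : G.IsNClique ℓ L) :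
    ∃ a ∈ commonNbr G L, ∃ b ∈ commonNbr G L, a ≠ b ∧ ¬ G.Adj a b := by
  by_contra h
  push Not at h
  exact S.not_isClique_commonNbr hL fun a ha b hb hab => h a ha b hb hab

/-! ### Extending small cliques -/

/-- Exchanging a vertex `i` of a `K_ℓ` for a vertex `r` adjacent to all the others. -/
lemma isNClique_swap {V : Type*} [DecidableEq V] {G : SimpleGraph V} {L : Finset V}
    (hL : G.IsNClique ℓ L) {i r : V} (hi : i ∈ L)
    (hadj : ∀ v ∈ L, v ≠ i → G.Adj v r) :
    G.IsNClique ℓ (insert r (L.erase i)) := by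
  have hpos : 0 < L.card := Finset.card_pos.2 ⟨i, hi⟩
  have h1 : G.IsNClique (ℓ - 1) (L.erase i) := by
    refine ⟨hL.isClique.subset (by simp), ?_⟩
    rw [Finset.card_erase_of_mem hi, hL.card_eq]
  have h2 := h1.insert (a := r) (fun b hb =>
    (hadj b (Finset.mem_of_mem_erase hb) (Finset.ne_of_mem_erase hb)).symm)
  rw [hL.card_eq] at hpos
  rwa [Nat.sub_add_cancel hpos] at h2

/-- A `K_ℓ` containing `Q` can be moved so as to contain also a vertex `y` complete to `Q`. Among the
copies of `K_ℓ` containing `Q`, take `L` with the most neighbours of `y`. If `y` misses a vertex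
of `L`, then maximality makes `y` anticomplete to the common neighbours of `L`, so these form a
clique by claw-freeness, which is impossible. -/
lemma extend_step (S : Setting G ℓ k) {Q : Finset V} (hne : Q.Nonempty) (hcard : Q.card < ℓ)
    (hQ : ∃ L, Q ⊆ L ∧ G.IsNClique ℓ L) {y : V} (hy : ∀ q ∈ Q, G.Adj q y) :
    ∃ L, Q ⊆ L ∧ y ∈ L ∧ G.IsNClique ℓ L := by
  classical
  let F : Finset (Finset V) := Finset.univ.filter fun L => Q ⊆ L ∧ G.IsNClique ℓ L
  have hF : F.Nonempty := by
    obtain ⟨L, h⟩ := hQ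
    exact ⟨L, by simpa [F] using h⟩
  obtain ⟨L, hLF, hmax⟩ := F.exists_max_image (fun L => (L ∩ nbr G y).card) hF
  obtain ⟨hQL, hL⟩ : Q ⊆ L ∧ G.IsNClique ℓ L := by simpa [F] using hLF
  by_cases hyL : y ∈ L
  · exact ⟨L, hQL, hyL, hL⟩
  by_cases hall : ∀ v ∈ L, G.Adj v y
  · obtain ⟨i, hi, hiQ⟩ : ∃ i ∈ L, i ∉ Q := by
      by_contra hcon
      push Not at hcon
      have := Finset.card_le_card (fun i hi => hcon i hi : L ⊆ Q)
      rw [hL.card_eq] at this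
      omega
    refine ⟨insert y (L.erase i), fun q hq => ?_, by simp,
      isNClique_swap hL hi fun v hv _ => hall v hv⟩
    have : q ≠ i := fun h => hiQ (h ▸ hq)
    simp [this, hQL hq]
  · exfalso
    push Not at hall
    obtain ⟨i, hi, hiy⟩ := hall
    obtain ⟨x, hx⟩ := hne
    apply S.not_isClique_commonNbr hL
    -- otherwise exchanging `i` for `w` would gain a neighbour of `y`
    have hWy : ∀ w ∈ commonNbr G L, ¬ G.Adj y w := by
      intro w hw hyw
      have hmem : insert w (L.erase i) ∈ F := by
        have : G.IsNClique ℓ (insert w (L.erase i)) :=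
          isNClique_swap hL hi fun v hv _ => mem_commonNbr.1 hw v hv
        simp only [F, Finset.mem_filter, Finset.mem_univ, true_and]
        refine ⟨fun q hq => ?_, this⟩
        have : q ≠ i := fun h => hiy (h ▸ hy q hq)
        simp [this, hQL hq]
      have h1 := hmax _ hmem
      have h2 : insert w (L ∩ nbr G y) ⊆ insert w (L.erase i) ∩ nbr G y := by
        intro v hv
        rcases Finset.mem_insert.1 hv with rfl | hv
        · simp [hyw]
        · simp only [Finset.mem_inter, mem_nbr] at hv
          have : v ≠ i := fun h => hiy (h ▸ hv.2.symm)
          simp [this, hv.1, hv.2]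
      have h3 := Finset.card_le_card h2
      rw [Finset.card_insert_of_notMem] at h3
      · omega
      · intro h
        exact notMem_of_commonNbr hw (Finset.mem_inter.1 h).1
    have hyW : y ∉ commonNbr G L := fun h => hiy (mem_commonNbr.1 h i hi)
    intro a ha b hb hab
    rw [Finset.mem_coe] at ha hb
    exact claw_adj S.claw (hy x hx) (mem_commonNbr.1 ha x (hQL hx)) (mem_commonNbr.1 hb x (hQL hx))
      (fun h => hyW (h ▸ ha)) (hWy a ha) (fun h => hyW (h ▸ hb)) (hWy b hb) hab

lemma exists_clique_mem (S : Setting G ℓ k) (v : V) : ∃ L, v ∈ L ∧ G.IsNClique ℓ L := by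
  have hℓ := S.two_le
  obtain ⟨L, hL⟩ := S.exists_clique
  obtain ⟨x, hx⟩ : L.Nonempty := by
    rw [← Finset.card_pos, hL.card_eq]
    omega
  -- carry the copy of `K_ℓ` along a walk from `x` to `v`
  obtain ⟨p⟩ := S.preconn v x
  induction p with
  | nil => exact ⟨L, hx, hL⟩
  | @cons a b c hab p ih =>
    obtain ⟨L', hb, hL'⟩ := ih hx
    obtain ⟨L'', -, h, hL''⟩ := S.extend_step (Q := {b}) (by simp) (by simp; omega)
      ⟨L', by simpa using hb, hL'⟩ (y := a) (by simpa using hab.symm)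
    exact ⟨L'', h, hL''⟩

lemma extend (S : Setting G ℓ k) {Q : Finset V} (hQ : G.IsClique (Q : Set V))
    (hcard : Q.card ≤ ℓ) : ∃ L, Q ⊆ L ∧ G.IsNClique ℓ L := by
  classical
  induction Q using Finset.induction_on with
  | empty =>
    obtain ⟨L, hL⟩ := S.exists_clique
    exact ⟨L, by simp, hL⟩
  | insert y Q hyQ ih =>
    rw [Finset.card_insert_of_notMem hyQ] at hcard
    rcases Q.eq_empty_or_nonempty with rfl | hne
    · obtain ⟨L, hy, hL⟩ := S.exists_clique_mem y
      exact ⟨L, by simpa using hy, hL⟩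
    · have hQ' : G.IsClique (Q : Set V) := hQ.subset (by simp)
      obtain ⟨L, h1, h2, h3⟩ := S.extend_step hne (by omega) (ih hQ' (by omega)) (y := y)
        (fun q hq => hQ (by simp [hq]) (by simp) (fun h => hyQ (h ▸ hq)))
      exact ⟨L, Finset.insert_subset h2 h1, h3⟩

/-! ### Sizes of non-neighbourhoods -/

/-- By claw-freeness `nonNbrIn G x z` is a clique. If it had fewer than `ℓ` vertices, it would lie,
together with `x`, in a `K_ℓ`, and the partner of `z` would be one more element of it. -/
lemma le_card_nonNbrIn (S : Setting G ℓ k) {x z : V} (hxz : G.Adj x z)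
    (hne : (nonNbrIn G x z).Nonempty) : ℓ ≤ (nonNbrIn G x z).card := by
  classical
  by_contra hlt
  have hxM : x ∉ nonNbrIn G x z := by simp
  have hcl : G.IsClique ((insert x (nonNbrIn G x z) : Finset V) : Set V) := by
    rw [Finset.coe_insert, isClique_insert]
    refine ⟨fun a ha b hb hab => ?_, fun b hb _ => (mem_nonNbrIn.1 hb).1⟩
    rw [Finset.mem_coe, mem_nonNbrIn] at ha hb
    exact claw_adj S.claw hxz ha.1 hb.1 ha.2.1 ha.2.2 hb.2.1 hb.2.2 hab
  obtain ⟨L, hML, hL⟩ := S.extend hcl (by rw [Finset.card_insert_of_notMem hxM]; omega)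
  obtain ⟨y, hy⟩ := hne
  have hyL : y ∈ L := hML (Finset.mem_insert_of_mem hy)
  have hxL : x ∈ L := hML (Finset.mem_insert_self _ _)
  have hy' := mem_nonNbrIn.1 hy
  have hzL : z ∉ L := fun h => hy'.2.2 (hL.isClique h hyL hy'.2.1)
  obtain ⟨w, hw, hwz⟩ := S.exists_partner hL hzL
  have hw' := mem_commonNbr.1 hw
  have hne : z ≠ w := by
    rintro rfl
    exact hy'.2.2 (hw' y hyL).symm
  exact notMem_of_commonNbr hw (hML (Finset.mem_insert_of_mem
    (mem_nonNbrIn.2 ⟨hw' x hxL, hne, fun h => hwz h.symm⟩)))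

/-- If the non-neighbours of `z` form a clique with fewer than `ℓ` vertices, extend it to a `K_ℓ`; the
partner of `z` is a further non-neighbour. -/
lemma le_card_nonNbr (S : Setting G ℓ k) {z : V} (hcl : G.IsClique (nonNbr G z : Set V))
    (hne : (nonNbr G z).Nonempty) : ℓ ≤ (nonNbr G z).card := by
  by_contra hlt
  obtain ⟨L, hUL, hL⟩ := S.extend hcl (by omega)
  obtain ⟨y, hy⟩ := hne
  have hy' := mem_nonNbr.1 hy
  have hzL : z ∉ L := fun h => hy'.2 (hL.isClique h (hUL hy) hy'.1)
  obtain ⟨w, hw, hwz⟩ := S.exists_partner hL hzL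
  have hne : z ≠ w := by
    rintro rfl
    exact hy'.2 (mem_commonNbr.1 hw y (hUL hy)).symm
  exact notMem_of_commonNbr hw (hUL (mem_nonNbr.2 ⟨hne, fun h => hwz h.symm⟩))

/-! ### Upper bounds on degrees -/

/-- A vertex has at most two neighbours in each colour class, since three would give a claw. -/
lemma card_nbr_sdiff_le [DecidableEq V] (S : Setting G ℓ k) {L : Finset V} {c : V → ℕ}
    {T : Finset ℕ} {v : V} (hval : ∀ a ∉ L, ∀ b ∉ L, G.Adj a b → c a ≠ c b)
    (hT : ∀ w ∈ nbr G v \ L, c w ∈ T) : (nbr G v \ L).card ≤ 2 * T.card := by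
  refine Finset.card_le_mul_card_image_of_maps_to hT 2 fun i _ => ?_
  by_contra h
  obtain ⟨a, b, d, ha, hb, hd, hab, had, hbd⟩ := Finset.two_lt_card_iff.1 (not_le.1 h)
  simp only [Finset.mem_filter, Finset.mem_sdiff, mem_nbr] at ha hb hd
  exact S.claw ⟨v, a, b, d, hab, had, hbd, ha.1.1, hb.1.1, hd.1.1,
    fun h => hval a ha.1.2 b hb.1.2 h (ha.2.trans hb.2.symm),
    fun h => hval a ha.1.2 d hd.1.2 h (ha.2.trans hd.2.symm),
    fun h => hval b hb.1.2 d hd.1.2 h (hb.2.trans hd.2.symm)⟩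

lemma card_nbr_le_of_mem (S : Setting G ℓ k) {L : Finset V} (hL : G.IsNClique ℓ L) {x : V}
    (hx : x ∈ L) : (nbr G x).card ≤ (ℓ - 1) + 2 * (k - ℓ) := by
  classical
  obtain ⟨c, hlt, hval, -⟩ := S.coloring L hL
  have h1 := S.card_nbr_sdiff_le (v := x) (T := Finset.range (k - ℓ)) hval (fun w hw =>
    Finset.mem_range.2 (hlt w (Finset.mem_sdiff.1 hw).2))
  have h2 : (nbr G x ∩ L).card ≤ ℓ - 1 := by
    have : nbr G x ∩ L ⊆ L.erase x := by
      intro y hy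
      simp only [Finset.mem_inter, mem_nbr] at hy
      simp [hy.1.ne', hy.2]
    have := Finset.card_le_card this
    rwa [Finset.card_erase_of_mem hx, hL.card_eq] at this
  have h3 := Finset.card_sdiff_add_card_inter (nbr G x) L
  simp only [Finset.card_range] at h1
  omega

/-- Besides `L`, the colour class of `v` itself contains no neighbours of `v`. -/
lemma card_nbr_le_of_anticomplete (S : Setting G ℓ k) {L : Finset V} (hL : G.IsNClique ℓ L) {v : V}
    (hv : L ⊆ nonNbr G v) : (nbr G v).card ≤ 2 * (k - ℓ - 1) := by
  classical
  obtain ⟨c, hlt, hval, -⟩ := S.coloring L hL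
  have hvL : v ∉ L := fun h => by simpa using hv h
  have h1 := S.card_nbr_sdiff_le (v := v) (T := (Finset.range (k - ℓ)).erase (c v)) hval
    (fun w hw => by
      simp only [Finset.mem_sdiff, mem_nbr] at hw
      exact Finset.mem_erase.2 ⟨(hval v hvL w hw.2 hw.1).symm, Finset.mem_range.2 (hlt w hw.2)⟩)
  rw [Finset.card_erase_of_mem (Finset.mem_range.2 (hlt v hvL)), Finset.card_range,
    Finset.sdiff_eq_self_of_disjoint] at h1
  · exact h1
  · refine Finset.disjoint_left.2 fun y hy hyL => ?_
    exact (mem_nonNbr.1 (hv hyL)).2 (mem_nbr.1 hy)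

/-! ### Lower bounds on degrees -/

/-- The neighbourhood of `x ∈ L` consists of `L - x`, `partNbr G x L` and the common neighbours of `L`. -/
lemma le_card_nbr_of_partNbr (S : Setting G ℓ k) {L : Finset V} (hL : G.IsNClique ℓ L) {x : V}
    (hx : x ∈ L) : (ℓ - 1) + (partNbr G x L).card + (k - ℓ) ≤ (nbr G x).card := by
  classical
  have hW := S.le_card_commonNbr hL
  have hsub : (L.erase x ∪ partNbr G x L) ∪ commonNbr G L ⊆ nbr G x := by
    intro y hy
    simp only [Finset.mem_union, Finset.mem_erase, mem_partNbr, mem_commonNbr] at hy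
    rw [mem_nbr]
    rcases hy with (hy | hy) | hy
    · exact hL.isClique hx hy.2 hy.1.symm
    · exact hy.1
    · exact hy x hx
  have h1 : Disjoint (L.erase x) (partNbr G x L) := by
    refine Finset.disjoint_left.2 fun y hy hy' => ?_
    obtain ⟨-, i, hi, hiy, hadj⟩ := mem_partNbr.1 hy'
    exact hadj (hL.isClique hi (Finset.mem_of_mem_erase hy) hiy)
  have h2 : Disjoint (L.erase x ∪ partNbr G x L) (commonNbr G L) := by
    refine Finset.disjoint_left.2 fun y hy hy' => ?_
    rcases Finset.mem_union.1 hy with hy | hy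
    · exact notMem_of_commonNbr hy' (Finset.mem_of_mem_erase hy)
    · obtain ⟨-, i, hi, hiy, hadj⟩ := mem_partNbr.1 hy
      exact hadj (mem_commonNbr.1 hy' i hi)
  have h3 := Finset.card_le_card hsub
  rw [Finset.card_union_of_disjoint h2, Finset.card_union_of_disjoint h1,
    Finset.card_erase_of_mem hx, hL.card_eq] at h3
  omega

/-- If `a` is the only non-neighbour of `b` among the common neighbours of `L`, then the partner of
`b` for the clique obtained from `L` by exchanging `i` for `a` is private for `i`. -/
lemma exists_priv (S : Setting G ℓ k) {L : Finset V} (hL : G.IsNClique ℓ L) {i a b : V}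
    (hi : i ∈ L) (ha : a ∈ commonNbr G L) (hb : b ∈ commonNbr G L) (hab : a ≠ b)
    (hadj : ¬ G.Adj a b)
    (hone : ∀ w ∈ commonNbr G L, b ≠ w → ¬ G.Adj b w → w = a) :
    ∃ w ∈ priv G L i, G.Adj w a ∧ ¬ G.Adj w b := by
  classical
  have ha' := mem_commonNbr.1 ha
  have hb' := mem_commonNbr.1 hb
  have hL' : G.IsNClique ℓ (insert a (L.erase i)) :=
    isNClique_swap hL hi fun v hv _ => ha' v hv
  have hbL' : b ∉ insert a (L.erase i) := by
    simp only [Finset.mem_insert, Finset.mem_erase, not_or]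
    exact ⟨hab.symm, fun h => notMem_of_commonNbr hb h.2⟩
  obtain ⟨w, hw, hwb⟩ := S.exists_partner hL' hbL'
  have hw' := mem_commonNbr.1 hw
  have hwa : G.Adj a w := hw' a (by simp)
  have hwL : ∀ j ∈ L, j ≠ i → G.Adj j w := fun j hj hji => hw' j (by simp [hj, hji])
  have hiw : i ≠ w := by
    rintro rfl
    exact hwb (hb' i hi)
  have hbw : b ≠ w := by
    rintro rfl
    exact hadj hwa
  refine ⟨w, mem_priv.2 ⟨hiw, fun h => ?_, hwL⟩, hwa.symm, hwb⟩
  have hwW : w ∈ commonNbr G L := mem_commonNbr.2 fun j hj => by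
    by_cases hji : j = i
    · exact hji ▸ h
    · exact hwL j hj hji
  have := hone w hwW hbw (fun h => hwb h.symm)
  exact G.loopless.irrefl a (this ▸ hwa)

/-- Each `i ∈ L - x` has two private vertices if `L` maximizes `partNbr G x L`. When some common
neighbour `r` of `L` misses two others, exchanging `i` for `r` costs at most the private vertices
of `i` and gains those two. Otherwise `exists_priv` applies to both ends of a non-adjacent pair. -/
lemma two_le_card_priv (S : Setting G ℓ k) {L : Finset V} (hL : G.IsNClique ℓ L) {x i : V}
    (hx : x ∈ L) (hi : i ∈ L) (hix : i ≠ x)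
    (hmax : ∀ L', x ∈ L' → G.IsNClique ℓ L' → (partNbr G x L').card ≤ (partNbr G x L).card) :
    2 ≤ (priv G L i).card := by
  classical
  by_cases htwo : ∃ r ∈ commonNbr G L, ∃ s ∈ commonNbr G L, ∃ t ∈ commonNbr G L,
      s ≠ t ∧ r ≠ s ∧ ¬ G.Adj r s ∧ r ≠ t ∧ ¬ G.Adj r t
  · obtain ⟨r, hr, s, hs, t, ht, hst, hrs, hrs', hrt, hrt'⟩ := htwo
    have hr' := mem_commonNbr.1 hr
    have hs' := mem_commonNbr.1 hs
    have ht' := mem_commonNbr.1 ht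
    have h1 := hmax (insert r (L.erase i)) (by simp [hx, hix.symm])
      (isNClique_swap hL hi fun v hv _ => hr' v hv)
    have hsub : (partNbr G x L \ priv G L i) ∪ {s, t} ⊆ partNbr G x (insert r (L.erase i)) := by
      intro y hy
      rw [mem_partNbr]
      simp only [Finset.mem_union, Finset.mem_sdiff, Finset.mem_insert,
        Finset.mem_singleton] at hy
      rcases hy with ⟨hy, hyp⟩ | rfl | rfl
      · obtain ⟨hxy, j, hj, hjy, hjadj⟩ := mem_partNbr.1 hy
        refine ⟨hxy, ?_⟩
        by_cases hji : j = i
        · subst hji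
          have : ∃ m ∈ L, m ≠ j ∧ ¬ G.Adj m y := by
            by_contra hcon
            push Not at hcon
            exact hyp (mem_priv.2 ⟨hjy, hjadj, hcon⟩)
          obtain ⟨m, hm, hmj, hmy⟩ := this
          refine ⟨m, by simp [hm, hmj], ?_, hmy⟩
          rintro rfl
          exact hjadj (hL.isClique hj hm hmj.symm)
        · exact ⟨j, by simp [hj, hji], hjy, hjadj⟩
      · exact ⟨hs' x hx, r, by simp, hrs, hrs'⟩
      · exact ⟨ht' x hx, r, by simp, hrt, hrt'⟩
    have hdis : Disjoint (partNbr G x L \ priv G L i) {s, t} := by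
      refine Finset.disjoint_left.2 fun y hy hy' => ?_
      obtain ⟨-, j, hj, -, hjadj⟩ := mem_partNbr.1 (Finset.mem_sdiff.1 hy).1
      rcases Finset.mem_insert.1 hy' with rfl | hy'
      · exact hjadj (hs' j hj)
      · rw [Finset.mem_singleton] at hy'
        subst hy'
        exact hjadj (ht' j hj)
    have h2 := Finset.card_le_card hsub
    rw [Finset.card_union_of_disjoint hdis, Finset.card_pair hst] at h2
    have h3 := Finset.le_card_sdiff (priv G L i) (partNbr G x L)
    omega
  · push Not at htwo
    obtain ⟨a, ha, b, hb, hab, hadj⟩ := S.exists_nonadj hL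
    obtain ⟨w, hw, hwa, hwb⟩ := S.exists_priv hL hi ha hb hab hadj (fun w hw hbw hbw' => by
      by_contra hwa
      exact hadj (htwo b hb w hw a ha hwa hbw hbw' hab.symm).symm)
    obtain ⟨w', hw', hwb', hwa'⟩ := S.exists_priv hL hi hb ha hab.symm (fun h => hadj h.symm)
      (fun w hw haw haw' => by
        by_contra hwb
        exact hadj (htwo a ha w hw b hb hwb haw haw' hab))
    exact Finset.one_lt_card.2 ⟨w, hw, w', hw', fun h => hwa' (h ▸ hwa)⟩

/-- The degree of `x` is at least `k + 3ℓ - 5`: for an optimal `L` and some `i ∈ L - x`, the set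
`partNbr G x L` contains at least `ℓ` non-neighbours of `i`, and two private vertices for each of
the other `ℓ - 2` vertices of `L - x`. -/
lemma le_degree (S : Setting G ℓ k) (x : V) : k + 3 * ℓ ≤ (nbr G x).card + 5 := by
  classical
  have hℓ := S.two_le
  have hlt := S.lt
  let F : Finset (Finset V) := Finset.univ.filter fun L => x ∈ L ∧ G.IsNClique ℓ L
  have hF : F.Nonempty := by
    obtain ⟨L, h⟩ := S.exists_clique_mem x
    exact ⟨L, by simpa [F] using h⟩
  obtain ⟨L, hLF, hmax⟩ := F.exists_max_image (fun L => (partNbr G x L).card) hF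
  obtain ⟨hx, hL⟩ : x ∈ L ∧ G.IsNClique ℓ L := by simpa [F] using hLF
  have hpriv : ∀ i ∈ L.erase x, 2 ≤ (priv G L i).card := fun i hi =>
    S.two_le_card_priv hL hx (Finset.mem_of_mem_erase hi) (Finset.ne_of_mem_erase hi)
      (fun L' hx' hL' => hmax L' (by simp [F, hx', hL']))
  have hcE : (L.erase x).card = ℓ - 1 := by rw [Finset.card_erase_of_mem hx, hL.card_eq]
  obtain ⟨i, hi⟩ : (L.erase x).Nonempty := by
    rw [← Finset.card_pos]
    omega
  have hiL := Finset.mem_of_mem_erase hi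
  have hxi : G.Adj x i := hL.isClique hx hiL (Finset.ne_of_mem_erase hi).symm
  have hM : ℓ ≤ (nonNbrIn G x i).card := by
    refine S.le_card_nonNbrIn hxi ?_
    obtain ⟨z, hz⟩ : (priv G L i).Nonempty := by
      rw [← Finset.card_pos]
      have := hpriv i hi
      omega
    obtain ⟨h1, h2, h3⟩ := mem_priv.1 hz
    exact ⟨z, mem_nonNbrIn.2 ⟨h3 x hx (Finset.ne_of_mem_erase hi).symm, h1, h2⟩⟩
  let B := ((L.erase x).erase i).biUnion (priv G L)
  have hB : 2 * (ℓ - 2) ≤ B.card := by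
    rw [Finset.card_biUnion]
    · have h := Finset.card_nsmul_le_sum ((L.erase x).erase i) (fun j => (priv G L j).card) 2
        (fun j hj => hpriv j (Finset.mem_of_mem_erase hj))
      rw [Finset.card_erase_of_mem hi, hcE, smul_eq_mul] at h
      omega
    · intro j hj j' hj' hne
      refine Finset.disjoint_left.2 fun z hz hz' => ?_
      exact (mem_priv.1 hz').2.1 ((mem_priv.1 hz).2.2 j'
        (Finset.mem_of_mem_erase (Finset.mem_of_mem_erase hj')) hne.symm)
  have hdis : Disjoint (nonNbrIn G x i) B := by
    refine Finset.disjoint_left.2 fun z hz hz' => ?_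
    obtain ⟨j, hj, hz'⟩ := Finset.mem_biUnion.1 hz'
    exact (mem_nonNbrIn.1 hz).2.2 ((mem_priv.1 hz').2.2 i hiL (Finset.ne_of_mem_erase hj).symm)
  have hsub : nonNbrIn G x i ∪ B ⊆ partNbr G x L := by
    intro z hz
    rw [mem_partNbr]
    rcases Finset.mem_union.1 hz with hz | hz
    · obtain ⟨h1, h2, h3⟩ := mem_nonNbrIn.1 hz
      exact ⟨h1, i, hiL, h2, h3⟩
    · obtain ⟨j, hj, hz⟩ := Finset.mem_biUnion.1 hz
      obtain ⟨h1, h2, h3⟩ := mem_priv.1 hz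
      have hj' := Finset.mem_of_mem_erase hj
      exact ⟨h3 x hx (Finset.ne_of_mem_erase hj').symm, j, Finset.mem_of_mem_erase hj', h1, h2⟩
  have h1 := Finset.card_le_card hsub
  rw [Finset.card_union_of_disjoint hdis] at h1
  have h2 := S.le_card_nbr_of_partNbr hL hx
  omega

/-! ### Independent triples -/

/-- The bound on the chromatic number enters here: `k + 3ℓ - 5 ≤ d(v) ≤ 2(k - ℓ - 1)` would give
`k ≥ 5ℓ - 3`. -/
lemma card_lt_of_anticomplete (S : Setting G ℓ k) (hχ : k + 4 ≤ 5 * ℓ) {v : V} {K : Finset V}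
    (hK : G.IsClique (K : Set V)) (hv : K ⊆ nonNbr G v) : K.card < ℓ := by
  by_contra h
  obtain ⟨L, hLK, hcard⟩ := Finset.exists_subset_card_eq (not_lt.1 h)
  have hL : G.IsNClique ℓ L := ⟨hK.subset (by exact_mod_cast hLK), hcard⟩
  have h1 := S.card_nbr_le_of_anticomplete hL (hLK.trans hv)
  have h2 := S.le_degree v
  have h3 := S.lt
  omega

/-- A clique through a vertex `u` of an independent triple has at most `2ℓ - 3` vertices: no vertex is
adjacent to all of `u, v, w`, so the parts of `K` missed by `v` and by `w` cover `K`; each has at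
most `ℓ - 1` vertices, and both contain `u`. -/
lemma card_clique_le (S : Setting G ℓ k) (hχ : k + 4 ≤ 5 * ℓ) {u v w : V} (huv : u ≠ v)
    (huw : u ≠ w) (hvw : v ≠ w) (huv' : ¬ G.Adj u v) (huw' : ¬ G.Adj u w) (hvw' : ¬ G.Adj v w)
    {K : Finset V} (hK : G.IsClique (K : Set V)) (hu : u ∈ K) : K.card + 3 ≤ 2 * ℓ := by
  classical
  have key : ∀ t, u ≠ t → ¬ G.Adj u t → (K \ nbr G t).card < ℓ := by
    intro t hut hut'
    refine S.card_lt_of_anticomplete hχ (v := t) (hK.subset (by simp)) fun y hy => ?_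
    simp only [Finset.mem_sdiff, mem_nbr] at hy
    refine mem_nonNbr.2 ⟨?_, hy.2⟩
    rintro rfl
    exact hut' (hK hu hy.1 hut)
  have h1 := key v huv huv'
  have h2 := key w huw huw'
  have hcov : K ⊆ (K \ nbr G v) ∪ (K \ nbr G w) := by
    intro z hz
    by_contra hcon
    simp only [Finset.mem_union, Finset.mem_sdiff, mem_nbr, hz, true_and, not_or, not_not] at hcon
    have hzu : G.Adj z u := by
      refine hK hz hu ?_
      rintro rfl
      exact huv' hcon.1.symm
    exact S.claw ⟨z, u, v, w, huv, huw, hvw, hzu, hcon.1.symm, hcon.2.symm, huv', huw', hvw'⟩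
  have h3 := Finset.card_le_card hcov
  have h4 := Finset.card_union_add_card_inter (K \ nbr G v) (K \ nbr G w)
  have h5 : 0 < ((K \ nbr G v) ∩ (K \ nbr G w)).card := by
    refine Finset.card_pos.2 ⟨u, ?_⟩
    simp only [Finset.mem_inter, Finset.mem_sdiff, mem_nbr]
    exact ⟨⟨hu, fun h => huv' h.symm⟩, hu, fun h => huw' h.symm⟩
  omega

/-- Take an edge `ua` such that `a` misses a neighbour of `u`, a copy `L₁` of `K_ℓ` through `u, a`, and
a largest clique `K` containing `L₁`. As `K` has at most `2ℓ - 3` vertices, there is a `K_ℓ`, called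
`J`, inside `K` that contains `u`, `a` and `K \ L₁`. Common neighbours of `L₁` outside `K` miss a vertex of
`K \ L₁`, and at least `ℓ` neighbours of `u` miss `a`, so `partNbr G u J` has at least `k - ℓ + 3`
elements, which exceeds the upper bound on the degree of `u`. -/
lemma no_triple (S : Setting G ℓ k) (hχ : k + 4 ≤ 5 * ℓ) {u v w : V} (huv : u ≠ v)
    (huw : u ≠ w) (hvw : v ≠ w) (huv' : ¬ G.Adj u v) (huw' : ¬ G.Adj u w) (hvw' : ¬ G.Adj v w) :
    False := by
  classical
  have hℓ := S.two_le
  have hlt := S.lt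
  obtain ⟨L, hu, hL⟩ := S.exists_clique_mem u
  obtain ⟨a, ha, b, hb, hab, hadj⟩ := S.exists_nonadj hL
  have hua := mem_commonNbr.1 ha u hu
  have hub := mem_commonNbr.1 hb u hu
  have hM : ℓ ≤ (nonNbrIn G u a).card :=
    S.le_card_nonNbrIn hua ⟨b, mem_nonNbrIn.2 ⟨hub, hab, hadj⟩⟩
  have hcl : G.IsClique (({u, a} : Finset V) : Set V) := by
    simpa [isClique_pair] using fun _ => hua
  obtain ⟨L₁, hsub₁, hL₁⟩ := S.extend hcl (Finset.card_le_two.trans hℓ)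
  -- a largest clique containing `L₁`
  let F : Finset (Finset V) := Finset.univ.filter fun K => L₁ ⊆ K ∧ G.IsClique (K : Set V)
  have hF : F.Nonempty := ⟨L₁, by simpa [F] using hL₁.isClique⟩
  obtain ⟨K, hKF, hmax⟩ := F.exists_max_image Finset.card hF
  obtain ⟨hLK, hK⟩ : L₁ ⊆ K ∧ G.IsClique (K : Set V) := by simpa [F] using hKF
  have huL : u ∈ L₁ := hsub₁ (by simp)
  have haL : a ∈ L₁ := hsub₁ (by simp)
  have hKcard := S.card_clique_le hχ huv huw hvw huv' huw' hvw' hK (hLK huL)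
  have hI : (K \ L₁).card = K.card - ℓ := by rw [Finset.card_sdiff_of_subset hLK, hL₁.card_eq]
  have hKℓ : ℓ ≤ K.card := hL₁.card_eq ▸ Finset.card_le_card hLK
  obtain ⟨J, hJ₁, hJ₂, hJcard⟩ := Finset.exists_subsuperset_card_eq (n := ℓ)
    (s := {u, a} ∪ (K \ L₁)) (t := K)
    (Finset.union_subset (hsub₁.trans hLK) Finset.sdiff_subset)
    ((Finset.card_union_le _ _).trans (by
      have : ({u, a} : Finset V).card ≤ 2 := Finset.card_le_two
      omega)) hKℓ
  have hJ : G.IsNClique ℓ J := ⟨hK.subset (by exact_mod_cast hJ₂), hJcard⟩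
  have huJ : u ∈ J := hJ₁ (by simp)
  have haJ : a ∈ J := hJ₁ (by simp)
  have hsub : (commonNbr G L₁ \ (K \ L₁)) ∪ nonNbrIn G u a ⊆ partNbr G u J := by
    intro z hz
    rw [mem_partNbr]
    rcases Finset.mem_union.1 hz with hz | hz
    · obtain ⟨hzW, hzI⟩ := Finset.mem_sdiff.1 hz
      have hzK : z ∉ K := fun h =>
        hzI (Finset.mem_sdiff.2 ⟨h, notMem_of_commonNbr hzW⟩)
      have hzW' := mem_commonNbr.1 hzW
      refine ⟨hzW' u huL, ?_⟩
      obtain ⟨q, hq, hqz⟩ : ∃ q ∈ K, ¬ G.Adj q z := by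
        by_contra hcon
        push Not at hcon
        have hmem : insert z K ∈ F := by
          simp only [F, Finset.mem_filter, Finset.mem_univ, true_and, Finset.coe_insert,
            isClique_insert]
          exact ⟨hLK.trans (Finset.subset_insert _ _), hK, fun q hq _ => (hcon q hq).symm⟩
        have := hmax _ hmem
        rw [Finset.card_insert_of_notMem hzK] at this
        omega
      have hqL : q ∉ L₁ := fun h => hqz (hzW' q h)
      exact ⟨q, hJ₁ (by simp [hq, hqL]), fun h => hzK (h ▸ hq), hqz⟩
    · obtain ⟨h1, h2, h3⟩ := mem_nonNbrIn.1 hz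
      exact ⟨h1, a, haJ, h2, h3⟩
  have hdis : Disjoint (commonNbr G L₁ \ (K \ L₁)) (nonNbrIn G u a) := by
    refine Finset.disjoint_left.2 fun z hz hz' => ?_
    exact (mem_nonNbrIn.1 hz').2.2 (mem_commonNbr.1 (Finset.mem_sdiff.1 hz).1 a haL)
  have h1 := Finset.card_le_card hsub
  rw [Finset.card_union_of_disjoint hdis] at h1
  have h2 := Finset.le_card_sdiff (K \ L₁) (commonNbr G L₁)
  have h3 := S.le_card_commonNbr hL₁
  have h4 := S.le_card_nbr_of_partNbr hJ huJ
  have h5 := S.card_nbr_le_of_mem hJ huJ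
  omega

lemma false (S : Setting G ℓ k) (hχ : k + 4 ≤ 5 * ℓ) : False := by
  obtain ⟨L, hL⟩ := S.exists_clique
  obtain ⟨a, -, b, -, hab, hadj⟩ := S.exists_nonadj hL
  have hcl : G.IsClique (nonNbr G a : Set V) := by
    intro y hy z hz hyz
    rw [Finset.mem_coe, mem_nonNbr] at hy hz
    by_contra hn
    exact S.no_triple hχ hy.1 hz.1 hyz hy.2 hz.2 hn
  have h1 := S.le_card_nonNbr hcl ⟨b, mem_nonNbr.2 ⟨hab, hadj⟩⟩
  have h2 := S.card_lt_of_anticomplete hχ hcl subset_rfl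
  omega

end Setting

end KCritical

theorem stmt1 {V : Type*} [Fintype V] (ℓ k : ℕ) (hℓ : 2 ≤ ℓ)
    (G : SimpleGraph V) (hG : IsKCritical G ℓ) (hcf : ClawFree G)
    (hk : G.chromaticNumber = (k : ℕ∞)) (hχ : k ≤ 5 * ℓ - 4) :
    Nonempty (G ≃g completeGraph (Fin k)) := by
  by_contra hno
  exact (KCritical.setting_of_critical hℓ hG hcf hk hno).false (by omega)
end

section
/- If G is a triangle-critical claw-free graph with chromatic number χ(G) = 12, then G ≅ K_{12}. -/
/-!
Suppose `G` has no 12-clique. Deleting a triangle `T` leaves a 9-colourable graph, and each of its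
nine colour classes contains a vertex adjacent to all of `T`: otherwise the class could be
distributed over the three vertices of `T`, giving an 11-colouring of `G`. This colouring fact
(`Setup.tcol`) has the following consequences, where `d(x)` is the degree of `x`.

* Every edge is in a triangle; triangles have at least 9 and edges at least 10 common neighbours.
* For an edge `xy` the set `A(x,y) = N(x) \ N[y]` never has exactly 1 or 2 elements
  (`Setup.far_empty`), and it is a clique by claw-freeness.
* A claw-free graph has at most two neighbours of a vertex in each colour class. Hence
  `d(x) ≤ 2 + 2 * 9 = 20`, and `d(v) ≤ 2 * 8 = 16` if some triangle is disjoint from `N[v]`.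
* A clique on at least 10 vertices meets every triangle, because it does not fit into 9 colours;
  so a vertex outside it has at most two neighbours outside it.

If `d(x) ≤ 13`, all sets `A(x,y)` have size at most 2, so they are empty and `N[x]` is a 12-clique.
Hence all degrees are at least 14, and there is no 10-clique. If `14 ≤ d(x) ≤ 16`, choose `y` with
`A(x,y)` largest; counting the pairs of non-adjacent vertices between `A(x,y)` and `N(x) ∩ N(y)`
produces a 10-clique (`Setup.seventeen_le_deg`). So all degrees are at least 17, and
`W = V \ N[v]` is triangle-free for each `v`. A vertex of `W` then has at most 2 neighbours in `W`
and a vertex of `N(v)` has at most 2 neighbours in `W`, so counting edges between `N(v)` and `W`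
gives `15 |W| ≤ 40`, i.e. `|W| ≤ 2`. Now every `A(x,y)` is contained in such a set, so it is empty,
and closed neighbourhoods are cliques with at least 18 vertices, a contradiction.

Finally, a vertex-critical 12-chromatic graph with a 12-clique is that clique.
-/

open SimpleGraph

namespace TriangleCritical

open Finset

open scoped Classical in
/-- The neighbourhood of `x`. -/
noncomputable def nb {V : Type*} [Fintype V] (G : SimpleGraph V) (x : V) : Finset V :=
  univ.filter (fun v => G.Adj x v)

open scoped Classical in
/-- The set `N(x) \ N[y]`. -/
noncomputable def far {V : Type*} [Fintype V] (G : SimpleGraph V) (x y : V) : Finset V :=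
  univ.filter (fun v => G.Adj x v ∧ v ≠ y ∧ ¬ G.Adj y v)

open scoped Classical in
/-- The common neighbours of `x` and `y`. -/
noncomputable def com {V : Type*} [Fintype V] (G : SimpleGraph V) (x y : V) : Finset V :=
  univ.filter (fun v => G.Adj x v ∧ G.Adj y v)

open scoped Classical in
/-- The common neighbours of `x`, `y` and `z`. -/
noncomputable def com3 {V : Type*} [Fintype V] (G : SimpleGraph V) (x y z : V) : Finset V :=
  univ.filter (fun v => G.Adj x v ∧ G.Adj y v ∧ G.Adj z v)

section Basic

variable {V : Type*} [Fintype V] {G : SimpleGraph V}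

@[simp] lemma mem_nb {x v : V} : v ∈ nb G x ↔ G.Adj x v := by simp [nb]

@[simp] lemma mem_far {x y v : V} : v ∈ far G x y ↔ G.Adj x v ∧ v ≠ y ∧ ¬ G.Adj y v := by
  simp [far]

@[simp] lemma mem_com {x y v : V} : v ∈ com G x y ↔ G.Adj x v ∧ G.Adj y v := by simp [com]

@[simp] lemma mem_com3 {x y z v : V} :
    v ∈ com3 G x y z ↔ G.Adj x v ∧ G.Adj y v ∧ G.Adj z v := by simp [com3]

end Basic

/-! ### Colourings obtained from criticality -/

lemma not_colorable {V : Type*} {G : SimpleGraph V} (hχ : G.chromaticNumber = 12) :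
    ¬ G.Colorable 11 := by
  intro h
  have := h.chromaticNumber_le
  rw [hχ] at this
  exact absurd this (by decide)

lemma exists_vcol {V : Type*} {G : SimpleGraph V} (hG : IsKCritical G 3)
    (hχ : G.chromaticNumber = 12) (v : V) :
    ∃ φ : V → Fin 11, ∀ a b, a ≠ v → b ≠ v → G.Adj a b → φ a ≠ φ b := by
  classical
  have h := hG.2.1 v
  rw [hχ] at h
  have h11 : (G.induce ({v}ᶜ : Set V)).chromaticNumber ≤ (11 : ℕ) := by
    have : (G.induce ({v}ᶜ : Set V)).chromaticNumber + 1 = (11 : ℕ∞) + 1 := by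
      rw [h]; norm_num
    exact le_of_eq ((ENat.add_left_injective_of_ne_top (by simp)) this)
  obtain ⟨C⟩ := chromaticNumber_le_iff_colorable.1 h11
  refine ⟨fun a => if ha : a ∈ ({v}ᶜ : Set V) then C ⟨a, ha⟩ else 0, ?_⟩
  intro a b ha hb hab
  have ha' : a ∈ ({v}ᶜ : Set V) := by simpa using ha
  have hb' : b ∈ ({v}ᶜ : Set V) := by simpa using hb
  simp only [ha', hb', dite_true]
  exact C.valid (by simpa using hab)

/-- After deleting a triangle, there is a proper 9-colouring of the rest, in which every colour is
used on a common neighbour of the triangle. -/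
lemma exists_tcol {V : Type*} {G : SimpleGraph V} (hG : IsKCritical G 3)
    (hχ : G.chromaticNumber = 12) (x y z : V) (hxy : G.Adj x y) (hxz : G.Adj x z)
    (hyz : G.Adj y z) :
    ∃ φ : V → Fin 9,
      (∀ a b, a ≠ x → a ≠ y → a ≠ z → b ≠ x → b ≠ y → b ≠ z → G.Adj a b → φ a ≠ φ b) ∧
      ∀ i, ∃ c, G.Adj x c ∧ G.Adj y c ∧ G.Adj z c ∧ φ c = i := by
  classical
  have hcl : G.IsNClique 3 {x, y, z} := is3Clique_triple_iff.2 ⟨hxy, hxz, hyz⟩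
  have h := hG.2.2 _ hcl
  rw [hχ] at h
  have h9 : (G.induce ((↑({x, y, z} : Finset V) : Set V)ᶜ)).chromaticNumber ≤ (9 : ℕ) := by
    have : (G.induce ((↑({x, y, z} : Finset V) : Set V)ᶜ)).chromaticNumber + (3 : ℕ)
        = (9 : ℕ∞) + (3 : ℕ) := by
      rw [h]; norm_num
    exact le_of_eq ((ENat.add_left_injective_of_ne_top (by simp)) this)
  obtain ⟨C⟩ := chromaticNumber_le_iff_colorable.1 h9
  obtain ⟨φ, hφ⟩ : ∃ φ : V → Fin 9, ∀ a b, a ≠ x → a ≠ y → a ≠ z → b ≠ x → b ≠ y → b ≠ z →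
      G.Adj a b → φ a ≠ φ b := by
    refine ⟨fun a => if ha : a ∈ ((↑({x, y, z} : Finset V) : Set V)ᶜ) then C ⟨a, ha⟩ else 0, ?_⟩
    intro a b h1 h2 h3 h4 h5 h6 hab
    have ha' : a ∈ ((↑({x, y, z} : Finset V) : Set V)ᶜ) := by simp [h1, h2, h3]
    have hb' : b ∈ ((↑({x, y, z} : Finset V) : Set V)ᶜ) := by simp [h4, h5, h6]
    simp only [ha', hb', dite_true]
    exact C.valid (by simpa using hab)
  refine ⟨φ, hφ, ?_⟩
  by_contra hcon
  push Not at hcon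
  obtain ⟨i, hi⟩ := hcon
  apply not_colorable hχ
  have hne := hxy.ne
  have hne2 := hxz.ne
  have hne3 := hyz.ne
  -- Vertices of colour `i` join the class of a vertex of the triangle they are not adjacent to.
  let ψ : V → Fin 9 ⊕ Fin 3 := fun v =>
    if v = x then Sum.inr 0 else if v = y then Sum.inr 1 else if v = z then Sum.inr 2
    else if φ v ≠ i then Sum.inl (φ v) else if ¬ G.Adj x v then Sum.inr 0
    else if ¬ G.Adj y v then Sum.inr 1 else Sum.inr 2
  have hψi : ∀ v, ψ v ≠ Sum.inl i := by
    intro v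
    simp only [ψ]
    split_ifs <;> simp_all
  have hl : ∀ v j, ψ v = Sum.inl j → (v ≠ x ∧ v ≠ y ∧ v ≠ z) ∧ φ v = j := by
    intro v j
    simp only [ψ]
    split_ifs <;> simp_all
  have hr : ∀ v k, ψ v = Sum.inr k → v = ![x, y, z] k ∨
      (v ≠ x ∧ v ≠ y ∧ v ≠ z) ∧ φ v = i ∧ ¬ G.Adj (![x, y, z] k) v := by
    intro v k
    have h2 := hi v
    simp only [ψ]
    split_ifs <;> intro h <;> simp at h <;> subst h <;> simp_all
  have hψ : ∀ a b, G.Adj a b → ψ a ≠ ψ b := by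
    intro a b hab heq
    have h1 := hφ a b
    rcases hb : ψ b with j | k
    · obtain ⟨⟨p1, p2, p3⟩, p4⟩ := hl a j (heq.trans hb)
      obtain ⟨⟨q1, q2, q3⟩, q4⟩ := hl b j hb
      exact h1 p1 p2 p3 q1 q2 q3 hab (p4.trans q4.symm)
    · rcases hr a k (heq.trans hb) with p | ⟨⟨p1, p2, p3⟩, p4, p5⟩ <;>
        rcases hr b k hb with q | ⟨⟨q1, q2, q3⟩, q4, q5⟩
      · exact hab.ne (p.trans q.symm)
      · exact q5 (p ▸ hab)
      · exact p5 (q ▸ hab.symm)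
      · exact h1 p1 p2 p3 q1 q2 q3 hab (p4.trans q4.symm)
  have hc : G.Colorable (Fintype.card {s : Fin 9 ⊕ Fin 3 // s ≠ Sum.inl i}) :=
    Coloring.colorable (Coloring.mk (fun v => ⟨ψ v, hψi v⟩) (by
      intro a b hab hcc
      exact hψ a b hab (by simpa using hcc)))
  have hcard : Fintype.card {s : Fin 9 ⊕ Fin 3 // s ≠ Sum.inl i} = 11 := by
    rw [Fintype.card_subtype_compl]
    simp
  rwa [hcard] at hc

/-- The properties of a hypothetical counterexample that the argument uses. -/
structure Setup {V : Type*} [Fintype V] (G : SimpleGraph V) : Prop where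
  cf : ClawFree G
  deg : ∀ v, 11 ≤ (nb G v).card
  tcol : ∀ x y z, G.Adj x y → G.Adj x z → G.Adj y z → ∃ φ : V → Fin 9,
      (∀ a b, a ≠ x → a ≠ y → a ≠ z → b ≠ x → b ≠ y → b ≠ z → G.Adj a b → φ a ≠ φ b) ∧
      ∀ i, ∃ c, G.Adj x c ∧ G.Adj y c ∧ G.Adj z c ∧ φ c = i
  no12 : ∀ s : Finset V, G.IsClique s → s.card ≤ 11

lemma min_deg {V : Type*} [Fintype V] {G : SimpleGraph V} (hG : IsKCritical G 3)
    (hχ : G.chromaticNumber = 12) (v : V) : 11 ≤ (nb G v).card := by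
  classical
  by_contra hlt
  obtain ⟨φ, hφ⟩ := exists_vcol hG hχ v
  have : ∃ i : Fin 11, i ∉ (nb G v).image φ := by
    by_contra hall
    push Not at hall
    have h1 : (univ : Finset (Fin 11)) ⊆ (nb G v).image φ := fun i _ => hall i
    have h2 := card_le_card h1
    have h3 := card_image_le (s := nb G v) (f := φ)
    simp at h2
    omega
  obtain ⟨i, hi⟩ := this
  simp only [mem_image, mem_nb, not_exists, not_and] at hi
  apply not_colorable hχ
  refine ⟨Coloring.mk (fun w => if w = v then i else φ w) ?_⟩
  intro a b hab
  have h1 := hφ a b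
  have h2 := hi a
  have h3 := hi b
  have h4 := hab.symm
  have h5 := hab.ne
  split_ifs <;> grind

namespace Setup

variable {V : Type*} [Fintype V] {G : SimpleGraph V}

/-! ### Local structure -/

lemma claw (S : Setup G) {a b c d : V} (hbc : b ≠ c) (hbd : b ≠ d) (hcd : c ≠ d)
    (h1 : G.Adj a b) (h2 : G.Adj a c) (h3 : G.Adj a d) :
    G.Adj b c ∨ G.Adj b d ∨ G.Adj c d := by
  by_contra h
  push Not at h
  exact S.cf ⟨a, b, c, d, hbc, hbd, hcd, h1, h2, h3, h.1, h.2.1, h.2.2⟩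

/-- If all edges within `s ⊆ N(a)` are ruled out, then `s` has at most two elements. -/
lemma card_le_two (S : Setup G) {a : V} {s : Finset V} (hs : ∀ b ∈ s, G.Adj a b)
    (hind : ∀ b ∈ s, ∀ c ∈ s, ¬ G.Adj b c) : s.card ≤ 2 := by
  by_contra hlt
  obtain ⟨b, c, d, hb, hc, hd, h1, h2, h3⟩ := two_lt_card_iff.1 (not_le.1 hlt)
  rcases S.claw h1 h2 h3 (hs b hb) (hs c hc) (hs d hd) with h | h | h
  · exact hind _ hb _ hc h
  · exact hind _ hb _ hd h
  · exact hind _ hc _ hd h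

/-- A 10-clique meets every triangle, so the graph outside it is triangle-free. -/
lemma outside (S : Setup G) {Q : Finset V} (hQ : G.IsClique Q) (hc : 10 ≤ Q.card) {v : V}
    (hv : v ∉ Q) {s : Finset V} (hs : ∀ b ∈ s, G.Adj v b ∧ b ∉ Q) : s.card ≤ 2 := by
  refine S.card_le_two (fun b hb => (hs b hb).1) ?_
  intro b hb c hc' hbc
  obtain ⟨φ, hφ, -⟩ := S.tcol v b c (hs b hb).1 (hs c hc').1 hbc
  have hinj : Set.InjOn φ Q := by
    intro p hp q hq hpq
    by_contra hne
    refine hφ p q ?_ ?_ ?_ ?_ ?_ ?_ (hQ hp hq hne) hpq <;> rintro rfl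
    · exact hv hp
    · exact (hs _ hb).2 hp
    · exact (hs _ hc').2 hp
    · exact hv hq
    · exact (hs _ hb).2 hq
    · exact (hs _ hc').2 hq
  have := card_le_card_of_injOn φ (t := univ) (fun _ _ => mem_univ _) hinj
  simp at this
  omega

/-- Otherwise `N[x] \ {y}` would be an 11-clique, and `y` would have too few neighbours. -/
lemma exists_triangle (S : Setup G) {x y : V} (hxy : G.Adj x y) :
    ∃ z, G.Adj x z ∧ G.Adj y z := by
  classical
  by_contra hno
  push Not at hno
  have hQ : G.IsClique ((nb G x).erase y ∪ {x} : Finset V) := by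
    have key : ∀ p q, p ≠ y → q ≠ y → G.Adj x p → G.Adj x q → p ≠ q → G.Adj p q := by
      intro p q hp hq h1 h2 hne
      rcases S.claw hp.symm hq.symm hne hxy h1 h2 with h | h | h
      · exact absurd h (hno p h1)
      · exact absurd h (hno q h2)
      · exact h
    intro p hp q hq hne
    simp only [coe_union, coe_erase, coe_singleton, Set.mem_union, Set.mem_sdiff, mem_coe, mem_nb,
      Set.mem_singleton_iff] at hp hq
    rcases hp with ⟨h1, h2⟩ | rfl <;> rcases hq with ⟨h3, h4⟩ | rfl
    · exact key p q h2 h4 h1 h3 hne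
    · exact h1.symm
    · exact h3
    · exact absurd rfl hne
  have hcard : 10 ≤ ((nb G x).erase y ∪ {x} : Finset V).card := by
    have h1 := S.deg x
    have h2 := card_erase_of_mem (mem_nb.2 hxy)
    have h3 := card_le_card (subset_union_left (s₁ := (nb G x).erase y) (s₂ := {x}))
    omega
  have h := S.outside hQ hcard (v := y) (by simp [hxy.ne.symm]) (s := (nb G y).erase x) (by
    intro b hb
    simp only [mem_erase, mem_nb] at hb
    refine ⟨hb.2, ?_⟩
    simp only [mem_union, mem_erase, mem_nb, mem_singleton, not_or, not_and]
    exact ⟨fun _ h => hno b h hb.2, hb.1⟩)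
  have h2 := card_erase_of_mem (mem_nb.2 hxy.symm)
  have := S.deg y
  omega

lemma nine_le_com3 (S : Setup G) {x y z : V} (hxy : G.Adj x y) (hxz : G.Adj x z)
    (hyz : G.Adj y z) : 9 ≤ (com3 G x y z).card := by
  classical
  obtain ⟨φ, -, hφ⟩ := S.tcol x y z hxy hxz hyz
  have h : (univ : Finset (Fin 9)) ⊆ (com3 G x y z).image φ := by
    intro i _
    obtain ⟨c, h1, h2, h3, h4⟩ := hφ i
    exact mem_image.2 ⟨c, by simp [h1, h2, h3], h4⟩
  have h1 := card_le_card h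
  have h2 := card_image_le (s := com3 G x y z) (f := φ)
  simp at h1
  omega

lemma ten_le_com (S : Setup G) {x y : V} (hxy : G.Adj x y) : 10 ≤ (com G x y).card := by
  classical
  obtain ⟨z, hxz, hyz⟩ := S.exists_triangle hxy
  have h1 := S.nine_le_com3 hxy hxz hyz
  have hsub : insert z (com3 G x y z) ⊆ com G x y := by
    intro v hv
    simp only [mem_insert, mem_com3, mem_com] at hv ⊢
    rcases hv with rfl | hv
    · exact ⟨hxz, hyz⟩
    · exact ⟨hv.1, hv.2.1⟩
  have h2 := card_le_card hsub
  rw [card_insert_of_notMem (by simp)] at h2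
  omega

lemma card_nb (_S : Setup G) {x y : V} (hxy : G.Adj x y) :
    (nb G x).card = (com G x y).card + (far G x y).card + 1 := by
  classical
  have h : nb G x = insert y (com G x y ∪ far G x y) := by
    ext v
    simp only [mem_nb, mem_insert, mem_union, mem_com, mem_far]
    by_cases hv : v = y
    · subst hv; simp [hxy]
    · by_cases hyv : G.Adj y v <;> simp [hv, hyv]
  rw [h, card_insert_of_notMem (by simp), card_union_of_disjoint]
  rw [Finset.disjoint_left]
  intro v hv hv'
  simp only [mem_com, mem_far] at hv hv'
  exact hv'.2.2 hv.2

/-- In the colouring around a triangle, the class of `u` contains a common neighbour of it. -/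
lemma exists_com3 (S : Setup G) {x y z u : V} (hxy : G.Adj x y) (hxz : G.Adj x z)
    (hyz : G.Adj y z) (hux : u ≠ x) (huy : u ≠ y) (huz : u ≠ z) :
    ∃ c, G.Adj x c ∧ G.Adj y c ∧ G.Adj z c ∧ ¬ G.Adj u c := by
  obtain ⟨φ, hφ, hc⟩ := S.tcol x y z hxy hxz hyz
  obtain ⟨c, h1, h2, h3, h4⟩ := hc (φ u)
  exact ⟨c, h1, h2, h3, fun h =>
    hφ u c hux huy huz h1.ne.symm h2.ne.symm h3.ne.symm h h4.symm⟩

/-- For `a ∈ N(x) \ N[y]`, the colour class of `y` around a triangle `x, a, w` gives a second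
element `c` of this set, adjacent to `a`; the triangle `x, a, c` then gives a third. -/
lemma far_empty (S : Setup G) {x y : V} (hxy : G.Adj x y) (h2 : (far G x y).card ≤ 2) :
    far G x y = ∅ := by
  by_contra hne
  obtain ⟨a, ha⟩ := nonempty_iff_ne_empty.2 hne
  have ha' := ha
  simp only [mem_far] at ha
  obtain ⟨hxa, hay, hya⟩ := ha
  obtain ⟨w, hxw, haw⟩ := S.exists_triangle hxa
  have hyw : y ≠ w := by rintro rfl; exact hya haw.symm
  obtain ⟨c, hxc, hac, -, hyc⟩ := S.exists_com3 hxa hxw haw hxy.ne.symm hay.symm hyw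
  have hcy : c ≠ y := by rintro rfl; exact hya hac.symm
  obtain ⟨e, hxe, hae, hce, hye⟩ := S.exists_com3 hxa hxc hac hxy.ne.symm hay.symm hcy.symm
  have hey : e ≠ y := by rintro rfl; exact hya hae.symm
  have : 2 < (far G x y).card := two_lt_card_iff.2
    ⟨a, c, e, ha', by simp [hxc, hcy, hyc], by simp [hxe, hey, hye], hac.ne, hae.ne, hce.ne⟩
  omega

/-- Claw-freeness at `x`. -/
lemma far_clique (S : Setup G) {x y p q : V} (hxy : G.Adj x y) (hp : p ∈ far G x y)
    (hq : q ∈ far G x y) (hne : p ≠ q) : G.Adj p q := by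
  simp only [mem_far] at hp hq
  rcases S.claw hp.2.1.symm hq.2.1.symm hne hxy hp.1 hq.1 with h | h | h
  · exact absurd h hp.2.2
  · exact absurd h hq.2.2
  · exact h

lemma exists_far_nonempty (S : Setup G) (x : V) : ∃ y, G.Adj x y ∧ (far G x y).Nonempty := by
  classical
  by_contra hno
  push Not at hno
  have hQ : G.IsClique (insert x (nb G x) : Finset V) := by
    intro p hp q hq hne
    simp only [coe_insert, Set.mem_insert_iff, mem_coe, mem_nb] at hp hq
    rcases hp with rfl | hp <;> rcases hq with rfl | hq
    · exact absurd rfl hne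
    · exact hq
    · exact hp.symm
    · by_contra hpq
      have : q ∈ far G x p := by simp [hq, hne.symm, hpq]
      simp [hno p hp] at this
  have h1 := S.no12 _ hQ
  rw [card_insert_of_notMem (by simp)] at h1
  have := S.deg x
  omega

/-! ### Bounds on degrees and cliques -/

lemma fourteen_le_deg (S : Setup G) (x : V) : 14 ≤ (nb G x).card := by
  obtain ⟨y, hxy, hne⟩ := S.exists_far_nonempty x
  have h1 := S.card_nb hxy
  have h2 := S.ten_le_com hxy
  by_contra hlt
  have := S.far_empty hxy (by omega)
  simp [this] at hne

lemma clique_le_nine (S : Setup G) {Q : Finset V} (hQ : G.IsClique Q) : Q.card ≤ 9 := by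
  classical
  by_contra hlt
  have hQ11 := S.no12 Q hQ
  have hv : ∃ v, v ∉ Q := by
    by_contra hall
    push Not at hall
    obtain ⟨x, -⟩ : Q.Nonempty := card_pos.1 (by omega)
    have h1 := card_le_card (show nb G x ⊆ Q from fun v _ => hall v)
    have := S.fourteen_le_deg x
    omega
  obtain ⟨v, hv⟩ := hv
  have h1 := S.outside hQ (by omega) hv (s := nb G v \ Q) (by
    intro b hb
    simpa using hb)
  have h2 := S.fourteen_le_deg v
  have h3 := le_card_sdiff Q (nb G v)
  omega

lemma deg_le_twenty (S : Setup G) (x : V) : (nb G x).card ≤ 20 := by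
  classical
  obtain ⟨y, hxy, -⟩ := S.exists_far_nonempty x
  obtain ⟨z, hxz, hyz⟩ := S.exists_triangle hxy
  obtain ⟨φ, hφ, -⟩ := S.tcol x y z hxy hxz hyz
  have h1 : (((nb G x).erase y).erase z).card ≤ 2 * (univ : Finset (Fin 9)).card := by
    refine card_le_mul_card_image_of_maps_to (f := φ) (fun _ _ => mem_univ _) 2 ?_
    intro i _
    refine S.card_le_two (a := x) (fun b hb => ?_) (fun b hb c hc hbc => ?_)
    · simp at hb; exact hb.1.2.2
    · simp at hb hc
      exact hφ b c hb.1.2.2.ne.symm hb.1.2.1 hb.1.1 hc.1.2.2.ne.symm hc.1.2.1 hc.1.1 hbc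
        (hb.2.trans hc.2.symm)
  have h2 := pred_card_le_card_erase (s := nb G x) (a := y)
  have h3 := pred_card_le_card_erase (s := (nb G x).erase y) (a := z)
  simp at h1
  omega

/-- The neighbours of `v` avoid the colour of `v`, which leaves 8 colours, each used at most
twice on them. -/
lemma deg_le_sixteen (S : Setup G) {v x y z : V} (hxy : G.Adj x y) (hxz : G.Adj x z)
    (hyz : G.Adj y z) (hx : v ≠ x ∧ ¬ G.Adj v x) (hy : v ≠ y ∧ ¬ G.Adj v y)
    (hz : v ≠ z ∧ ¬ G.Adj v z) : (nb G v).card ≤ 16 := by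
  classical
  obtain ⟨φ, hφ, -⟩ := S.tcol x y z hxy hxz hyz
  have hne : ∀ b, G.Adj v b → b ≠ x ∧ b ≠ y ∧ b ≠ z := by
    intro b hb
    refine ⟨?_, ?_, ?_⟩ <;> rintro rfl
    · exact hx.2 hb
    · exact hy.2 hb
    · exact hz.2 hb
  have h1 : (nb G v).card ≤ 2 * ((univ : Finset (Fin 9)).erase (φ v)).card := by
    refine card_le_mul_card_image_of_maps_to (f := φ) (fun b hb => ?_) 2 ?_
    · rw [mem_nb] at hb
      have h := hne b hb
      exact mem_erase.2 ⟨(hφ v b hx.1 hy.1 hz.1 h.1 h.2.1 h.2.2 hb).symm, mem_univ _⟩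
    intro i _
    refine S.card_le_two (a := v) (fun b hb => ?_) (fun b hb c hc hbc => ?_)
    · simp at hb; exact hb.1
    · simp at hb hc
      have h := hne b hb.1
      have h' := hne c hc.1
      exact hφ b c h.1 h.2.1 h.2.2 h'.1 h'.2.1 h'.2.2 hbc (hb.2.trans hc.2.symm)
  rw [card_erase_of_mem (mem_univ _)] at h1
  simpa using h1

/-- `N(x)` contains `y`, `z`, at least 9 common neighbours, and `A(x,y) ∪ A(x,z)`. -/
lemma far_union_le [DecidableEq V] (S : Setup G) {x y z : V} (hxy : G.Adj x y) (hxz : G.Adj x z)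
    (hyz : G.Adj y z) : (far G x z ∪ far G x y).card + 11 ≤ (nb G x).card := by
  have h9 := S.nine_le_com3 hxy hxz hyz
  have hsub : insert y (insert z (com3 G x y z ∪ (far G x z ∪ far G x y))) ⊆ nb G x := by
    intro v hv
    simp only [mem_insert, mem_union, mem_com3, mem_far, mem_nb] at hv ⊢
    rcases hv with rfl | rfl | hv | hv | hv
    exacts [hxy, hxz, hv.1, hv.1, hv.1]
  have h := card_le_card hsub
  have hyz' := hyz.symm
  rw [card_insert_of_notMem (by simp [hyz.ne, hyz']), card_insert_of_notMem (by simp [hyz]),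
    card_union_of_disjoint] at h
  · omega
  · rw [Finset.disjoint_left]
    intro v hv hv'
    simp only [mem_com3, mem_union, mem_far] at hv hv'
    rcases hv' with hv' | hv'
    · exact hv'.2.2 hv.2.2
    · exact hv'.2.2 hv.2.1

/-- Let `y` maximise `Δ = |A(x,y)|`, put `D = d(x) - 11`, and let `R` be the set of `z` in
`N(x) ∩ N(y)` with `A(x,z)` nonempty. The vertices of `N(x) ∩ N(y)` outside `R` form with `x` and
`A(x,y)` a clique, so `|R| ≥ D + 2`. Each `z ∈ R` has at least `3 + Δ - D` non-neighbours in
`A(x,y)`, and each vertex of `A(x,y)` has at most `Δ - 1` in `R`. For `D ≤ 5` this is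
contradictory. -/
lemma seventeen_le_deg (S : Setup G) (x : V) : 17 ≤ (nb G x).card := by
  classical
  by_contra hlt
  have h14 := S.fourteen_le_deg x
  obtain ⟨y, hy, hmax⟩ := exists_max_image (nb G x) (fun y => (far G x y).card)
    (card_pos.1 (by omega))
  rw [mem_nb] at hy
  have hΔ : 3 ≤ (far G x y).card := by
    obtain ⟨y', hy', hne⟩ := S.exists_far_nonempty x
    have h1 := hmax y' (mem_nb.2 hy')
    have h2 := card_pos.2 hne
    by_contra h3
    have := S.far_empty hy (by omega)
    simp [this] at h1
    simp [h1] at h2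
  have hcard := S.card_nb hy
  have hten := S.ten_le_com hy
  set R := (com G x y).filter (fun z => far G x z ≠ ∅) with hR
  set U := (com G x y).filter (fun z => ¬ far G x z ≠ ∅) with hU
  have hRU : R.card + U.card = (com G x y).card := card_filter_add_card_filter_not _
  have hUfar : ∀ u ∈ U, ∀ v, G.Adj x v → v ≠ u → G.Adj u v := by
    intro u hu v hxv hvu
    rw [hU, mem_filter, not_not] at hu
    by_contra huv
    have : v ∈ far G x u := by simp [hxv, hvu, huv]
    simp [hu.2] at this
  have hUx : ∀ u ∈ U, G.Adj x u ∧ G.Adj y u := by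
    intro u hu
    rw [hU, mem_filter, mem_com] at hu
    exact hu.1
  have hclique : G.IsClique (insert x (U ∪ far G x y) : Finset V) := by
    have hx : ∀ v, v ∈ U ∨ v ∈ far G x y → G.Adj x v := by
      rintro v (hv | hv)
      · exact (hUx v hv).1
      · exact (mem_far.1 hv).1
    intro p hp q hq hne
    simp only [coe_insert, coe_union, Set.mem_insert_iff, Set.mem_union, mem_coe] at hp hq
    rcases hp with rfl | hp
    · rcases hq with rfl | hq
      · exact absurd rfl hne
      · exact hx q hq
    rcases hq with rfl | hq
    · exact (hx p hp).symm
    rcases hp with hp | hp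
    · exact hUfar p hp q (hx q hq) hne.symm
    rcases hq with hq | hq
    · exact (hUfar q hq p (mem_far.1 hp).1 hne).symm
    · exact S.far_clique hy hp hq hne
  have hc9 := S.clique_le_nine hclique
  rw [card_insert_of_notMem, card_union_of_disjoint] at hc9
  rotate_left
  · rw [Finset.disjoint_left]
    intro v hv hv'
    exact (mem_far.1 hv').2.2 (hUx v hv).2
  · simp only [mem_union, mem_far, not_or]
    exact ⟨fun h => (hUx x h).1.ne rfl, fun h => h.1.ne rfl⟩
  have hlow : R.card * (3 + (far G x y).card - ((nb G x).card - 11)) ≤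
      ∑ z ∈ R, (far G x z ∩ far G x y).card := by
    rw [← smul_eq_mul]
    refine card_nsmul_le_sum _ _ _ ?_
    intro z hz
    rw [hR, mem_filter, mem_com] at hz
    have h1 := S.far_union_le hy hz.1.1 hz.1.2
    have h2 := card_union_add_card_inter (far G x z) (far G x y)
    have h3 : 3 ≤ (far G x z).card := by
      by_contra h
      exact hz.2 (S.far_empty hz.1.1 (by omega))
    omega
  have hswap : ∑ z ∈ R, (far G x z ∩ far G x y).card =
      ∑ u ∈ far G x y, (R.filter (fun z => u ∈ far G x z)).card := by
    have := sum_card_bipartiteAbove_eq_sum_card_bipartiteBelow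
      (s := R) (t := far G x y) (fun z u => u ∈ far G x z)
    simp only [bipartiteAbove, bipartiteBelow] at this
    rw [← this]
    refine sum_congr rfl fun z _ => ?_
    congr 1
    ext u
    simp only [mem_inter, mem_filter]
    tauto
  have hup : ∑ u ∈ far G x y, (R.filter (fun z => u ∈ far G x z)).card ≤
      (far G x y).card * ((far G x y).card - 1) := by
    rw [← smul_eq_mul]
    refine sum_le_card_nsmul _ _ _ ?_
    intro u hu
    have hu' := mem_far.1 hu
    have hyu : y ∈ far G x u := by
      simp only [mem_far]
      exact ⟨hy, hu'.2.1.symm, fun h => hu'.2.2 h.symm⟩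
    have h1 : R.filter (fun z => u ∈ far G x z) ⊆ (far G x u).erase y := by
      intro z hz
      rw [mem_filter, hR, mem_filter, mem_com, mem_far] at hz
      rw [mem_erase, mem_far]
      exact ⟨hz.1.1.2.ne.symm, hz.1.1.1, hz.2.2.1.symm, fun h => hz.2.2.2 h.symm⟩
    have h2 := card_le_card h1
    rw [card_erase_of_mem hyu] at h2
    have h3 := hmax u (mem_nb.2 hu'.1)
    omega
  have hfin := hlow.trans (hswap.le.trans hup)
  generalize (far G x y).card = Δ at *
  generalize (nb G x).card = d at *
  generalize R.card = r at *
  have hr : d - 9 ≤ r := by omega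
  have hfin' := (Nat.mul_le_mul_right (3 + Δ - (d - 11)) hr).trans hfin
  have hΔd : Δ + 11 ≤ d := by omega
  have hd16 : d ≤ 16 := by omega
  clear hfin hlow hup hmax
  have hΔ5 : Δ ≤ 5 := by omega
  interval_cases d <;> interval_cases Δ <;> omega

lemma nonneighbours_le (S : Setup G) (v : V) (W : Finset V)
    (hW : ∀ w, w ∈ W ↔ w ≠ v ∧ ¬ G.Adj v w) : W.card ≤ 2 := by
  classical
  have htf : ∀ a ∈ W, ∀ b ∈ W, ∀ c ∈ W, G.Adj a b → G.Adj a c → ¬ G.Adj b c := by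
    intro a ha b hb c hc hab hac hbc
    rw [hW] at ha hb hc
    have h1 := S.deg_le_sixteen (v := v) hab hac hbc ⟨ha.1.symm, ha.2⟩ ⟨hb.1.symm, hb.2⟩
      ⟨hc.1.symm, hc.2⟩
    have := S.seventeen_le_deg v
    omega
  have hin : ∀ w ∈ W, (W.filter (fun u => G.Adj w u)).card ≤ 2 := by
    intro w hw
    refine S.card_le_two (a := w) (fun b hb => (mem_filter.1 hb).2) ?_
    intro b hb c hc
    rw [mem_filter] at hb hc
    exact htf w hw b hb.1 c hc.1 hb.2 hc.2
  have hlow : W.card * 15 ≤ ∑ w ∈ W, ((nb G v).filter (fun u => G.Adj w u)).card := by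
    rw [← smul_eq_mul]
    refine card_nsmul_le_sum _ _ _ ?_
    intro w hw
    have h1 := hin w hw
    have h2 : nb G w ⊆ W.filter (fun u => G.Adj w u) ∪ (nb G v).filter (fun u => G.Adj w u) := by
      intro u hu
      rw [mem_nb] at hu
      simp only [mem_union, mem_filter, hW, mem_nb, hu, and_true]
      by_cases h : G.Adj v u
      · exact Or.inr h
      · refine Or.inl ⟨?_, h⟩
        rintro rfl
        exact ((hW w).1 hw).2 hu.symm
    have h3 := (card_le_card h2).trans (card_union_le _ _)
    have h4 := S.seventeen_le_deg w
    omega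
  have hup : ∑ u ∈ nb G v, (W.filter (fun w => G.Adj w u)).card ≤ (nb G v).card * 2 := by
    rw [← smul_eq_mul]
    refine sum_le_card_nsmul _ _ _ ?_
    intro u hu
    rw [mem_nb] at hu
    by_contra hlt
    obtain ⟨b, c, d, hb, hc, hd, h1, h2, h3⟩ := two_lt_card_iff.1 (not_le.1 hlt)
    rw [mem_filter] at hb hc hd
    -- By claw-freeness at `u`, the neighbours of `u` in `W` form a clique.
    have key : ∀ p q, p ∈ W ∧ G.Adj p u → q ∈ W ∧ G.Adj q u → p ≠ q → G.Adj p q := by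
      intro p q hp hq hne
      have hp' := (hW p).1 hp.1
      have hq' := (hW q).1 hq.1
      rcases S.claw hp'.1.symm hq'.1.symm hne hu.symm hp.2.symm hq.2.symm with h | h | h
      · exact absurd h hp'.2
      · exact absurd h hq'.2
      · exact h
    exact htf b hb.1 c hc.1 d hd.1 (key _ _ hb hc h1) (key _ _ hb hd h2) (key _ _ hc hd h3)
  have hswap := sum_card_bipartiteAbove_eq_sum_card_bipartiteBelow
      (s := W) (t := nb G v) (fun w u => G.Adj w u)
  simp only [bipartiteAbove, bipartiteBelow] at hswap
  have h20 := S.deg_le_twenty v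
  omega

lemma not_nonempty (S : Setup G) (x : V) : False := by
  classical
  obtain ⟨y, hxy, hne⟩ := S.exists_far_nonempty x
  have h1 := S.nonneighbours_le y (univ.filter (fun w => w ≠ y ∧ ¬ G.Adj y w)) (by simp)
  have h2 : far G x y ⊆ univ.filter (fun w => w ≠ y ∧ ¬ G.Adj y w) := by
    intro w hw
    rw [mem_far] at hw
    simpa using hw.2
  have := S.far_empty hxy ((card_le_card h2).trans h1)
  simp [this] at hne

end Setup

/-! ### Conclusion -/

/-- A vertex outside a 12-clique could not be deleted to get an 11-colourable graph. -/
lemma iso_of_clique {V : Type*} [Fintype V] {G : SimpleGraph V} (hG : IsKCritical G 3)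
    (hχ : G.chromaticNumber = 12) {s : Finset V} (hs : G.IsClique s) (hc : 12 ≤ s.card) :
    Nonempty (G ≃g completeGraph (Fin 12)) := by
  classical
  have hall : ∀ v, v ∈ s := by
    intro v
    by_contra hv
    obtain ⟨φ, hφ⟩ := exists_vcol hG hχ v
    have hinj : Set.InjOn φ s := by
      intro p hp q hq hpq
      by_contra hne
      refine hφ p q ?_ ?_ (hs hp hq hne) hpq <;> rintro rfl
      · exact hv hp
      · exact hv hq
    have := card_le_card_of_injOn φ (t := univ) (fun _ _ => mem_univ _) hinj
    simp at this
    omega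
  have htop : G = ⊤ := by
    ext a b
    simp only [top_adj]
    exact ⟨fun h => h.ne, fun h => hs (hall a) (hall b) h⟩
  have hcard : Fintype.card V = 12 := by
    rw [htop, chromaticNumber_top] at hχ
    exact_mod_cast hχ
  subst htop
  exact ⟨Iso.completeGraph (Fintype.equivFinOfCardEq hcard)⟩

end TriangleCritical

theorem stmt2 {V : Type*} [Fintype V] (G : SimpleGraph V)
    (hG : IsKCritical G 3) (hcf : ClawFree G)
    (hχ : G.chromaticNumber = 12) :
    Nonempty (G ≃g completeGraph (Fin 12)) := by
  classical
  by_cases h : ∃ s : Finset V, G.IsClique s ∧ 12 ≤ s.card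
  · obtain ⟨s, hs, hc⟩ := h
    exact TriangleCritical.iso_of_clique hG hχ hs hc
  · push Not at h
    have S : TriangleCritical.Setup G :=
      ⟨hcf, TriangleCritical.min_deg hG hχ, TriangleCritical.exists_tcol hG hχ,
        fun s hs => Nat.lt_succ_iff.1 (h s hs)⟩
    obtain ⟨s, hs⟩ := hG.1
    obtain ⟨x, -⟩ : s.Nonempty := Finset.card_pos.1 (by rw [hs.card_eq]; norm_num)
    exact (S.not_nonempty x).elim
end

section
/- Let ℓ ≥ 2 be an integer. Every graph G containing K_ℓ as a subgraph and having the property that χ(G − V(L)) = χ(G) − ℓ for every copy L of K_ℓ in G contains an induced subgraph G' that is K_ℓ-critical and satisfies χ(G') = χ(G). -/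
/-!
Let `U` be a minimal vertex set with `χ(G[U]) = χ(G)`; then `G[U]` is vertex-critical. Two facts
about `χ` on induced subgraphs give the rest: it is monotone in the vertex set, and adding `k`
vertices raises it by at most `k` (`chromaticNumber_induce_le_add`).

Every copy `L` of `K_ℓ` in `G` lies inside `U`: since `U` is covered by `V ∖ L` and `U ∩ L`,
`χ(G) = χ(G[U]) ≤ χ(G - L) + |U ∩ L| = χ(G) - ℓ + |U ∩ L|`, so `|U ∩ L| = ℓ`. In particular `G[U]`
contains `K_ℓ`. For a copy `L` of `K_ℓ` in `G[U]`, monotonicity gives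
`χ(G[U ∖ L]) ≤ χ(G - L) = χ(G) - ℓ`, and the second fact gives the reverse inequality.
-/

open SimpleGraph

lemma chromaticNumber_induce_mono {V : Type*} (G : SimpleGraph V) {A B : Set V} (h : A ⊆ B) :
    (G.induce A).chromaticNumber ≤ (G.induce B).chromaticNumber :=
  chromaticNumber_mono_of_hom (G.induceHomOfLE h).toHom

lemma chromaticNumber_induce_univ {V : Type*} (G : SimpleGraph V) :
    (G.induce (Set.univ : Set V)).chromaticNumber = G.chromaticNumber :=
  le_antisymm (chromaticNumber_mono_of_hom (induceUnivIso G).toHom)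
    (chromaticNumber_mono_of_hom (induceUnivIso G).symm.toHom)

lemma chromaticNumber_induce_induce {V : Type*} (G : SimpleGraph V) (U : Set V) (T : Set U) :
    ((G.induce U).induce T).chromaticNumber =
      (G.induce (Subtype.val '' T)).chromaticNumber := by
  apply le_antisymm
  · exact chromaticNumber_mono_of_hom
      (⟨fun x => ⟨x.1.1, x.1, x.2, rfl⟩, fun h => h⟩ :
        (G.induce U).induce T →g G.induce (Subtype.val '' T))
  · have key : ∀ x : (Subtype.val '' T : Set V), ∃ h : x.1 ∈ U, (⟨x.1, h⟩ : U) ∈ T := by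
      rintro ⟨_, y, hy, rfl⟩
      exact ⟨y.2, hy⟩
    exact chromaticNumber_mono_of_hom
      (⟨fun x => ⟨⟨x.1, (key x).1⟩, (key x).2⟩, fun h => h⟩ :
        G.induce (Subtype.val '' T) →g (G.induce U).induce T)

lemma chromaticNumber_induce_ne_top {V : Type*} [Finite V] (G : SimpleGraph V) (A : Set V) :
    (G.induce A).chromaticNumber ≠ ⊤ := by
  have := Fintype.ofFinite A
  exact chromaticNumber_ne_top_iff_exists.2 ⟨_, (G.induce A).selfColoring.colorable⟩

/-- Adding the vertices of `s` raises the chromatic number by at most `|s|`: each of them can be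
given a colour of its own. -/
lemma chromaticNumber_induce_le_add {V : Type*} [Finite V] (G : SimpleGraph V) {A B : Set V}
    (s : Finset V) (h : A ⊆ B ∪ s) :
    (G.induce A).chromaticNumber ≤ (G.induce B).chromaticNumber + (s.card : ℕ∞) := by
  classical
  obtain ⟨n, hn⟩ : ∃ n : ℕ, (G.induce B).chromaticNumber = n := by
    exact ⟨_, (ENat.natCast_toNat (chromaticNumber_induce_ne_top G B)).symm⟩
  obtain ⟨c⟩ := chromaticNumber_le_iff_colorable.1 hn.le
  have hmem : ∀ x : A, x.1 ∉ s → x.1 ∈ B := fun x hx =>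
    (h x.2).resolve_right (by simpa using hx)
  let C : (G.induce A).Coloring (Fin n ⊕ s) := Coloring.mk
    (fun x => if hx : x.1 ∈ s then Sum.inr ⟨x.1, hx⟩ else Sum.inl (c ⟨x.1, hmem x hx⟩)) (by
      intro x y hxy
      have hG : G.Adj x.1 y.1 := hxy
      by_cases hx : x.1 ∈ s <;> by_cases hy : y.1 ∈ s
      · simpa [hx, hy] using hG.ne
      · simp [hx, hy]
      · simp [hx, hy]
      · have := c.valid (v := ⟨x.1, hmem x hx⟩) (w := ⟨y.1, hmem y hy⟩) hG
        simpa [hx, hy] using this)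
  have hC := C.colorable.chromaticNumber_le
  rw [hn]
  simpa using hC

theorem stmt3 {V : Type*} [Fintype V] (ℓ : ℕ) (hℓ : 2 ≤ ℓ)
    (G : SimpleGraph V) (hKℓ : ∃ s : Finset V, G.IsNClique ℓ s)
    (hdel : ∀ s : Finset V, G.IsNClique ℓ s →
      (G.induce ((↑s : Set V)ᶜ)).chromaticNumber + (ℓ : ℕ∞) = G.chromaticNumber) :
    ∃ U : Set V, IsKCritical (G.induce U) ℓ ∧
      (G.induce U).chromaticNumber = G.chromaticNumber := by
  classical
  obtain ⟨U, hU⟩ := (Set.toFinite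
    {U : Set V | (G.induce U).chromaticNumber = G.chromaticNumber}).exists_minimal
    ⟨Set.univ, chromaticNumber_induce_univ G⟩
  have hχ : (G.induce U).chromaticNumber = G.chromaticNumber := hU.prop
  refine ⟨U, ⟨?_, ?_, ?_⟩, hχ⟩
  · obtain ⟨s, hs⟩ := hKℓ
    have h1 := chromaticNumber_induce_le_add G (A := U) (B := (↑s : Set V)ᶜ)
      (s.filter (· ∈ U)) (by intro x hx; by_cases x ∈ s <;> simp_all)
    rw [hχ, ← hdel s hs] at h1
    have h2 : ℓ ≤ (s.filter (· ∈ U)).card := by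
      exact_mod_cast (ENat.add_le_add_iff_left (chromaticNumber_induce_ne_top G _)).1 h1
    have h3 : s.filter (· ∈ U) = s :=
      Finset.eq_of_subset_of_card_le (Finset.filter_subset _ _) (hs.card_eq ▸ h2)
    refine ⟨s.subtype (· ∈ U), ?_, ?_⟩
    · intro x hx y hy hxy
      exact hs.isClique (by simpa using hx) (by simpa using hy) (fun h => hxy (Subtype.ext h))
    · rw [Finset.card_subtype, h3, hs.card_eq]
  · intro v
    rw [chromaticNumber_induce_induce]
    have hsub : (Subtype.val '' ({v}ᶜ : Set U)) ⊆ U := by rintro _ ⟨y, -, rfl⟩; exact y.2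
    apply le_antisymm
    · refine Order.add_one_le_of_lt (lt_of_le_of_ne (chromaticNumber_induce_mono G hsub) ?_)
      intro h
      obtain ⟨y, hy, hyv⟩ := hU.le_of_le (h.trans hχ) hsub v.2
      exact hy (Subtype.ext hyv)
    · have := chromaticNumber_induce_le_add G (A := U) (B := Subtype.val '' ({v}ᶜ : Set U))
        {v.1} (by intro x hx; by_cases hxv : x = v.1 <;> simp_all)
      simpa using this
  · intro s hs
    have ht : G.IsNClique ℓ (s.map (Function.Embedding.subtype _)) := by
      refine ⟨?_, by rw [Finset.card_map, hs.card_eq]⟩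
      intro x hx y hy hxy
      simp only [Finset.coe_map, Set.mem_image] at hx hy
      obtain ⟨x, hx, rfl⟩ := hx
      obtain ⟨y, hy, rfl⟩ := hy
      exact hs.isClique hx hy (fun h => hxy (h ▸ rfl))
    rw [chromaticNumber_induce_induce]
    apply le_antisymm
    · rw [hχ, ← hdel _ ht]
      gcongr
      apply chromaticNumber_induce_mono
      rintro _ ⟨y, hy, rfl⟩
      simpa using hy
    · have := chromaticNumber_induce_le_add G (A := U)
        (B := Subtype.val '' ((↑s : Set U)ᶜ)) (s.map (Function.Embedding.subtype _)) (by
          intro x hx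
          by_cases hxs : (⟨x, hx⟩ : U) ∈ s
          · right; simpa using ⟨hx, hxs⟩
          · left; exact ⟨⟨x, hx⟩, by simpa using hxs, rfl⟩)
      rwa [Finset.card_map, hs.card_eq] at this
end

section
/- Let ℓ ≥ 2, let G be a K_ℓ-critical graph with χ(G) = k, and let L be a copy of K_ℓ in G. Then for every proper (k − ℓ)-coloring φ of G − V(L) and every color i among the k − ℓ colors, the color class φ⁻¹(i) intersects the common neighborhood N(L). -/
/-!
If no vertex of the color class `i` were adjacent to the whole clique `s`, that class could be
dissolved: each of its vertices `v` has a non-neighbour `g v ∈ s`, and `v` receives the color of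
`g v`. Giving the clique its own `ℓ` colors and keeping the `k - ℓ - 1` colors other than `i`
elsewhere yields a proper coloring of `G` with `k - 1` colors: the class of `u ∈ s` consists of
`u` and an independent set of non-neighbours of `u`. This contradicts `χ(G) = k`.
-/

open SimpleGraph

theorem stmt5 {V : Type*} [Fintype V] (ℓ k : ℕ) (hℓ : 2 ≤ ℓ)
    (G : SimpleGraph V) (hG : IsKCritical G ℓ)
    (hk : G.chromaticNumber = (k : ℕ∞))
    (s : Finset V) (hs : G.IsNClique ℓ s)
    (φ : (G.induce ((↑s : Set V)ᶜ)).Coloring (Fin (k - ℓ)))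
    (i : Fin (k - ℓ)) :
    ∃ v : ((↑s : Set V)ᶜ : Set V), φ v = i ∧ ∀ u ∈ s, G.Adj u (v : V) := by
  classical
  by_contra hcon
  push Not at hcon
  -- `g v` is a non-neighbour of `v` in the clique, for `v` of color `i`
  choose g hgs hgn using hcon
  let f : V → (↥s ⊕ {j : Fin (k - ℓ) // j ≠ i}) := fun x =>
    if hx : x ∈ s then Sum.inl ⟨x, hx⟩
    else if h : φ ⟨x, by simpa using hx⟩ = i then Sum.inl ⟨g _ h, hgs _ h⟩
    else Sum.inr ⟨_, h⟩
  have hf : ∀ {x y : V}, G.Adj x y → f x ≠ f y := by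
    intro x y hxy heq
    -- two adjacent vertices outside the clique have different colors under `φ`
    have hφ : ∀ (hx : x ∉ s) (hy : y ∉ s),
        φ ⟨x, by simpa using hx⟩ ≠ φ ⟨y, by simpa using hy⟩ :=
      fun hx hy => φ.valid (by simpa using hxy)
    by_cases hx : x ∈ s <;> by_cases hy : y ∈ s
    · simp only [f, hx, hy, dite_true, Sum.inl.injEq, Subtype.mk.injEq] at heq
      exact hxy.ne heq
    · by_cases h : φ ⟨y, by simpa using hy⟩ = i
      · simp only [f, hx, hy, h, dite_true, dite_false, Sum.inl.injEq, Subtype.mk.injEq] at heq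
        exact hgn _ h (heq ▸ hxy)
      · simp [f, hx, hy, h] at heq
    · by_cases h : φ ⟨x, by simpa using hx⟩ = i
      · simp only [f, hx, hy, h, dite_true, dite_false, Sum.inl.injEq, Subtype.mk.injEq] at heq
        exact hgn _ h (heq ▸ hxy.symm)
      · simp [f, hx, hy, h] at heq
    · have hne := hφ hx hy
      by_cases h : φ ⟨x, by simpa using hx⟩ = i <;> by_cases h' : φ ⟨y, by simpa using hy⟩ = i
      · exact hne (h.trans h'.symm)
      · simp [f, hx, hy, h, h'] at heq
      · simp [f, hx, hy, h, h'] at heq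
      · simp only [f, hx, hy, h, h', dite_false, Sum.inr.injEq, Subtype.mk.injEq] at heq
        exact hne heq
  have hcol := (Coloring.mk f hf).colorable
  have hle := hcol.chromaticNumber_le
  rw [hk, Nat.cast_le] at hle
  have hcard : Fintype.card (↥s ⊕ {j : Fin (k - ℓ) // j ≠ i}) = ℓ + (k - ℓ - 1) := by
    simp [Fintype.card_subtype_compl, hs.card_eq]
  -- `k - ℓ` is positive because `i : Fin (k - ℓ)` exists
  have hpos := i.pos
  omega
end

section
/- Let ℓ ≥ 2 and let G be a K_ℓ-critical graph with χ(G) = k. If G contains K_{k − ℓ + 1} as a subgraph, then G ≅ K_k. -/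
/-!
Fix a copy `L` of `K_ℓ` and a colouring of `G - L` with `n = k - ℓ` colours. Every colour class
contains a common neighbour of `L`: otherwise each vertex of the class could take over the colour
of a non-neighbour in `L`, which saves a colour (`exists_common_neighbor`).

Let `T` be the given clique on `n + 1` vertices. Every copy of `K_ℓ` meets `T`, since `T` does not
fit into the `n`-colourable graph `G - L`. Choose a common neighbour `d i` of `L` in each colour
class. If some `d i` lies outside `T`, exchanging a vertex of `L ∩ T` for `d i` gives a copy of
`K_ℓ` meeting `T` in fewer vertices, so this can happen only finitely often. Otherwise all `d i` lie
in the clique `T`, and `L` together with the `d i` is a clique on `k` vertices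
(`exists_clique_of_inter`). By vertex-criticality a `k`-clique is all of `G`.
-/

open SimpleGraph

/-- Let `L` have `ℓ` vertices. If `G - L` is coloured with `n` colours and `G` has no colouring with `n + ℓ - 1` colours, then
every colour class contains a common neighbour of `L`. -/
lemma exists_common_neighbor {V : Type*} {G : SimpleGraph V} {ℓ n : ℕ} {L : Finset V}
    (hcard : L.card = ℓ) (c : (G.induce ((↑L : Set V)ᶜ)).Coloring (Fin n))
    (hnc : ¬ G.Colorable (n + ℓ - 1)) (i : Fin n) :
    ∃ d : ((↑L : Set V)ᶜ : Set V), c d = i ∧ ∀ x ∈ L, G.Adj d x := by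
  classical
  by_contra! hcon
  choose f hfL hf using hcon
  apply hnc
  let col : V → {j : Fin n // j ≠ i} ⊕ L := fun v =>
    if hv : v ∈ L then Sum.inr ⟨v, hv⟩
    else if hc : c ⟨v, by simpa using hv⟩ = i then
      Sum.inr ⟨f ⟨v, by simpa using hv⟩ hc, hfL _ hc⟩
    else Sum.inl ⟨c ⟨v, by simpa using hv⟩, hc⟩
  have hvalid : ∀ {v w : V}, G.Adj v w → col v ≠ col w := by
    intro v w hvw heq
    have hne := hvw.ne
    by_cases hv : v ∈ L <;> by_cases hw : w ∈ L
    · simp [col, hv, hw, hne] at heq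
    · by_cases hc : c ⟨w, by simpa using hw⟩ = i
      · have := hf _ hc
        simp only [col, hv, hw, hc, dite_true, dite_false, Sum.inr.injEq, Subtype.mk.injEq] at heq
        rw [← heq] at this
        exact this hvw.symm
      · simp [col, hv, hw, hc] at heq
    · by_cases hc : c ⟨v, by simpa using hv⟩ = i
      · have := hf _ hc
        simp only [col, hv, hw, hc, dite_true, dite_false, Sum.inr.injEq, Subtype.mk.injEq] at heq
        rw [heq] at this
        exact this hvw
      · simp [col, hv, hw, hc] at heq
    · have hadj : (G.induce ((↑L : Set V)ᶜ)).Adj ⟨v, by simpa using hv⟩ ⟨w, by simpa using hw⟩ := hvw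
      have hcc := c.valid hadj
      by_cases hc : c ⟨v, by simpa using hv⟩ = i <;> by_cases hc' : c ⟨w, by simpa using hw⟩ = i
      · exact hcc (hc.trans hc'.symm)
      · simp [col, hv, hw, hc, hc'] at heq
      · simp [col, hv, hw, hc, hc'] at heq
      · simp only [col, hv, hw, hc, hc', dite_false, Sum.inl.injEq, Subtype.mk.injEq] at heq
        exact hcc heq
  have hC := (Coloring.mk col hvalid).colorable
  have hpos : 0 < n := i.pos
  have hle : Fintype.card ({j : Fin n // j ≠ i} ⊕ L) = n + ℓ - 1 := by
    simp [Fintype.card_subtype_compl, hcard]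
    omega
  rwa [hle] at hC

/-- The exchange argument, by induction on the size of `L ∩ T`. -/
lemma exists_clique_of_inter {V : Type*} {G : SimpleGraph V} {ℓ n : ℕ}
    (hnc : ¬ G.Colorable (n + ℓ - 1))
    (hcol : ∀ s : Finset V, G.IsNClique ℓ s → (G.induce ((↑s : Set V)ᶜ)).Colorable n)
    {T : Finset V} (hT : G.IsNClique (n + 1) T) [DecidableEq V] (m : ℕ) :
    ∀ L : Finset V, G.IsNClique ℓ L → (L ∩ T).card = m → ∃ S, G.IsNClique (n + ℓ) S := by
  induction m using Nat.strong_induction_on with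
  | _ m ih =>
  intro L hL hm
  obtain ⟨c⟩ := hcol L hL
  choose d hdc hd using exists_common_neighbor hL.card_eq c hnc
  have hdL : ∀ i, (d i : V) ∉ L := fun i => (d i).2
  by_cases hdT : ∀ i, (d i : V) ∈ T
  · have hinj : Function.Injective fun i => (d i : V) := by
      intro i j hij
      rw [← hdc i, ← hdc j, Subtype.ext hij]
    refine ⟨L ∪ Finset.univ.image fun i => (d i : V), ?_, ?_⟩
    · intro x hx y hy hxy
      simp only [Finset.coe_union, Finset.coe_image, Finset.coe_univ, Set.image_univ,
        Set.mem_union, Set.mem_range, Finset.mem_coe] at hx hy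
      rcases hx with hx | ⟨i, rfl⟩ <;> rcases hy with hy | ⟨j, rfl⟩
      · exact hL.1 hx hy hxy
      · exact (hd j x hx).symm
      · exact hd i y hy
      · exact hT.1 (hdT i) (hdT j) hxy
    · rw [Finset.card_union_of_disjoint, Finset.card_image_of_injective _ hinj, hL.card_eq]
      · simp [add_comm]
      · rw [Finset.disjoint_right]
        simp only [Finset.mem_image, Finset.mem_univ, true_and]
        rintro _ ⟨i, rfl⟩
        exact hdL i
  · push Not at hdT
    obtain ⟨i, hi⟩ := hdT
    -- `T` has `n + 1` vertices, so two of them would share a colour if `T` avoided `L`.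
    obtain ⟨v, hvL, hvT⟩ : ∃ v ∈ L, v ∈ T := by
      by_contra! hcon
      have hmem : ∀ t : T, (t : V) ∈ ((↑L : Set V)ᶜ : Set V) := fun t ht => hcon t ht t.2
      obtain ⟨a, b, hab, hc⟩ := Fintype.exists_ne_map_eq_of_card_lt
        (fun t : T => c ⟨t, hmem t⟩) (by simp [hT.card_eq])
      refine c.valid (v := ⟨a, hmem a⟩) (w := ⟨b, hmem b⟩) ?_ hc
      exact hT.1 a.2 b.2 fun h => hab (Subtype.ext h)
    have hLpos : 0 < L.card := Finset.card_pos.2 ⟨v, hvL⟩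
    refine ih _ ?_ (insert (d i : V) (L.erase v)) ⟨?_, ?_⟩ rfl
    · rw [← hm]
      apply Finset.card_lt_card
      rw [Finset.ssubset_iff_of_subset]
      · refine ⟨v, by simp [hvL, hvT], ?_⟩
        have : v ≠ d i := fun h => hdL i (h ▸ hvL)
        simp [this]
      · intro x hx
        simp only [Finset.mem_inter, Finset.mem_insert, Finset.mem_erase] at hx ⊢
        rcases hx with ⟨rfl | hx, hxT⟩
        · exact absurd hxT hi
        · exact ⟨hx.2, hxT⟩
    · rw [Finset.coe_insert, isClique_insert]
      refine ⟨hL.1.subset (by simp), fun b hb _ => hd i b ?_⟩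
      exact Finset.mem_of_mem_erase hb
    · rw [Finset.card_insert_of_notMem fun h => hdL i (Finset.mem_of_mem_erase h),
        Finset.card_erase_of_mem hvL, ← hL.card_eq]
      omega

theorem stmt6 {V : Type*} [Fintype V] (ℓ k : ℕ) (hℓ : 2 ≤ ℓ)
    (G : SimpleGraph V) (hG : IsKCritical G ℓ)
    (hk : G.chromaticNumber = (k : ℕ∞))
    (hbig : ∃ t : Finset V, G.IsNClique (k - ℓ + 1) t) :
    Nonempty (G ≃g completeGraph (Fin k)) := by
  classical
  obtain ⟨⟨L, hL⟩, hv, hs⟩ := hG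
  obtain ⟨T, hT⟩ := hbig
  have hℓk : ℓ ≤ k := by
    have h := hs L hL
    rw [hk] at h
    exact_mod_cast (h ▸ le_add_self : (ℓ : ℕ∞) ≤ k)
  have hnc : ¬ G.Colorable (k - ℓ + ℓ - 1) := by
    intro h
    have := h.chromaticNumber_le
    rw [hk] at this
    have : k ≤ k - ℓ + ℓ - 1 := by exact_mod_cast this
    omega
  have hcol : ∀ s : Finset V, G.IsNClique ℓ s →
      (G.induce ((↑s : Set V)ᶜ)).Colorable (k - ℓ) := by
    intro s hsL
    have h := hs s hsL
    rw [hk] at h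
    rw [← chromaticNumber_le_iff_colorable]
    have h2 : ((k - ℓ : ℕ) : ℕ∞) + ℓ = k := by
      exact_mod_cast Nat.sub_add_cancel hℓk
    rw [← h2] at h
    exact (WithTop.add_right_cancel (ENat.natCast_ne_top ℓ) h).le
  obtain ⟨S, hS⟩ := exists_clique_of_inter hnc hcol hT _ L hL rfl
  rw [Nat.sub_add_cancel hℓk] at hS
  have hall : ∀ v, v ∈ S := by
    intro v
    by_contra hvS
    have h := hv v
    -- The clique `S` survives the deletion of `v`, so `G - v` still needs `k` colours.
    have hle : (k : ℕ∞) ≤ (G.induce ({v}ᶜ : Set V)).chromaticNumber := by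
      rw [le_chromaticNumber_iff_colorable]
      rintro m ⟨c⟩
      have hmem : ∀ t : S, (t : V) ∈ ({v}ᶜ : Set V) := by
        rintro ⟨t, ht⟩ rfl
        exact hvS ht
      have := Fintype.card_le_of_injective (fun t : S => c ⟨t, hmem t⟩) (by
        intro a b hab
        by_contra hne
        refine c.valid (v := ⟨a, hmem a⟩) (w := ⟨b, hmem b⟩) ?_ hab
        exact hS.1 a.2 b.2 fun h => hne (Subtype.ext h))
      simpa [hS.card_eq] using this
    rw [hk] at h
    have h3 : (k : ℕ∞) + 1 ≤ k := h ▸ add_le_add_left hle 1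
    have : k + 1 ≤ k := by exact_mod_cast h3
    omega
  have hcard : Fintype.card V = k := by
    rw [← hS.card_eq, ← Finset.card_univ, (Finset.eq_univ_iff_forall.2 hall)]
  refine ⟨⟨Fintype.equivFinOfCardEq hcard, ?_⟩⟩
  intro a b
  simp only [completeGraph, top_adj, ne_eq, EmbeddingLike.apply_eq_iff_eq]
  exact ⟨fun h => hS.1 (hall a) (hall b) h, fun h => h.ne⟩
end

section
/- Let ℓ ≥ 2, let G be a K_ℓ-critical graph with χ(G) = k, let L be a copy of K_ℓ in G, and let φ be a proper (k − ℓ)-coloring of G − V(L). Then for any nonempty sequence j_1, j_2, …, j_t of pairwise distinct colors from the k − ℓ colors, and any two distinct vertices x, y ∈ V(L), there is a path in G on t + 2 vertices starting at x and ending at y whose (i+1)-th vertex v lies in G − V(L) and satisfies φ(v) = j_i for each 1 ≤ i ≤ t. -/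
/-!
The clique `s` and its complement are coloured together, in `k` colours, by giving each vertex of
`s` a private colour. Every `k`-colouring `ψ` of a `k`-chromatic graph has the following property:
for distinct colours `q 0, …, q n` there is a walk whose successive vertices have these colours.
Indeed, call `v` *reached* at step `i` if it ends such a walk through `q 0, …, q i`. If nothing is
reached at step `n`, recolour every vertex reached at step `i` with `q (i + 1)`; this is again a
proper colouring, and it no longer uses `q 0` (`colorable_ne_of_no_walk`), so the graph would be
`(k - 1)`-colourable. Applied to the sequence
(private colour of `x`), `j 0, …, j (t - 1)`, (private colour of `y`), this gives the path.
-/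

open SimpleGraph

/-- `v` ends a walk of length `i` whose successive vertices are coloured `q 0, …, q i` by `ψ`. -/
def ReachedAt {V C : Type*} {G : SimpleGraph V} (ψ : G.Coloring C) (q : ℕ → C)
    (i : ℕ) (v : V) : Prop :=
  ∃ (u : V) (p : G.Walk u v), p.length = i ∧ ∀ m ≤ i, ψ (p.getVert m) = q m

namespace ReachedAt

variable {V C : Type*} {G : SimpleGraph V} {ψ : G.Coloring C} {q : ℕ → C} {i : ℕ} {u v : V}

lemma color (h : ReachedAt ψ q i v) : ψ v = q i := by
  obtain ⟨u, p, hp, hc⟩ := h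
  have := hc i le_rfl
  rwa [← hp, p.getVert_length, hp] at this

lemma zero (h : ψ v = q 0) : ReachedAt ψ q 0 v :=
  ⟨v, .nil, rfl, fun m hm => by simpa [Nat.le_zero.1 hm] using h⟩

lemma succ (h : ReachedAt ψ q i u) (huv : G.Adj u v) (hv : ψ v = q (i + 1)) :
    ReachedAt ψ q (i + 1) v := by
  obtain ⟨w, p, hp, hc⟩ := h
  refine ⟨w, p.concat huv, by simp [hp], fun m hm => ?_⟩
  rw [SimpleGraph.Walk.concat_eq_append, SimpleGraph.Walk.getVert_append']
  split_ifs with hlt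
  · exact hc m (by omega)
  · obtain rfl : m = i + 1 := by omega
    simpa [hp] using hv

lemma lt_of_le (h : ReachedAt ψ q i v) {n : ℕ} (hn : ∀ w, ¬ ReachedAt ψ q n w) (hi : i ≤ n) :
    i < n :=
  lt_of_le_of_ne hi (by rintro rfl; exact hn v h)

end ReachedAt

open Classical in
/-- The shift recolouring: if no walk is coloured `q 0, …, q n`, moving each vertex reached at
step `i` to the colour `q (i + 1)` frees the colour `q 0`. -/
lemma colorable_ne_of_no_walk {V C : Type*} {G : SimpleGraph V} (ψ : G.Coloring C) (q : ℕ → C)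
    (n : ℕ) (hq : Set.InjOn q (Set.Iic n)) (hn : ∀ v, ¬ ReachedAt ψ q n v) :
    Nonempty (G.Coloring {c : C // c ≠ q 0}) := by
  have key : ∀ v, ∃ c, c ≠ q 0 ∧
      ((∃ i < n, ReachedAt ψ q i v ∧ c = q (i + 1)) ∨
        (∀ i ≤ n, ¬ ReachedAt ψ q i v) ∧ c = ψ v) := by
    intro v
    by_cases h : ∃ i ≤ n, ReachedAt ψ q i v
    · obtain ⟨i, hi, hr⟩ := h
      have hlt := hr.lt_of_le hn hi
      refine ⟨q (i + 1), fun he => ?_, .inl ⟨i, hlt, hr, rfl⟩⟩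
      have := hq (Set.mem_Iic.2 hlt) (Set.mem_Iic.2 (Nat.zero_le n)) he
      omega
    · push Not at h
      exact ⟨ψ v, fun he => h 0 (Nat.zero_le n) (.zero he), .inr ⟨h, rfl⟩⟩
  choose f hf0 hf using key
  refine ⟨SimpleGraph.Coloring.mk (fun v => ⟨f v, hf0 v⟩) fun {u v} huv he => ?_⟩
  replace he : f u = f v := congrArg Subtype.val he
  rcases hf u with ⟨i, hi, hu, hcu⟩ | ⟨hu, hcu⟩ <;> rcases hf v with ⟨m, hm, hv, hcv⟩ | ⟨hv, hcv⟩
  · have : i + 1 = m + 1 :=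
      hq (Set.mem_Iic.2 hi) (Set.mem_Iic.2 hm) (hcu.symm.trans (he.trans hcv))
    obtain rfl : i = m := by omega
    exact ψ.valid huv (hu.color.trans hv.color.symm)
  · exact hv (i + 1) hi (hu.succ huv (hcv.symm.trans (he.symm.trans hcu)))
  · exact hu (m + 1) hm (hv.succ huv.symm (hcu.symm.trans (he.trans hcv)))
  · exact ψ.valid huv (hcu.symm.trans (he.trans hcv))

open Classical in
/-- Extend a colouring of the complement of `s` by giving each vertex of `s` its own colour. -/
noncomputable def extendColoring {V C : Type*} {G : SimpleGraph V} (s : Finset V)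
    (φ : (G.induce ((↑s : Set V)ᶜ)).Coloring C) : G.Coloring (C ⊕ s) :=
  SimpleGraph.Coloring.mk
    (fun v => if h : v ∈ s then .inr ⟨v, h⟩ else .inl (φ ⟨v, by simpa using h⟩)) (by
      intro u v huv he
      by_cases hu : u ∈ s <;> by_cases hv : v ∈ s <;> simp only [hu, hv, dif_pos, dif_neg,
        not_false_eq_true, reduceCtorEq, Sum.inr.injEq, Sum.inl.injEq, Subtype.mk.injEq] at he
      · exact huv.ne he
      · exact φ.valid (by simpa using huv) he)

lemma extendColoring_eq_inr {V C : Type*} {G : SimpleGraph V} {s : Finset V}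
    {φ : (G.induce ((↑s : Set V)ᶜ)).Coloring C} {v : V} {a : s}
    (h : extendColoring s φ v = .inr a) : v = a := by
  by_cases hv : v ∈ s
  · simp only [extendColoring, SimpleGraph.Coloring.mk, RelHom.coeFn_mk, hv, dif_pos,
      Sum.inr.injEq] at h
    exact congrArg Subtype.val h
  · simp [extendColoring, SimpleGraph.Coloring.mk, hv] at h

lemma extendColoring_eq_inl {V C : Type*} {G : SimpleGraph V} {s : Finset V}
    {φ : (G.induce ((↑s : Set V)ᶜ)).Coloring C} {v : V} {c : C}
    (h : extendColoring s φ v = .inl c) :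
    ∃ hv : v ∈ ((↑s : Set V)ᶜ : Set V), φ ⟨v, hv⟩ = c := by
  by_cases hv : v ∈ s
  · simp [extendColoring, SimpleGraph.Coloring.mk, hv] at h
  · refine ⟨by simpa using hv, ?_⟩
    simpa [extendColoring, SimpleGraph.Coloring.mk, hv] using h

theorem stmt7 {V : Type*} [Fintype V] (ℓ k : ℕ) (hℓ : 2 ≤ ℓ)
    (G : SimpleGraph V) (hG : IsKCritical G ℓ)
    (hk : G.chromaticNumber = (k : ℕ∞))
    (s : Finset V) (hs : G.IsNClique ℓ s)
    (φ : (G.induce ((↑s : Set V)ᶜ)).Coloring (Fin (k - ℓ)))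
    (t : ℕ) (ht : 1 ≤ t) (j : Fin t → Fin (k - ℓ)) (hj : Function.Injective j)
    (x y : V) (hx : x ∈ s) (hy : y ∈ s) (hxy : x ≠ y) :
    ∃ p : G.Walk x y, p.IsPath ∧ p.length = t + 1 ∧
      ∀ i : Fin t, ∃ h : p.getVert (i.val + 1) ∈ ((↑s : Set V)ᶜ : Set V),
        φ ⟨p.getVert (i.val + 1), h⟩ = j i := by
  classical
  have hle : ℓ ≤ k := by
    have := hs.isClique.card_le_chromaticNumber
    rw [hs.card_eq, hk] at this
    exact_mod_cast this
  set ψ := extendColoring s φ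
  let q : ℕ → Fin (k - ℓ) ⊕ s := fun m =>
    if m = 0 then .inr ⟨x, hx⟩ else if h : m - 1 < t then .inl (j ⟨m - 1, h⟩) else .inr ⟨y, hy⟩
  have q0 : q 0 = .inr ⟨x, hx⟩ := by simp [q]
  have qi : ∀ i : Fin t, q (i + 1) = .inl (j i) := fun i => by simp [q]
  have ql : q (t + 1) = .inr ⟨y, hy⟩ := by simp [q]
  have hq : Set.InjOn q (Set.Iic (t + 1)) := by
    intro a ha b hb hab
    simp only [Set.mem_Iic] at ha hb
    simp only [q] at hab
    split_ifs at hab <;>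
      simp only [Sum.inr.injEq, Sum.inl.injEq, Subtype.mk.injEq, hxy, hxy.symm,
        hj.eq_iff, Fin.mk.injEq] at hab <;> omega
  -- Otherwise the colour of `x` could be freed, leaving only `k - 1` colours.
  obtain ⟨v, u, p, hp, hc⟩ : ∃ v, ReachedAt ψ q (t + 1) v := by
    by_contra! hn
    obtain ⟨χ⟩ := colorable_ne_of_no_walk ψ q (t + 1) hq hn
    have h1 := χ.colorable.chromaticNumber_le
    have h2 : Fintype.card {c : Fin (k - ℓ) ⊕ s // c ≠ q 0} = k - 1 := by
      have := Set.card_ne_eq (q 0)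
      simp_all [hs.card_eq]
    rw [hk, h2] at h1
    have h3 : k ≤ k - 1 := by exact_mod_cast h1
    omega
  obtain rfl : u = x := extendColoring_eq_inr (by simpa [q0] using hc 0 (Nat.zero_le _))
  obtain rfl : v = y := by
    have := hc (t + 1) le_rfl
    rw [← hp, p.getVert_length, hp, ql] at this
    exact extendColoring_eq_inr this
  refine ⟨p, ?_, hp, fun i => extendColoring_eq_inl ((hc _ (by omega)).trans (qi i))⟩
  rw [← SimpleGraph.Walk.IsPath.getVert_injOn_iff]
  intro a ha b hb hab
  simp only [Set.mem_ofPred_eq, hp] at ha hb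
  exact hq ha hb ((hc a ha).symm.trans ((congrArg ψ hab).trans (hc b hb)))
end

section
/- Let ℓ ≥ 2 and let G be a K_ℓ-critical graph with χ(G) = k that is not isomorphic to K_k. Then there exists a copy S of K_{ℓ+1} in G such that for every vertex x ∈ V(S) there is a copy L of K_ℓ in G with V(L) ⊄ N[x]. -/
/-!
Deleting a copy `L` of `K_ℓ` leaves a graph coloured with `k - ℓ` colours. Each colour class has a
vertex complete to `L` (`exists_complete_of_class`): otherwise the whole class could be recoloured
with colours of `L`, and `G` would be `(k - 1)`-colourable.

Suppose that every copy of `K_{ℓ+1}` contains a vertex of `D`, the set of vertices `x` whose closed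
neighbourhood contains every copy of `K_ℓ`. Choose a copy `L` of `K_ℓ` with `|L ∩ D|` minimum. If
`a ∉ L` is complete to `L`, then `a ∈ D`: otherwise `L ∪ {a}` meets `D` in some `d ∈ L`, and
`L ∪ {a} \ {d}` is a copy of `K_ℓ` meeting `D` less. A vertex of `D` is adjacent to every other
vertex lying in a copy of `K_ℓ`, so picking one vertex complete to `L` in each of the `k - ℓ`
classes extends `L` to a clique of order `k`. By vertex-criticality this clique is all of `G`
(`nonempty_iso_of_isNClique`), so `G` is isomorphic to `K_k`.
-/

open SimpleGraph

/-- If `G` has chromatic number `n + ℓ` and deleting the `ℓ`-clique `L` leaves a graph with a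
proper `n`-colouring, then each of the `n` colour classes contains a vertex complete to `L`. -/
lemma exists_complete_of_class {V : Type*} (G : SimpleGraph V) (ℓ n : ℕ)
    (hχ : G.chromaticNumber = ((n + ℓ : ℕ) : ℕ∞)) (L : Finset V) (hL : G.IsNClique ℓ L)
    (c : (G.induce ((↑L : Set V)ᶜ)).Coloring (Fin n)) (i : Fin n) :
    ∃ a : ((↑L : Set V)ᶜ : Set V), c a = i ∧ ∀ y ∈ L, G.Adj a y := by
  classical
  by_contra hcon
  have hnon : ∀ a : ((↑L : Set V)ᶜ : Set V), c a = i → ∃ y : L, ¬ G.Adj a y := by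
    intro a ha
    by_contra h
    exact hcon ⟨a, ha, fun y hy => by
      by_contra h'
      exact h ⟨⟨y, hy⟩, h'⟩⟩
  choose g hg using hnon
  -- Vertices of `L` serve as their own colours; the class `i` borrows the colour of a non-neighbour.
  let f : V → L ⊕ {j : Fin n // j ≠ i} := fun v =>
    if hv : v ∈ L then Sum.inl ⟨v, hv⟩
    else if hi : c ⟨v, hv⟩ = i then Sum.inl (g ⟨v, hv⟩ hi)
    else Sum.inr ⟨c ⟨v, hv⟩, hi⟩
  have hf : ∀ {u v : V}, G.Adj u v → f u ≠ f v := by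
    intro u v huv hfe
    have hc : ∀ (hu : u ∉ L) (hv : v ∉ L), c ⟨u, hu⟩ ≠ c ⟨v, hv⟩ :=
      fun hu hv => c.valid (by simpa using huv)
    by_cases hu : u ∈ L <;> by_cases hv : v ∈ L
    · simp only [f, hu, hv, dif_pos, Sum.inl.injEq, Subtype.mk.injEq] at hfe
      exact huv.ne hfe
    · by_cases hi : c ⟨v, hv⟩ = i
      · simp only [f, hu, hv, hi, dif_pos, dif_neg, not_false_eq_true, Sum.inl.injEq] at hfe
        have := hg ⟨v, hv⟩ hi
        rw [← hfe] at this
        exact this huv.symm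
      · simp [f, hu, hv, hi] at hfe
    · by_cases hi : c ⟨u, hu⟩ = i
      · simp only [f, hu, hv, hi, dif_pos, dif_neg, not_false_eq_true, Sum.inl.injEq] at hfe
        have := hg ⟨u, hu⟩ hi
        rw [hfe] at this
        exact this huv
      · simp [f, hu, hv, hi] at hfe
    · have := hc hu hv
      by_cases hi : c ⟨u, hu⟩ = i <;> by_cases hj : c ⟨v, hv⟩ = i
      · exact this (hi.trans hj.symm)
      · simp [f, hu, hv, hi, hj] at hfe
      · simp [f, hu, hv, hi, hj] at hfe
      · simp [f, hu, hv, hi, hj] at hfe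
        exact this hfe
  have hcol := (SimpleGraph.Coloring.mk f hf).colorable.chromaticNumber_le
  rw [hχ, Nat.cast_le] at hcol
  simp [Fintype.card_subtype_compl, hL.card_eq] at hcol
  have := i.pos
  omega

/-- A graph of chromatic number `k` in which every vertex deletion lowers the chromatic number
is `K_k` as soon as it contains `K_k`. -/
lemma nonempty_iso_of_isNClique {V : Type*} [Fintype V] (G : SimpleGraph V) (k : ℕ)
    (hk : G.chromaticNumber = (k : ℕ∞))
    (hv : ∀ v : V, (G.induce ({v}ᶜ : Set V)).chromaticNumber + 1 = G.chromaticNumber)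
    (K : Finset V) (hK : G.IsNClique k K) : Nonempty (G ≃g completeGraph (Fin k)) := by
  classical
  have hall : ∀ v, v ∈ K := by
    intro v
    by_contra hvK
    have h1 := hv v
    rw [hk] at h1
    have hcl : (G.induce ({v}ᶜ : Set V)).IsClique
        ((K.subtype (fun x => x ∈ ({v}ᶜ : Set V)) : Finset _) : Set _) := by
      intro x hx y hy hxy
      simp only [Finset.mem_coe, Finset.mem_subtype] at hx hy
      exact hK.isClique hx hy (fun h => hxy (Subtype.ext h))
    have h2 := hcl.card_le_chromaticNumber
    have hcard : (K.subtype (fun x => x ∈ ({v}ᶜ : Set V))).card = k := by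
      rw [Finset.card_subtype, Finset.filter_true_of_mem, hK.card_eq]
      rintro x hx rfl
      exact hvK hx
    rw [hcard] at h2
    have h3 : ((k + 1 : ℕ) : ℕ∞) ≤ (k : ℕ∞) := by
      rw [← h1, Nat.cast_add, Nat.cast_one]
      exact add_le_add_left h2 1
    rw [Nat.cast_le] at h3
    omega
  have hcard : Fintype.card V = k := by
    rw [← hK.card_eq, ← Finset.card_univ]
    congr 1
    ext v
    simp [hall v]
  let e := Fintype.equivFinOfCardEq hcard
  refine ⟨⟨e, ?_⟩⟩
  intro a b
  simp only [completeGraph, top_adj, ne_eq, EmbeddingLike.apply_eq_iff_eq]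
  exact ⟨fun h => hK.isClique (hall a) (hall b) h, fun h => h.ne⟩

theorem stmt8 {V : Type*} [Fintype V] (ℓ k : ℕ) (hℓ : 2 ≤ ℓ)
    (G : SimpleGraph V) (hG : IsKCritical G ℓ)
    (hk : G.chromaticNumber = (k : ℕ∞))
    (hnc : IsEmpty (G ≃g completeGraph (Fin k))) :
    ∃ S : Finset V, G.IsNClique (ℓ + 1) S ∧
      ∀ x ∈ S, ∃ L : Finset V, G.IsNClique ℓ L ∧
        ¬ ((↑L : Set V) ⊆ insert x (G.neighborSet x)) := by
  classical
  obtain ⟨⟨L₀, hL₀⟩, hvc, hLc⟩ := hG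
  by_contra hcon
  let D : Finset V := Finset.univ.filter fun x =>
    ∀ L : Finset V, G.IsNClique ℓ L → (↑L : Set V) ⊆ insert x (G.neighborSet x)
  have hD : ∀ S : Finset V, G.IsNClique (ℓ + 1) S → ∃ x ∈ S, x ∈ D := by
    intro S hS
    by_contra h
    refine hcon ⟨S, hS, fun x hx => ?_⟩
    by_contra h'
    refine h ⟨x, hx, ?_⟩
    simp only [D, Finset.mem_filter, Finset.mem_univ, true_and]
    intro L hL
    by_contra h''
    exact h' ⟨L, hL, h''⟩
  obtain ⟨L, hLmem, hmin⟩ := Finset.exists_min_image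
    (Finset.univ.filter fun L : Finset V => G.IsNClique ℓ L) (fun L => (L ∩ D).card)
    ⟨L₀, by simpa using hL₀⟩
  simp only [Finset.mem_filter, Finset.mem_univ, true_and] at hLmem hmin
  have hins : ∀ a, (∀ y ∈ L, G.Adj a y) → G.IsNClique (ℓ + 1) (insert a L) :=
    fun a ha => hLmem.insert ha
  have hnot : ∀ a, (∀ y ∈ L, G.Adj a y) → a ∉ L := fun a ha h => G.loopless.irrefl a (ha a h)
  have hswap : ∀ a, (∀ y ∈ L, G.Adj a y) → ∀ d ∈ L, G.IsNClique ℓ ((insert a L).erase d) := by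
    intro a ha d hd
    have := (hins a ha).erase_of_mem (Finset.mem_insert_of_mem hd)
    simpa using this
  have hextD : ∀ a, (∀ y ∈ L, G.Adj a y) → a ∈ D := by
    intro a ha
    by_contra haD
    obtain ⟨d, hdS, hdD⟩ := hD _ (hins a ha)
    have hdL : d ∈ L := by
      rcases Finset.mem_insert.1 hdS with rfl | h
      · exact absurd hdD haD
      · exact h
    have h1 := hmin _ (hswap a ha d hdL)
    have h2 : ((insert a L).erase d ∩ D).card < (L ∩ D).card := by
      apply Finset.card_lt_card
      rw [Finset.ssubset_iff_of_subset]
      · exact ⟨d, by simp [hdL, hdD], by simp⟩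
      · intro x hx
        simp only [Finset.mem_inter, Finset.mem_erase, Finset.mem_insert] at hx ⊢
        obtain ⟨⟨_, rfl | h⟩, hxD⟩ := hx
        · exact absurd hxD haD
        · exact ⟨h, hxD⟩
    omega
  have hadj : ∀ a b, (∀ y ∈ L, G.Adj a y) → (∀ y ∈ L, G.Adj b y) → a ≠ b → G.Adj a b := by
    intro a b ha hb hab
    have haD := hextD a ha
    simp only [D, Finset.mem_filter, Finset.mem_univ, true_and] at haD
    -- `b` lies in a copy of `K_ℓ`, obtained from `L ∪ {b}` by dropping a vertex of `L`.
    obtain ⟨d, hd⟩ : L.Nonempty := by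
      rw [← Finset.card_pos, hLmem.card_eq]
      omega
    have hbm : b ∈ (insert b L).erase d := by
      simp only [Finset.mem_erase, Finset.mem_insert, true_or, and_true]
      rintro rfl
      exact hnot _ hb hd
    rcases haD _ (hswap b hb d hd) hbm with h | h
    · exact absurd h.symm hab
    · exact h
  have hχ := hLc L hLmem
  rw [hk] at hχ
  obtain ⟨n, hn⟩ : ∃ n : ℕ, (G.induce ((↑L : Set V)ᶜ)).chromaticNumber = n := by
    apply ENat.ne_top_iff_exists.1 _ |>.imp fun _ h => h.symm
    intro h
    rw [h, top_add] at hχ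
    exact ENat.top_ne_natCast k hχ
  have hnk : n + ℓ = k := by
    rw [hn] at hχ
    exact_mod_cast hχ
  obtain ⟨c⟩ := SimpleGraph.chromaticNumber_le_iff_colorable.1 hn.le
  choose a hac haL using exists_complete_of_class G ℓ n (by rw [hk, hnk]) L hLmem c
  have hinj : Function.Injective fun i => (a i : V) := by
    intro i j hij
    rw [← hac i, ← hac j, Subtype.ext hij]
  have hK : G.IsNClique k (L ∪ Finset.univ.image fun i => (a i : V)) := by
    refine ⟨?_, ?_⟩
    · intro x hx y hy hxy
      simp only [Finset.coe_union, Finset.coe_image, Finset.coe_univ, Set.image_univ,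
        Set.mem_union, Finset.mem_coe, Set.mem_range] at hx hy
      rcases hx with hx | ⟨i, rfl⟩ <;> rcases hy with hy | ⟨j, rfl⟩
      · exact hLmem.isClique hx hy hxy
      · exact (haL j x hx).symm
      · exact haL i y hy
      · exact hadj _ _ (haL i) (haL j) hxy
    · rw [Finset.card_union_of_disjoint, Finset.card_image_of_injective _ hinj, hLmem.card_eq,
        Finset.card_univ, Fintype.card_fin]
      · omega
      · rw [Finset.disjoint_right]
        intro x hx
        obtain ⟨i, _, rfl⟩ := Finset.mem_image.1 hx
        exact hnot _ (haL i)
  exact not_isEmpty_iff.2 (nonempty_iso_of_isNClique G k hk hvc _ hK) hnc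
end

section
/- Let ℓ ≥ 2, let G be a K_ℓ-critical graph with χ(G) = k, and let x be a vertex of G such that there is a copy L of K_ℓ in G with V(L) ⊄ N[x]. Then N(L) ⊄ N(x); in particular, since x ∉ N(L), also N(L) ⊄ N[x]. -/
/-!
Colour `G - L` with `k - ℓ` colours. Every colour class meets the common neighborhood `N(L)`:
otherwise each vertex of that class has a non-neighbor in `L`, so the class can be absorbed into
the singletons of `L`, giving a `(k - 1)`-colouring of `G` (`exists_commonNeighbor_same_color`).
Since `V(L) ⊄ N[x]`, the vertex `x` lies outside `L`; a vertex of `N(L)` in the colour class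
of `x` is not adjacent to `x`, whence `N(L) ⊄ N(x)`.
-/

open SimpleGraph

/-- If a colouring of `G - L` with `m` colours is optimal in the sense that `m + |L|` does not exceed
`χ(G)`, then each nonempty colour class contains a common neighbor of `L`. -/
lemma exists_commonNeighbor_same_color {V : Type*} (G : SimpleGraph V) (L : Finset V) (m : ℕ)
    (hχ : ((m + L.card : ℕ) : ℕ∞) ≤ G.chromaticNumber)
    (C : (G.induce ((↑L : Set V)ᶜ)).Coloring (Fin m)) (x : ((↑L : Set V)ᶜ : Set V)) :
    ∃ v : ((↑L : Set V)ᶜ : Set V), C v = C x ∧ ∀ u ∈ L, G.Adj u v := by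
  classical
  by_contra! h
  choose! f hfL hf using h
  -- Vertices in the class of `x` take the colour of a non-neighbor in `L`; others keep theirs.
  let D : V → {c : Fin m // c ≠ C x} ⊕ L := fun v =>
    if hv : v ∈ L then .inr ⟨v, hv⟩
    else if hc : C ⟨v, by simpa using hv⟩ = C x then .inr ⟨_, hfL _ hc⟩
    else .inl ⟨_, hc⟩
  have hD : ∀ v w, G.Adj v w → D v ≠ D w := by
    intro v w hvw heq
    have key : ∀ (hv : v ∉ L) (hw : w ∉ L),
        C ⟨v, by simpa using hv⟩ ≠ C ⟨w, by simpa using hw⟩ :=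
      fun hv hw => C.valid (by simpa using hvw)
    simp only [D] at heq
    split_ifs at heq with h1 h2 h3 h4 h5 h6 h7
    · simp only [Sum.inr.injEq, Subtype.mk.injEq] at heq
      exact hvw.ne heq
    · simp only [Sum.inr.injEq, Subtype.mk.injEq] at heq
      exact hf _ h3 (heq ▸ hvw)
    · simp only [Sum.inr.injEq, Subtype.mk.injEq] at heq
      exact hf _ h4 (heq ▸ hvw.symm)
    · exact key h1 ‹_› (h4.trans (Eq.symm ‹_›))
    · simp only [Sum.inl.injEq, Subtype.mk.injEq] at heq
      exact key h1 ‹_› heq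
  have hcol := (Coloring.mk D fun {v w} hvw => hD v w hvw).colorable
  have hle := hχ.trans hcol.chromaticNumber_le
  rw [Nat.cast_le, Fintype.card_sum, Fintype.card_coe] at hle
  have hcard : Fintype.card {c : Fin m // c ≠ C x} < m := by
    simpa using Fintype.card_subtype_lt (p := fun c : Fin m => c ≠ C x) (x := C x) (by simp)
  omega

theorem stmt9 {V : Type*} [Fintype V] (ℓ k : ℕ) (hℓ : 2 ≤ ℓ)
    (G : SimpleGraph V) (hG : IsKCritical G ℓ)
    (hk : G.chromaticNumber = (k : ℕ∞))
    (x : V) (L : Finset V) (hL : G.IsNClique ℓ L)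
    (hnot : ¬ ((↑L : Set V) ⊆ insert x (G.neighborSet x))) :
    ¬ ({v : V | ∀ u ∈ L, G.Adj u v} ⊆ G.neighborSet x) ∧
    ¬ ({v : V | ∀ u ∈ L, G.Adj u v} ⊆ insert x (G.neighborSet x)) := by
  have hxL : x ∉ L := fun hx => hnot fun y hy => by
    by_cases hyx : y = x
    · exact Or.inl hyx
    · exact Or.inr (hL.isClique hx hy (Ne.symm hyx))
  have hxN : ¬ ∀ u ∈ L, G.Adj u x := fun h => hnot fun y hy => Or.inr (h y hy).symm
  have hdel := hG.2.2 L hL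
  obtain ⟨m, hm⟩ : ∃ m : ℕ, (G.induce ((↑L : Set V)ᶜ)).chromaticNumber = m := by
    refine (ENat.ne_top_iff_exists.mp fun htop => ?_).imp fun _ => Eq.symm
    rw [htop, hk, top_add] at hdel
    exact ENat.top_ne_natCast k hdel
  obtain ⟨C⟩ := chromaticNumber_le_iff_colorable.mp hm.le
  obtain ⟨v, hvx, hvL⟩ := exists_commonNeighbor_same_color G L m
    (by rw [← hdel, hm, hL.card_eq]; push_cast; exact le_rfl) C ⟨x, by simpa using hxL⟩
  have hnadj : ¬ G.Adj x v := fun h => C.valid (by simpa using h.symm) hvx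
  refine ⟨fun h => hnadj (h hvL), fun h => ?_⟩
  rcases h hvL with hv | hv
  · exact hxN (hv ▸ hvL)
  · exact hnadj hv
end

section
/- Let ℓ ≥ 2 and let G be a K_ℓ-critical graph with χ(G) = k that is not isomorphic to K_k. Then every vertex of G that lies on a copy of K_ℓ has degree at least k + 2ℓ − 3. -/
open SimpleGraph

/-- In a vertex-critical graph with chromatic number `k`, a `k`-clique is the whole graph. -/
lemma iso_of_clique {V : Type*} {G : SimpleGraph V} {k : ℕ}
    (hv : ∀ v : V, (G.induce ({v}ᶜ : Set V)).chromaticNumber + 1 = G.chromaticNumber)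
    (hk : G.chromaticNumber = (k : ℕ∞)) (Q : Finset V) (hQ : G.IsNClique k Q) :
    Nonempty (G ≃g completeGraph (Fin k)) := by
  classical
  have hall : ∀ v, v ∈ Q := by
    intro v
    by_contra hvQ
    have h1 := hv v
    rw [hk] at h1
    -- `Q` survives in `G - v`, which therefore still needs `k` colours.
    have h2 : (k : ℕ∞) ≤ (G.induce ({v}ᶜ : Set V)).chromaticNumber := by
      have hcl : (G.induce ({v}ᶜ : Set V)).IsClique
          (↑(Q.subtype (fun u => u ∈ ({v}ᶜ : Set V))) : Set _) := by
        intro a ha b hb hab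
        simp only [Finset.mem_coe, Finset.mem_subtype] at ha hb
        exact hQ.isClique ha hb (fun h => hab (Subtype.ext h))
      have hc := hcl.card_le_chromaticNumber
      have hcard : (Q.subtype (fun u => u ∈ ({v}ᶜ : Set V))).card = k := by
        rw [Finset.card_subtype, Finset.filter_true_of_mem, hQ.card_eq]
        intro u hu
        simp only [Set.mem_compl_iff, Set.mem_singleton_iff]
        rintro rfl
        exact hvQ hu
      rwa [hcard] at hc
    generalize (G.induce ({v}ᶜ : Set V)).chromaticNumber = c at h1 h2
    have hc : c ≠ ⊤ := by
      rintro rfl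
      simp at h1
    lift c to ℕ using hc
    norm_cast at h1 h2
    omega
  have e : V ≃ Fin k :=
    (Equiv.subtypeUnivEquiv hall).symm.trans (Q.equivFinOfCardEq hQ.card_eq)
  refine ⟨⟨e, ?_⟩⟩
  intro a b
  simp only [completeGraph, top_adj, ne_eq, EmbeddingLike.apply_eq_iff_eq]
  exact ⟨fun h => hQ.isClique (hall a) (hall b) h, fun h => h.ne⟩

/-- For an `ℓ`-clique `L` there are a `(k - ℓ)`-colouring `f` of `G - L` (with arbitrary values
on `L`) and, for each colour `i`, a vertex `w i` of colour `i` adjacent to all of `L`. -/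
lemma exists_dominators {V : Type*} [Nonempty V] {G : SimpleGraph V} {ℓ k : ℕ}
    (hG : IsKCritical G ℓ) (hk : G.chromaticNumber = (k : ℕ∞))
    (L : Finset V) (hL : G.IsNClique ℓ L) :
    ℓ ≤ k ∧ ∃ (f : V → ℕ) (w : ℕ → V),
      (∀ u v, u ∉ L → v ∉ L → G.Adj u v → f u ≠ f v) ∧ (∀ v, v ∉ L → f v < k - ℓ) ∧
      ∀ i < k - ℓ, w i ∉ L ∧ f (w i) = i ∧ ∀ y ∈ L, G.Adj y (w i) := by
  classical
  have h1 := hG.2.2 L hL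
  rw [hk] at h1
  obtain ⟨hle, hcol⟩ : ℓ ≤ k ∧ (G.induce ((↑L : Set V)ᶜ)).Colorable (k - ℓ) := by
    rw [← chromaticNumber_le_iff_colorable]
    generalize (G.induce ((↑L : Set V)ᶜ)).chromaticNumber = c at h1
    have hc : c ≠ ⊤ := by
      rintro rfl
      simp at h1
    lift c to ℕ using hc
    norm_cast at h1 ⊢
    omega
  refine ⟨hle, ?_⟩
  obtain ⟨C⟩ := hcol
  let f : V → ℕ := fun v => if h : v ∈ ((↑L : Set V)ᶜ) then (C ⟨v, h⟩ : ℕ) else 0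
  have hf : ∀ v (h : v ∉ L), f v = (C ⟨v, by simpa using h⟩ : ℕ) := by
    intro v h
    simp [f, h]
  have hproper : ∀ u v, u ∉ L → v ∉ L → G.Adj u v → f u ≠ f v := by
    intro u v hu hv huv h
    rw [hf u hu, hf v hv] at h
    exact C.valid (v := ⟨u, by simpa using hu⟩) (w := ⟨v, by simpa using hv⟩) huv (Fin.ext h)
  have hlt : ∀ v, v ∉ L → f v < k - ℓ := by
    intro v hv
    rw [hf v hv]
    exact (C _).2
  have hdom : ∀ i, ∃ w, i < k - ℓ → w ∉ L ∧ f w = i ∧ ∀ y ∈ L, G.Adj y w := by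
    intro i
    by_cases hi : i < k - ℓ
    swap
    · exact ⟨Classical.arbitrary V, fun h => absurd h hi⟩
    by_contra! hno
    have hnonadj : ∀ v, v ∉ L → f v = i → ∃ y ∈ L, ¬ G.Adj y v := fun v h1 h2 => (hno v).2 h1 h2
    choose g hgL hg using hnonadj
    -- Without a dominator, the vertices of colour `i` take over the colours of `L`,
    -- which leaves `ℓ + (k - ℓ - 1)` colours in use.
    let D : V → {y // y ∈ L} ⊕ {j : Fin (k - ℓ) // j ≠ ⟨i, hi⟩} := fun v =>
      if h : v ∈ L then Sum.inl ⟨v, h⟩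
      else if h' : f v = i then Sum.inl ⟨g v h h', hgL v h h'⟩
      else Sum.inr ⟨⟨f v, hlt v h⟩, fun e => h' (congrArg Fin.val e)⟩
    have hD : ∀ {u v}, G.Adj u v → D u ≠ D v := by
      intro u v huv h
      by_cases hu : u ∈ L <;> by_cases hv : v ∈ L
      · simp [D, hu, hv] at h
        exact huv.ne h
      · by_cases hv' : f v = i
        · simp [D, hu, hv, hv'] at h
          exact hg v hv hv' (h ▸ huv)
        · simp [D, hu, hv, hv'] at h
      · by_cases hu' : f u = i
        · simp [D, hu, hv, hu'] at h
          exact hg u hu hu' (h ▸ huv.symm)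
        · simp [D, hu, hv, hu'] at h
      · have hne := hproper u v hu hv huv
        by_cases hu' : f u = i <;> by_cases hv' : f v = i
        · exact hne (hu'.trans hv'.symm)
        · simp [D, hu, hv, hu', hv'] at h
        · simp [D, hu, hv, hu', hv'] at h
        · simp [D, hu, hv, hu', hv'] at h
          exact hne h
    have hcol := (Coloring.mk D hD).colorable
    rw [← chromaticNumber_le_iff_colorable, hk] at hcol
    simp only [Fintype.card_sum, Fintype.card_coe, hL.card_eq, Fintype.card_subtype_compl,
      Fintype.card_fin, ne_eq, Fintype.card_subtype_eq] at hcol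
    norm_cast at hcol
    omega
  choose w hw using hdom
  exact ⟨f, w, hproper, hlt, hw⟩

/-- The neighbours of `x` outside `A` that have a non-neighbour in `A`. -/
noncomputable def missing {V : Type*} [Fintype V] (G : SimpleGraph V) (x : V) (A : Finset V) :
    Finset V := by
  classical
  exact {z | G.Adj x z ∧ z ∉ A ∧ ∃ y ∈ A, ¬ G.Adj y z}

lemma mem_missing {V : Type*} [Fintype V] {G : SimpleGraph V} {x z : V} {A : Finset V} :
    z ∈ missing G x A ↔ G.Adj x z ∧ z ∉ A ∧ ∃ y ∈ A, ¬ G.Adj y z := by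
  simp [missing]

/-- If `A ∪ {x}` lies in an `ℓ`-clique and `|A| + 1 < ℓ`, some vertex `r` can be added to `A`
so that `A ∪ {r, x}` still lies in an `ℓ`-clique and `missing` gains at least two vertices. -/
lemma exists_step {V : Type*} [Fintype V] [DecidableEq V] {G : SimpleGraph V} {ℓ k : ℕ}
    (hG : IsKCritical G ℓ) (hk : G.chromaticNumber = (k : ℕ∞))
    (hnc : IsEmpty (G ≃g completeGraph (Fin k))) (x : V) (A L : Finset V)
    (hL : G.IsNClique ℓ L) (hxL : x ∈ L) (hxA : x ∉ A) (hAL : A ⊆ L) (hA : A.card + 1 < ℓ) :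
    ∃ r L', G.IsNClique ℓ L' ∧ x ∈ L' ∧ x ≠ r ∧ r ∉ A ∧ insert r A ⊆ L' ∧
      (missing G x A).card + 2 ≤ (missing G x (insert r A)).card := by
  have : Nonempty V := ⟨x⟩
  by_contra! hno
  have hadm : ∀ b r Lb Lr, G.IsNClique ℓ Lb → G.IsNClique ℓ Lr → x ∈ Lb → x ∈ Lr →
      insert b A ⊆ Lb → insert r A ⊆ Lr → x ≠ b → x ≠ r → b ∉ A → r ∉ A → b ≠ r →
      G.Adj b r := by
    intro b r Lb Lr hLb hLr hxb hxr hbL hrL hxneb hxner hbA hrA hbr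
    by_contra hadj
    refine absurd (hno r Lr hLr hxr hxner hrA hrL) (not_lt.2 ?_)
    obtain ⟨-, f, w, hf, hlt, hw⟩ := exists_dominators hG hk Lb hLb
    have hbLb : b ∈ Lb := hbL (Finset.mem_insert_self _ _)
    have hrLr : r ∈ Lr := hrL (Finset.mem_insert_self _ _)
    have hALb : A ⊆ Lb := (Finset.subset_insert _ _).trans hbL
    have hALr : A ⊆ Lr := (Finset.subset_insert _ _).trans hrL
    have hrLb : r ∉ Lb := fun h => hadj (hLb.isClique hbLb h hbr)
    obtain ⟨hwL, hwf, hwadj⟩ := hw (f r) (hlt r hrLb)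
    set u := w (f r)
    have hur : u ≠ r := fun h => hadj (h ▸ hwadj b hbLb)
    have hnadj : ¬ G.Adj r u := fun h => hf r u hrLb hwL h hwf.symm
    have hbu : b ≠ u := (hwadj b hbLb).ne
    have huA : u ∉ A := fun h => hwL (hALb h)
    have hAb : ∀ y ∈ A, G.Adj y b := fun y hy =>
      hLb.isClique (hALb hy) hbLb (fun h => hbA (h ▸ hy))
    have hAr : ∀ y ∈ A, G.Adj y r := fun y hy =>
      hLr.isClique (hALr hy) hrLr (fun h => hrA (h ▸ hy))
    have hAu : ∀ y ∈ A, G.Adj y u := fun y hy => hwadj y (hALb hy)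
    have hbZ : b ∉ insert u (missing G x A) := by
      rw [Finset.mem_insert, mem_missing]
      rintro (h | ⟨-, -, y, hy, h⟩)
      · exact hbu h
      · exact h (hAb y hy)
    have huZ : u ∉ missing G x A := by
      rw [mem_missing]
      rintro ⟨-, -, y, hy, h⟩
      exact h (hAu y hy)
    have hsub : insert b (insert u (missing G x A)) ⊆ missing G x (insert r A) := by
      intro z hz
      simp only [Finset.mem_insert] at hz
      rw [mem_missing]
      rcases hz with rfl | rfl | hz
      · refine ⟨hLb.isClique hxb hbLb hxneb, by simp [hbr, hbA], r, by simp, ?_⟩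
        exact fun h => hadj h.symm
      · exact ⟨hwadj x hxb, by simp [hur, huA], r, by simp, hnadj⟩
      · rw [mem_missing] at hz
        obtain ⟨h1, h2, y, hy, h3⟩ := hz
        refine ⟨h1, ?_, y, Finset.mem_insert_of_mem hy, h3⟩
        simp only [Finset.mem_insert, not_or]
        exact ⟨fun h => h3 (h ▸ hAr y hy), h2⟩
    have := Finset.card_le_card hsub
    rwa [Finset.card_insert_of_notMem hbZ, Finset.card_insert_of_notMem huZ] at this
  obtain ⟨hle, f, w, hf, hlt, hw⟩ := exists_dominators hG hk L hL
  -- A vertex of `L` outside `A ∪ {x}` can be exchanged for any dominator of `L`.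
  obtain ⟨y, hyL, hy⟩ : ∃ y ∈ L, y ∉ insert x A := by
    apply Finset.exists_mem_notMem_of_card_lt_card
    rw [Finset.card_insert_of_notMem hxA, hL.card_eq]
    exact hA
  simp only [Finset.mem_insert, not_or] at hy
  have hswap : ∀ i < k - ℓ, G.IsNClique ℓ (insert (w i) (L.erase y)) := by
    intro i hi
    obtain ⟨h1, h2, h3⟩ := hw i hi
    refine ⟨?_, ?_⟩
    · rw [Finset.coe_insert, isClique_insert]
      refine ⟨hL.isClique.subset (by simp), ?_⟩
      intro z hz _
      exact (h3 z (Finset.mem_of_mem_erase hz)).symm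
    · rw [Finset.card_insert_of_notMem (fun h => h1 (Finset.mem_of_mem_erase h)),
        Finset.card_erase_add_one hyL, hL.card_eq]
  have hww : ∀ i < k - ℓ, ∀ j < k - ℓ, w i ≠ w j → G.Adj (w i) (w j) := by
    intro i hi j hj hij
    have hx' : ∀ i, x ∈ insert (w i) (L.erase y) := fun i => by
      simp [hxL, Ne.symm hy.1]
    have hA' : ∀ i, insert (w i) A ⊆ insert (w i) (L.erase y) := fun i =>
      Finset.insert_subset_insert _ (Finset.subset_erase.2 ⟨hAL, hy.2⟩)
    exact hadm _ _ _ _ (hswap i hi) (hswap j hj) (hx' i) (hx' j) (hA' i) (hA' j)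
      (fun h => (hw i hi).1 (h ▸ hxL)) (fun h => (hw j hj).1 (h ▸ hxL))
      (fun h => (hw i hi).1 (hAL h)) (fun h => (hw j hj).1 (hAL h)) hij
  have hcl : G.IsNClique k (L ∪ (Finset.range (k - ℓ)).image w) := by
    refine ⟨?_, ?_⟩
    · intro a ha b hb hab
      simp only [Finset.coe_union, Finset.coe_image, Set.mem_union, Finset.mem_coe,
        Set.mem_image, Finset.mem_range] at ha hb
      rcases ha with ha | ⟨i, hi, rfl⟩ <;> rcases hb with hb | ⟨j, hj, rfl⟩
      · exact hL.isClique ha hb hab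
      · exact (hw j hj).2.2 a ha
      · exact ((hw i hi).2.2 b hb).symm
      · exact hww i hi j hj hab
    · rw [Finset.card_union_of_disjoint, Finset.card_image_of_injOn, Finset.card_range, hL.card_eq]
      · omega
      · intro i hi j hj h
        rw [← (hw i (by simpa using hi)).2.1, ← (hw j (by simpa using hj)).2.1]
        exact congrArg f h
      · rw [Finset.disjoint_right]
        intro a ha
        obtain ⟨i, hi, rfl⟩ := Finset.mem_image.1 ha
        exact (hw i (by simpa using hi)).1
  obtain ⟨e⟩ := iso_of_clique hG.2.1 hk _ hcl
  exact hnc.elim e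

lemma exists_growing {V : Type*} [Fintype V] {G : SimpleGraph V} {ℓ k : ℕ}
    (hG : IsKCritical G ℓ) (hk : G.chromaticNumber = (k : ℕ∞))
    (hnc : IsEmpty (G ≃g completeGraph (Fin k))) (x : V)
    (hx : ∃ s : Finset V, G.IsNClique ℓ s ∧ x ∈ s) (a : ℕ) (ha : a + 1 ≤ ℓ) :
    ∃ A L : Finset V, G.IsNClique ℓ L ∧ x ∈ L ∧ x ∉ A ∧ A ⊆ L ∧ A.card = a ∧
      2 * a ≤ (missing G x A).card := by
  classical
  induction a with
  | zero =>
    obtain ⟨s, hs, hxs⟩ := hx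
    exact ⟨∅, s, hs, hxs, by simp, by simp, by simp, by simp⟩
  | succ a ih =>
    obtain ⟨A, L, hL, hxL, hxA, hAL, hA, hZ⟩ := ih (by omega)
    obtain ⟨r, L', hL', hxL', hxr, hrA, hsub, hZ'⟩ :=
      exists_step hG hk hnc x A L hL hxL hxA hAL (by omega)
    refine ⟨insert r A, L', hL', hxL', by simp [hxr, hxA], hsub, ?_, by omega⟩
    rw [Finset.card_insert_of_notMem hrA, hA]

theorem stmt11 {V : Type*} [Fintype V] (ℓ k : ℕ) (hℓ : 2 ≤ ℓ)
    (G : SimpleGraph V) [DecidableRel G.Adj] (hG : IsKCritical G ℓ)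
    (hk : G.chromaticNumber = (k : ℕ∞))
    (hnc : IsEmpty (G ≃g completeGraph (Fin k)))
    (x : V) (hx : ∃ s : Finset V, G.IsNClique ℓ s ∧ x ∈ s) :
    k + 2 * ℓ - 3 ≤ G.degree x := by
  classical
  have : Nonempty V := ⟨x⟩
  obtain ⟨A, L, hL, hxL, hxA, hAL, hA, hZ⟩ :=
    exists_growing hG hk hnc x hx (ℓ - 1) (by omega)
  -- `A`, `missing G x A` and the dominators of `L` are disjoint subsets of the neighbourhood of `x`.
  obtain ⟨hle, f, w, -, -, hw⟩ := exists_dominators hG hk L hL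
  have hsub : (A ∪ missing G x A) ∪ (Finset.range (k - ℓ)).image w ⊆ G.neighborFinset x := by
    intro z hz
    rw [mem_neighborFinset]
    simp only [Finset.mem_union, Finset.mem_image, Finset.mem_range] at hz
    rcases hz with (hz | hz) | ⟨i, hi, rfl⟩
    · exact hL.isClique hxL (hAL hz) (fun h => hxA (h ▸ hz))
    · exact (mem_missing.1 hz).1
    · exact (hw i hi).2.2 x hxL
  have hcard := Finset.card_le_card hsub
  rw [card_neighborFinset_eq_degree, Finset.card_union_of_disjoint,
    Finset.card_union_of_disjoint, Finset.card_image_of_injOn, Finset.card_range, hA] at hcard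
  · omega
  · intro i hi j hj h
    rw [← (hw i (by simpa using hi)).2.1, ← (hw j (by simpa using hj)).2.1]
    exact congrArg f h
  · rw [Finset.disjoint_left]
    intro z hz hz'
    exact (mem_missing.1 hz').2.1 hz
  · rw [Finset.disjoint_right]
    intro z hz hz'
    obtain ⟨i, hi, rfl⟩ := Finset.mem_image.1 hz
    obtain ⟨h1, -, h3⟩ := hw i (by simpa using hi)
    rcases Finset.mem_union.1 hz' with h | h
    · exact h1 (hAL h)
    · obtain ⟨-, -, y, hy, hn⟩ := mem_missing.1 h
      exact hn (h3 y (hAL hy))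
end
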